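/- Let μ be a dominant integral weight of 𝔤. Then V_μ is symplectic if and only if dim((adj(𝔤) ⊗ S²V_μ)^𝔤) > dim((adj(𝔤) ⊗ Λ²V_μ)^𝔤). -/

import Mathlib

open scoped TensorProduct Classical
open LieAlgebra LieModule Module

namespace AdjPaper

variable {L : Type} [LieRing L] [LieAlgebra ℂ L]

/-- `χ` is a root of `L` relative to the Cartan subalgebra `H`: a nonzero linear functional
on `H` with nontrivial root space. -/
def IsRoot (H : LieSubalgebra ℂ L) [H.IsCartanSubalgebra] (χ : Module.Dual ℂ H) : Prop :=
  χ ≠ 0 ∧ rootSpace H ⇑χ ≠ ⊥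

/-- `t` is the coroot `χ∨` of the root `χ`: it lies in `⁅𝔤_χ, 𝔤_{-χ}⁆` and satisfies
`χ t = 2`. -/
def IsCoroot (H : LieSubalgebra ℂ L) [H.IsCartanSubalgebra] (χ : Module.Dual ℂ H) (t : H) : Prop :=
  χ t = 2 ∧ ∃ e ∈ rootSpace H ⇑χ, ∃ f ∈ rootSpace H ⇑(-χ), (t : L) = ⁅e, f⁆

/-- `α` enumerates the simple roots of a base of the root system of `(L, H)`. -/
structure IsBase (H : LieSubalgebra ℂ L) [H.IsCartanSubalgebra] {r : ℕ} (α : Fin r → Module.Dual ℂ H) : Prop where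
  isRoot : ∀ j, IsRoot H (α j)
  indep : LinearIndependent ℂ α
  pos_neg : ∀ χ : Module.Dual ℂ H, IsRoot H χ →
    (∃ c : Fin r → ℕ, χ = ∑ j, (c j : ℂ) • α j) ∨ (∃ c : Fin r → ℕ, χ = -∑ j, (c j : ℂ) • α j)

/-- `χ` is a positive root relative to the base `α`. -/
def IsPosRoot (H : LieSubalgebra ℂ L) [H.IsCartanSubalgebra] {r : ℕ} (α : Fin r → Module.Dual ℂ H)
    (χ : Module.Dual ℂ H) : Prop :=
  IsRoot H χ ∧ ∃ c : Fin r → ℕ, χ = ∑ j, (c j : ℂ) • α j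

/-- A weight `μ` is dominant integral: all its pairings `⟨μ, α_j∨⟩ = μ (hc j)` with the
simple coroots `hc j` are non-negative integers. -/
def IsDomInt {H : LieSubalgebra ℂ L} {r : ℕ} (hc : Fin r → H) (μ : Module.Dual ℂ H) : Prop :=
  ∀ j, ∃ n : ℕ, μ (hc j) = (n : ℂ)

/-- `V` is an irreducible `L`-module with highest weight `μ` (relative to the Cartan
subalgebra `H` and the base `α`): it is irreducible and possesses a nonzero vector of
`H`-weight `μ` annihilated by all positive root spaces. -/
def IsHWIrrep (H : LieSubalgebra ℂ L) [H.IsCartanSubalgebra] {r : ℕ} (α : Fin r → Module.Dual ℂ H)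
    (μ : Module.Dual ℂ H) (V : Type) [AddCommGroup V] [Module ℂ V]
    [LieRingModule L V] [LieModule ℂ L V] : Prop :=
  IsSimpleOrder (LieSubmodule ℂ L V) ∧
  ∃ v : V, v ≠ 0 ∧ (∀ x : H, ⁅(x : L), v⁆ = μ x • v) ∧
    ∀ χ : Module.Dual ℂ H, IsPosRoot H α χ → ∀ e ∈ rootSpace H ⇑χ, ⁅e, v⁆ = 0

/-- `W` is isomorphic to the dual representation `V*`: there is a nondegenerate
`𝔤`-invariant pairing `W × V → ℂ`. -/
def IsDualPair (W V : Type) [AddCommGroup W] [Module ℂ W] [LieRingModule L W]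
    [AddCommGroup V] [Module ℂ V] [LieRingModule L V] : Prop :=
  ∃ B : W →ₗ[ℂ] V →ₗ[ℂ] ℂ,
    (∀ w, (∀ v, B w v = 0) → w = 0) ∧ (∀ v, (∀ w, B w v = 0) → v = 0) ∧
    ∀ (x : L) (w : W) (v : V), B ⁅x, w⁆ v + B w ⁅x, v⁆ = 0

/-- `V` is an orthogonal representation: it has a nondegenerate invariant symmetric
bilinear form. -/
def IsOrthogonalRep (V : Type) [AddCommGroup V] [Module ℂ V] [LieRingModule L V] : Prop :=
  ∃ B : V →ₗ[ℂ] V →ₗ[ℂ] ℂ,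
    (∀ v w, B v w = B w v) ∧ (∀ v, (∀ w, B v w = 0) → v = 0) ∧
    ∀ (x : L) (v w : V), B ⁅x, v⁆ w + B v ⁅x, w⁆ = 0

/-- `V` is a symplectic representation: it has a nondegenerate invariant alternating
bilinear form. -/
def IsSymplecticRep (V : Type) [AddCommGroup V] [Module ℂ V] [LieRingModule L V] : Prop :=
  ∃ B : V →ₗ[ℂ] V →ₗ[ℂ] ℂ,
    (∀ v, B v v = 0) ∧ (∀ v, (∀ w, B v w = 0) → v = 0) ∧
    ∀ (x : L) (v w : V), B ⁅x, v⁆ w + B v ⁅x, w⁆ = 0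

variable (L) in
/-- The operator on `adj(𝔤) ⊗ V ⊗ V` exchanging the two copies of `V`. -/
noncomputable def swapMap (V : Type) [AddCommGroup V] [Module ℂ V] :
    (L ⊗[ℂ] (V ⊗[ℂ] V)) →ₗ[ℂ] (L ⊗[ℂ] (V ⊗[ℂ] V)) :=
  LinearMap.lTensor L (TensorProduct.comm ℂ V V).toLinearMap

variable (L) in
/-- The `𝔤`-invariant subspace of `adj(𝔤) ⊗ S²V`, realised inside `adj(𝔤) ⊗ V ⊗ V` as the
invariant vectors fixed by the swap of the two copies of `V`. -/
noncomputable def symSquareInvariants (V : Type) [AddCommGroup V] [Module ℂ V]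
    [LieRingModule L V] [LieModule ℂ L V] : Submodule ℂ (L ⊗[ℂ] (V ⊗[ℂ] V)) :=
  (maxTrivSubmodule ℂ L (L ⊗[ℂ] (V ⊗[ℂ] V)) : Submodule ℂ (L ⊗[ℂ] (V ⊗[ℂ] V))) ⊓
    LinearMap.ker (swapMap L V - LinearMap.id)

variable (L) in
/-- The `𝔤`-invariant subspace of `adj(𝔤) ⊗ Λ²V`, realised inside `adj(𝔤) ⊗ V ⊗ V` as the
invariant vectors anti-fixed by the swap of the two copies of `V`. -/
noncomputable def altSquareInvariants (V : Type) [AddCommGroup V] [Module ℂ V]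
    [LieRingModule L V] [LieModule ℂ L V] : Submodule ℂ (L ⊗[ℂ] (V ⊗[ℂ] V)) :=
  (maxTrivSubmodule ℂ L (L ⊗[ℂ] (V ⊗[ℂ] V)) : Submodule ℂ (L ⊗[ℂ] (V ⊗[ℂ] V))) ⊓
    LinearMap.ker (swapMap L V + LinearMap.id)

/-!
Let `v` be a highest weight vector of the irreducible representation `V`, of weight `μ`. An
equivariant bilinear map `T : V × V → Y` is determined by its value at (lowest weight vector, `v`).
For `Y = 𝔤` and `V` self-dual this value lies in `𝔥`. Since `V` is presented over the negative
part of `𝔤` by the relations `f_i ^ (k_i + 1) v = 0` with `k_i = ⟨μ, α_i∨⟩`, Frobenius reciprocity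
shows that the possible values are exactly the `h ∈ 𝔥` with `α_i(h) = 0` whenever `k_i = 0`. The
equivariant maps `T` are thus coordinatised by the simple roots not orthogonal to `μ`.

A representative of the longest Weyl group element `w₀`, taken in the principal `SL₂`, exchanges
the lowest weight vector with `v` up to the sign `s = (-1) ^ ⟨μ, 2ρ∨⟩`, and `s = -1` exactly when
`V` is symplectic. In the coordinates above, exchanging the arguments of `T` is therefore `-s` times
the permutation `α ↦ -w₀ α`, so its trace, the difference of the numbers of symmetric and
alternating maps, is `-s` times the number of fixed points. This is positive only if `V` is
symplectic. Conversely, without fixed points the factors of `(-1) ^ ⟨μ, 2ρ∨⟩` cancel in pairs and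
`s = 1`. If `V` is not self-dual there are no nonzero invariant forms and no nonzero `T`.
Contraction translates the statement about bilinear maps on the dual of `V` into the one about
`𝔤 ⊗ V ⊗ V`.
-/

section Exponential

variable {K X Y Z : Type*} [Field K] [CharZero K] [AddCommGroup X] [Module K X]
  [AddCommGroup Y] [Module K Y] [AddCommGroup Z] [Module K Z]

/-- The exponential of a nilpotent endomorphism over a field of characteristic zero, where
Mathlib's `IsNilpotent.exp` asks for a `ℚ`-module structure as additional data. -/
noncomputable def nilExp (a : Module.End K X) : Module.End K X :=
  letI : Module ℚ X := Module.compHom X (algebraMap ℚ K)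
  IsNilpotent.exp a

theorem nilExp_injective {a : Module.End K X} (ha : IsNilpotent a) :
    Function.Injective (nilExp a) :=
  let _ : Module ℚ X := Module.compHom X (algebraMap ℚ K)
  ((Module.End.isUnit_iff _).1 (IsNilpotent.isUnit_exp ha)).1

theorem nilExp_zero : nilExp (0 : Module.End K X) = 1 :=
  let _ : Module ℚ X := Module.compHom X (algebraMap ℚ K)
  IsNilpotent.exp_zero

theorem nilExp_apply_eq_sum {a : Module.End K X} (ha : IsNilpotent a) {x : X} {k : ℕ}
    (hx : (a ^ k) x = 0) :
    nilExp a x = ∑ i ∈ Finset.range k, (i.factorial : K)⁻¹ • (a ^ i) x := by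
  let _ : Module ℚ X := Module.compHom X (algebraMap ℚ K)
  refine (IsNilpotent.exp_smul_eq_sum (A := Module.End K X) (m := x) hx ha).trans
    (Finset.sum_congr rfl fun i _ => ?_)
  change algebraMap ℚ K ((i.factorial : ℚ)⁻¹) • (a ^ i) x = _
  simp

/-- `exp (a ⊗ 1 + 1 ⊗ b) = exp a ⊗ exp b`, transported along `X ⊗ Y → Z`. -/
theorem nilExp_apply_bilin {a : Module.End K X} {b : Module.End K Y} {c : Module.End K Z}
    (ha : IsNilpotent a) (hb : IsNilpotent b) (hc : IsNilpotent c) (T : X →ₗ[K] Y →ₗ[K] Z)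
    (h : ∀ x y, c (T x y) = T (a x) y + T x (b y)) (x : X) (y : Y) :
    nilExp c (T x y) = T (nilExp a x) (nilExp b y) := by
  let _ : Module ℚ X := Module.compHom X (algebraMap ℚ K)
  let _ : Module ℚ Y := Module.compHom Y (algebraMap ℚ K)
  let _ : Module ℚ Z := Module.compHom Z (algebraMap ℚ K)
  have hcomm : Commute (a.rTensor Y) (b.lTensor X) := TensorProduct.ext' fun x y => by simp
  have haY : IsNilpotent (a.rTensor Y) := ha.map (Module.End.rTensorAlgHom K X Y)
  have hbX : IsNilpotent (b.lTensor X) := hb.map (Module.End.lTensorAlgHom K Y X)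
  have key : IsNilpotent.exp c ∘ₗ TensorProduct.lift T =
      TensorProduct.lift T ∘ₗ IsNilpotent.exp (a.rTensor Y + b.lTensor X) :=
    Module.End.commute_exp_left_of_commute (hcomm.isNilpotent_add haY hbX) hc
      (TensorProduct.ext' fun x y => by simp [h])
  have expa : IsNilpotent.exp (a.rTensor Y) = (IsNilpotent.exp a).rTensor Y :=
    (ha.map_exp (Module.End.rTensorAlgHom K X Y)).symm
  have expb : IsNilpotent.exp (b.lTensor X) = (IsNilpotent.exp b).lTensor X :=
    (hb.map_exp (Module.End.lTensorAlgHom K Y X)).symm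
  rw [IsNilpotent.exp_add_of_commute hcomm haY hbX, expa, expb] at key
  simpa [nilExp] using LinearMap.congr_fun key (x ⊗ₜ y)

/-- The powers `a ^ k` are eigenvectors of `ad h` for the distinct eigenvalues `k * c`, so only
finitely many of them are nonzero. -/
theorem isNilpotent_of_mul_sub_mul_eq_smul [FiniteDimensional K X] {h a : Module.End K X} {c : K}
    (hc : c ≠ 0) (hha : h * a - a * h = c • a) : IsNilpotent a := by
  let A : Module.End K (Module.End K X) := LinearMap.mulLeft K h - LinearMap.mulRight K h
  have hA (k : ℕ) : A (a ^ k) = ((k : K) * c) • a ^ k := by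
    induction k with
    | zero => simp [A]
    | succ k ih =>
      have leibniz : A (a ^ (k + 1)) = A (a ^ k) * a + a ^ k * A a := by
        simp only [A, LinearMap.sub_apply, LinearMap.mulLeft_apply, LinearMap.mulRight_apply,
          pow_succ]
        noncomm_ring
      have hAa : A a = c • a := hha
      rw [leibniz, ih, hAa, smul_mul_assoc, mul_smul_comm, ← pow_succ, ← add_smul]
      push_cast
      ring_nf
  by_contra hnil
  have hli := Module.End.eigenvectors_linearIndependent' A (fun k : ℕ => (k : K) * c)
    (fun k l hkl => Nat.cast_injective (mul_right_cancel₀ hc hkl)) (fun k => a ^ k) fun k =>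
      Module.End.hasEigenvector_iff.2
        ⟨Module.End.mem_eigenspace_iff.2 (hA k), fun hk => hnil ⟨k, hk⟩⟩
  have := hli.finite
  exact not_finite ℕ

end Exponential

section WeylOperator

variable {K 𝔤 X Y Z : Type*} [Field K] [LieRing 𝔤] [LieAlgebra K 𝔤]
  [AddCommGroup X] [Module K X] [LieRingModule 𝔤 X] [LieModule K 𝔤 X]
  [AddCommGroup Y] [Module K Y] [LieRingModule 𝔤 Y] [LieModule K 𝔤 Y]
  [AddCommGroup Z] [Module K Z] [LieRingModule 𝔤 Z] [LieModule K 𝔤 Z]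
  {h e f : 𝔤}

/-- The bilinear map `T` commutes with the action of `𝔤`, i.e. it is a homomorphism of
representations `X ⊗ Y → Z`. -/
def IsEquivariant (𝔤 : Type*) {K X Y Z : Type*} [Field K] [LieRing 𝔤]
    [AddCommGroup X] [Module K X] [LieRingModule 𝔤 X]
    [AddCommGroup Y] [Module K Y] [LieRingModule 𝔤 Y]
    [AddCommGroup Z] [Module K Z] [LieRingModule 𝔤 Z] (T : X →ₗ[K] Y →ₗ[K] Z) : Prop :=
  ∀ (g : 𝔤) (x : X) (y : Y), ⁅g, T x y⁆ = T ⁅g, x⁆ y + T x ⁅g, y⁆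

variable (K) in
/-- The relations of an `𝔰𝔩₂`-triple. Unlike `IsSl2Triple`, this allows the zero triple, which is
the principal one of the zero Lie algebra. -/
structure SatisfiesSl2 (h e f : 𝔤) : Prop where
  lie_e_f : ⁅e, f⁆ = h
  lie_h_e : ⁅h, e⁆ = (2 : K) • e
  lie_h_f : ⁅h, f⁆ = -((2 : K) • f)

theorem SatisfiesSl2.symm (t : SatisfiesSl2 K h e f) : SatisfiesSl2 K (-h) f e where
  lie_e_f := by rw [← lie_skew, t.lie_e_f]
  lie_h_e := by rw [neg_lie, t.lie_h_f, neg_neg]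
  lie_h_f := by rw [neg_lie, t.lie_h_e]

theorem SatisfiesSl2.isSl2Triple (t : SatisfiesSl2 K h e f) (hh : h ≠ 0) :
    IsSl2Triple h e f where
  h_ne_zero := hh
  lie_e_f := t.lie_e_f
  lie_h_e_nsmul := by rw [t.lie_h_e, two_smul, two_nsmul]
  lie_h_f_nsmul := by rw [t.lie_h_f, two_smul, two_nsmul]

variable [CharZero K]

variable (K X) in
/-- The action on `X` of the element `exp(e) exp(-f) exp(e)` of the adjoint group, which
represents the nontrivial Weyl group element of the `𝔰𝔩₂`-triple `(h, e, f)`. -/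
noncomputable def weylOp (e f : 𝔤) : Module.End K X :=
  nilExp (toEnd K 𝔤 X e) * nilExp (-toEnd K 𝔤 X f) * nilExp (toEnd K 𝔤 X e)

variable (K X) in
theorem isNilpotent_toEnd_e (t : SatisfiesSl2 K h e f) [FiniteDimensional K X] :
    IsNilpotent (toEnd K 𝔤 X e) := by
  refine isNilpotent_of_mul_sub_mul_eq_smul (h := toEnd K 𝔤 X h) (two_ne_zero' K) ?_
  ext x
  simp [← lie_lie, t.lie_h_e]

variable (K X) in
theorem isNilpotent_toEnd_f (t : SatisfiesSl2 K h e f) [FiniteDimensional K X] :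
    IsNilpotent (toEnd K 𝔤 X f) :=
  isNilpotent_toEnd_e K X t.symm

variable (K X) in
theorem weylOp_injective (t : SatisfiesSl2 K h e f) [FiniteDimensional K X] :
    Function.Injective (weylOp K X e f) := by
  have he := nilExp_injective (isNilpotent_toEnd_e K X t)
  have hf := nilExp_injective (isNilpotent_toEnd_f K X t).neg
  exact (he.comp hf).comp he

theorem weylOp_apply_bilin (t : SatisfiesSl2 K h e f) [FiniteDimensional K X]
    [FiniteDimensional K Y] [FiniteDimensional K Z] {T : X →ₗ[K] Y →ₗ[K] Z}
    (hT : IsEquivariant 𝔤 T) (x : X) (y : Y) :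
    weylOp K Z e f (T x y) = T (weylOp K X e f x) (weylOp K Y e f y) := by
  have he := nilExp_apply_bilin (isNilpotent_toEnd_e K X t) (isNilpotent_toEnd_e K Y t)
    (isNilpotent_toEnd_e K Z t) T fun x y => by
      simpa using hT e x y
  have hf := nilExp_apply_bilin (isNilpotent_toEnd_f K X t).neg
    (isNilpotent_toEnd_f K Y t).neg (isNilpotent_toEnd_f K Z t).neg T fun x y => by
      simp [hT f x y, add_comm]
  simp only [weylOp, Module.End.mul_apply, he, hf]

theorem weylOp_lie (t : SatisfiesSl2 K h e f) [FiniteDimensional K 𝔤] [FiniteDimensional K X]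
    (g : 𝔤) (x : X) :
    weylOp K X e f ⁅g, x⁆ = ⁅weylOp K 𝔤 e f g, weylOp K X e f x⁆ :=
  weylOp_apply_bilin t (T := (toEnd K 𝔤 X : 𝔤 →ₗ[K] Module.End K X)) (fun g g' x => by simp) g x

theorem weylOp_eq_self_of_isTrivial [IsTrivial 𝔤 X] (x : X) : weylOp K X e f x = x := by
  have h0 (g : 𝔤) : toEnd K 𝔤 X g = 0 := LinearMap.ext (trivial_lie_zero 𝔤 X g)
  simp [weylOp, h0, nilExp_zero]

theorem weylOp_h (t : SatisfiesSl2 K h e f) [FiniteDimensional K 𝔤] :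
    weylOp K 𝔤 e f h = -h := by
  have ne := isNilpotent_toEnd_e K 𝔤 t
  have nf := (isNilpotent_toEnd_f K 𝔤 t).neg
  have eh : ⁅e, h⁆ = -((2 : K) • e) := by rw [← lie_skew, t.lie_h_e]
  have fh : ⁅f, h⁆ = (2 : K) • f := by rw [← lie_skew, t.lie_h_f, neg_neg]
  have fe : ⁅f, e⁆ = -h := by rw [← lie_skew, t.lie_e_f]
  have exp_e_h : nilExp (toEnd K 𝔤 𝔤 e) h = h - (2 : K) • e := by
    rw [nilExp_apply_eq_sum ne (k := 2) (by simp [pow_two, eh])]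
    simp [Finset.sum_range_succ, eh, sub_eq_add_neg]
  have exp_e_e : nilExp (toEnd K 𝔤 𝔤 e) e = e := by
    rw [nilExp_apply_eq_sum ne (k := 1) (by simp)]
    simp
  have exp_f_h : nilExp (-toEnd K 𝔤 𝔤 f) h = h - (2 : K) • f := by
    rw [nilExp_apply_eq_sum nf (k := 2) (by simp [pow_two, fh])]
    simp [Finset.sum_range_succ, fh, sub_eq_add_neg]
  have exp_f_e : nilExp (-toEnd K 𝔤 𝔤 f) e = e + h - f := by
    rw [nilExp_apply_eq_sum nf (k := 3) (by simp [pow_succ, fh, fe])]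
    simp [Finset.sum_range_succ, fh, fe, sub_eq_add_neg, pow_two, smul_smul]
  calc weylOp K 𝔤 e f h
      = nilExp (toEnd K 𝔤 𝔤 e) (nilExp (-toEnd K 𝔤 𝔤 f) (h - (2 : K) • e)) := by
        rw [← exp_e_h]; rfl
    _ = nilExp (toEnd K 𝔤 𝔤 e) (-h - (2 : K) • e) := by
        rw [map_sub, map_smul, exp_f_h, exp_f_e]; congr 1; module
    _ = -h := by rw [map_sub, map_neg, map_smul, exp_e_h, exp_e_e]; module

end WeylOperator

section InducedModule

attribute [local instance] LieRing.ofAssociativeRing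

variable {R 𝔤 : Type*} [CommRing R] [LieRing 𝔤] [LieAlgebra R 𝔤] {N B : LieSubalgebra R 𝔤}

theorem uea_induction (S : Submodule R (UniversalEnvelopingAlgebra R 𝔤)) (one_mem : 1 ∈ S)
    (ι_mul_mem : ∀ y : 𝔤, ∀ a ∈ S, UniversalEnvelopingAlgebra.ι R y * a ∈ S)
    (a : UniversalEnvelopingAlgebra R 𝔤) : a ∈ S := by
  let T : Subalgebra R (UniversalEnvelopingAlgebra R 𝔤) :=
    { carrier := {u | ∀ a ∈ S, u * a ∈ S}
      mul_mem' := fun hu hv a ha => by rw [mul_assoc]; exact hu _ (hv _ ha)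
      add_mem' := fun hu hv a ha => by rw [add_mul]; exact S.add_mem (hu _ ha) (hv _ ha)
      algebraMap_mem' := fun c a ha => by rw [← Algebra.smul_def]; exact S.smul_mem _ ha }
  let j : 𝔤 →ₗ⁅R⁆ T :=
    { toFun := fun y => ⟨UniversalEnvelopingAlgebra.ι R y, ι_mul_mem y⟩
      map_add' := fun x y => Subtype.ext (by simp)
      map_smul' := fun c x => Subtype.ext (by simp)
      map_lie' := Subtype.ext (by simp [LieRing.of_associative_ring_bracket]) }
  have hj : T.val.comp (UniversalEnvelopingAlgebra.lift R j) = AlgHom.id R _ :=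
    UniversalEnvelopingAlgebra.hom_ext R (by ext y; simp [j])
  have lift_eq : (UniversalEnvelopingAlgebra.lift R j a : UniversalEnvelopingAlgebra R 𝔤) = a :=
    AlgHom.congr_fun hj a
  have haT : a ∈ T := lift_eq ▸ (UniversalEnvelopingAlgebra.lift R j a).2
  simpa using haT 1 one_mem

/-- The action of a subalgebra `N` on `Hom(𝔤, U(N))`, where `N` acts on `U(N)` by left
multiplication. -/
noncomputable def leibnizAction (N : LieSubalgebra R 𝔤) :
    N →ₗ⁅R⁆ Module.End R (𝔤 →ₗ[R] UniversalEnvelopingAlgebra R N) where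
  toFun y :=
    { toFun := fun φ => LinearMap.mulLeft R (UniversalEnvelopingAlgebra.ι R y) ∘ₗ φ -
        φ ∘ₗ toEnd R 𝔤 𝔤 y
      map_add' := fun φ ψ => by ext z; simp [mul_add]; abel
      map_smul' := fun c φ => by ext z; simp [smul_sub] }
  map_add' y y' := by ext φ z; simp [add_mul]; abel
  map_smul' c y := by ext φ z; simp [smul_sub]
  map_lie' {y y'} := by
    ext φ z
    simp [LieRing.of_associative_ring_bracket, mul_sub, sub_mul, mul_assoc]
    abel

/-- The action of `𝔤 = N ⊕ B` on `U(N)`, with arguments in the order (vector, element of `𝔤`).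
It is prescribed on `1` by `y + h ↦ ι y + χ h`, and `inducedAction_ι_mul` forces its value
everywhere else: as a function of the vector it is `N`-linear into `Hom(𝔤, U(N))`. -/
noncomputable def inducedAction (hNB : IsCompl N.toSubmodule B.toSubmodule) (χ : LieCharacter R B) :
    UniversalEnvelopingAlgebra R N →ₗ[R] 𝔤 →ₗ[R] UniversalEnvelopingAlgebra R N :=
  LinearMap.applyₗ (LinearMap.ofIsCompl hNB (UniversalEnvelopingAlgebra.ι R : N →ₗ⁅R⁆ _)
      ((χ : B →ₗ[R] R).smulRight 1)) ∘ₗ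
    (UniversalEnvelopingAlgebra.lift R (leibnizAction N)).toLinearMap

variable (hNB : IsCompl N.toSubmodule B.toSubmodule) (χ : LieCharacter R B)

theorem inducedAction_one_left (y : N) :
    inducedAction hNB χ 1 y = UniversalEnvelopingAlgebra.ι R y := by
  rw [inducedAction, LinearMap.comp_apply, AlgHom.toLinearMap_apply, map_one]
  exact LinearMap.ofIsCompl_apply_left hNB y

theorem inducedAction_one_right (z : B) : inducedAction hNB χ 1 z = χ z • 1 := by
  simp [inducedAction]

theorem inducedAction_ι_mul (y : N) (a : UniversalEnvelopingAlgebra R N) (x : 𝔤) :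
    inducedAction hNB χ (UniversalEnvelopingAlgebra.ι R y * a) x =
      UniversalEnvelopingAlgebra.ι R y * inducedAction hNB χ a x -
        inducedAction hNB χ a ⁅(y : 𝔤), x⁆ := by
  simp only [inducedAction, LinearMap.comp_apply, AlgHom.toLinearMap_apply, map_mul,
    UniversalEnvelopingAlgebra.lift_ι_apply]
  rfl

theorem inducedAction_apply_left (a : UniversalEnvelopingAlgebra R N) (y : N) :
    inducedAction hNB χ a y = UniversalEnvelopingAlgebra.ι R y * a := by
  let S : Submodule R (UniversalEnvelopingAlgebra R N) :=
    ⨅ y : N, LinearMap.eqLocus ((inducedAction hNB χ).flip y)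
      (LinearMap.mulLeft R (UniversalEnvelopingAlgebra.ι R y))
  have mem_S {a} : a ∈ S ↔
      ∀ y : N, inducedAction hNB χ a y = UniversalEnvelopingAlgebra.ι R y * a := by simp [S]
  refine mem_S.1 (uea_induction S ?_ ?_ a) y
  · simp [mem_S, inducedAction_one_left]
  · intro y a ha
    refine mem_S.2 fun y' => ?_
    rw [inducedAction_ι_mul, mem_S.1 ha, ← LieSubalgebra.coe_bracket, mem_S.1 ha,
      LieHom.map_lie, LieRing.of_associative_ring_bracket]
    noncomm_ring

/-- The failure of `inducedAction` to be a Lie algebra action. -/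
noncomputable def inducedDefect (x x' : 𝔤) : Module.End R (UniversalEnvelopingAlgebra R N) :=
  (inducedAction hNB χ).flip ⁅x, x'⁆ - ((inducedAction hNB χ).flip x * (inducedAction hNB χ).flip x'
    - (inducedAction hNB χ).flip x' * (inducedAction hNB χ).flip x)

theorem inducedDefect_apply (x x' : 𝔤) (a : UniversalEnvelopingAlgebra R N) :
    inducedDefect hNB χ x x' a = inducedAction hNB χ a ⁅x, x'⁆ -
      (inducedAction hNB χ (inducedAction hNB χ a x') x -
        inducedAction hNB χ (inducedAction hNB χ a x) x') :=
  rfl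

theorem inducedDefect_one (x x' : 𝔤) : inducedDefect hNB χ x x' 1 = 0 := by
  have left (y : N) (x : 𝔤) : inducedDefect hNB χ y x 1 = 0 := by
    have h := inducedAction_ι_mul hNB χ y 1 x
    rw [mul_one] at h
    rw [inducedDefect_apply, inducedAction_apply_left, inducedAction_apply_left, mul_one, h]
    abel
  have right_right (z z' : B) : inducedDefect hNB χ z z' 1 = 0 := by
    have h := inducedAction_one_right hNB χ ⁅z, z'⁆
    rw [lieCharacter_apply_lie, zero_smul, LieSubalgebra.coe_bracket] at h
    simp [inducedDefect_apply, inducedAction_one_right, h, smul_comm (χ z)]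
  have skew (x x' : 𝔤) : inducedDefect hNB χ x x' = -inducedDefect hNB χ x' x := by
    simp only [inducedDefect, ← lie_skew x x', map_neg]
    abel
  have add (x₁ x₂ x : 𝔤) :
      inducedDefect hNB χ (x₁ + x₂) x = inducedDefect hNB χ x₁ x + inducedDefect hNB χ x₂ x := by
    simp only [inducedDefect, add_lie, map_add, add_mul, mul_add]
    abel
  obtain ⟨y, z, hy, hz, rfl⟩ := Submodule.codisjoint_iff_exists_add_eq.1 hNB.codisjoint x
  obtain ⟨y', z', hy', hz', rfl⟩ := Submodule.codisjoint_iff_exists_add_eq.1 hNB.codisjoint x'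
  rw [add, LinearMap.add_apply, left ⟨y, hy⟩, skew z, LinearMap.neg_apply, add,
    LinearMap.add_apply, left ⟨y', hy'⟩, right_right ⟨z', hz'⟩ ⟨z, hz⟩]
  simp

theorem inducedDefect_ι_mul (x x' : 𝔤) (y : N) (a : UniversalEnvelopingAlgebra R N) :
    inducedDefect hNB χ x x' (UniversalEnvelopingAlgebra.ι R y * a) =
      UniversalEnvelopingAlgebra.ι R y * inducedDefect hNB χ x x' a -
        inducedDefect hNB χ ⁅(y : 𝔤), x⁆ x' a - inducedDefect hNB χ x ⁅(y : 𝔤), x'⁆ a := by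
  simp only [inducedDefect_apply, inducedAction_ι_mul, leibniz_lie (y : 𝔤) x x', map_add, map_sub,
    LinearMap.sub_apply, mul_sub]
  abel

theorem inducedDefect_eq_zero (x x' : 𝔤) : inducedDefect hNB χ x x' = 0 := by
  let S : Submodule R (UniversalEnvelopingAlgebra R N) :=
    ⨅ (x : 𝔤) (x' : 𝔤), LinearMap.ker (inducedDefect hNB χ x x')
  have mem_S {a} : a ∈ S ↔ ∀ x x', inducedDefect hNB χ x x' a = 0 := by simp [S]
  refine LinearMap.ext fun a => mem_S.1 (uea_induction S ?_ ?_ a) x x'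
  · exact mem_S.2 (inducedDefect_one hNB χ)
  · intro y a ha
    refine mem_S.2 fun x x' => ?_
    rw [inducedDefect_ι_mul, mem_S.1 ha, mem_S.1 ha, mem_S.1 ha, mul_zero, sub_zero, sub_zero]

/-- The representation `U(𝔤) ⊗_{U(B)} R_χ` of `𝔤 = N ⊕ B` induced from the character `χ` of `B`,
realised on the enveloping algebra of `N`. For a triangular decomposition this is a Verma module. -/
def InducedModule (_ : IsCompl N.toSubmodule B.toSubmodule) (_ : LieCharacter R B) : Type _ :=
  UniversalEnvelopingAlgebra R N

namespace InducedModule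

noncomputable instance : AddCommGroup (InducedModule hNB χ) :=
  inferInstanceAs (AddCommGroup (UniversalEnvelopingAlgebra R N))

noncomputable instance : Module R (InducedModule hNB χ) :=
  inferInstanceAs (Module R (UniversalEnvelopingAlgebra R N))

noncomputable instance : LieRingModule 𝔤 (InducedModule hNB χ) where
  bracket x a := inducedAction hNB χ a x
  add_lie x x' a := map_add (inducedAction hNB χ a) x x'
  lie_add x a a' := LinearMap.map_add₂ (inducedAction hNB χ) a a' x
  leibniz_lie x x' a := sub_eq_iff_eq_add.1 <| Eq.symm <| sub_eq_zero.1 <|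
    LinearMap.congr_fun (inducedDefect_eq_zero hNB χ x x') a

instance : LieModule R 𝔤 (InducedModule hNB χ) where
  smul_lie c x a := map_smul (inducedAction hNB χ a) c x
  lie_smul c x a := LinearMap.map_smul₂ (inducedAction hNB χ) c a x

/-- The canonical generator of the induced module. -/
noncomputable def gen : InducedModule hNB χ := (1 : UniversalEnvelopingAlgebra R N)

theorem lie_gen (z : B) : ⁅(z : 𝔤), gen hNB χ⁆ = χ z • gen hNB χ :=
  inducedAction_one_right hNB χ z

variable {hNB χ}

theorem induction (S : Submodule R (InducedModule hNB χ)) (gen_mem : gen hNB χ ∈ S)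
    (lie_mem : ∀ y ∈ N, ∀ a ∈ S, ⁅y, a⁆ ∈ S) : S = ⊤ :=
  eq_top_iff.2 fun a _ => uea_induction S gen_mem (fun y a ha => by
    rw [← inducedAction_apply_left hNB χ a y]
    exact lie_mem y y.2 a ha) a

/-- The `N`-linear map out of the induced module sending the generator to `u`: as a
representation of `N`, the induced module is free on its generator. -/
noncomputable def lift {Y : Type*} [AddCommGroup Y] [Module R Y] [LieRingModule N Y]
    [LieModule R N Y] (u : Y) : InducedModule hNB χ →ₗ[R] Y :=
  LinearMap.applyₗ u ∘ₗ (UniversalEnvelopingAlgebra.lift R (toEnd R N Y)).toLinearMap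

variable {Y : Type*} [AddCommGroup Y] [Module R Y] [LieRingModule N Y] [LieModule R N Y]

theorem lift_gen (u : Y) : lift u (gen hNB χ) = u := by
  change UniversalEnvelopingAlgebra.lift R (toEnd R N Y) 1 u = u
  rw [map_one, Module.End.one_apply]

theorem lift_lie (u : Y) (y : N) (a : InducedModule hNB χ) :
    lift u ⁅(y : 𝔤), a⁆ = ⁅y, lift u a⁆ := by
  have action_lift (a : UniversalEnvelopingAlgebra R N) :
      UniversalEnvelopingAlgebra.lift R (toEnd R N Y) (inducedAction hNB χ a y) u =
        ⁅y, UniversalEnvelopingAlgebra.lift R (toEnd R N Y) a u⁆ := by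
    rw [inducedAction_apply_left, map_mul, UniversalEnvelopingAlgebra.lift_ι_apply]
    rfl
  exact action_lift a

end InducedModule

end InducedModule

section PositiveCone

theorem exists_nnrat_eq_of_mem_closure {K A F : Type*} [DivisionSemiring K] [CharZero K]
    [AddCommMonoid A] [FunLike F A K] [AddMonoidHomClass F A K] {s : Set A} {φ : F}
    (hφ : ∀ a ∈ s, ∃ q : ℚ≥0, φ a = q) {x : A} (hx : x ∈ AddSubmonoid.closure s) :
    ∃ q : ℚ≥0, φ x = q := by
  induction hx using AddSubmonoid.closure_induction with
  | mem a ha => exact hφ a ha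
  | zero => exact ⟨0, by simp⟩
  | add x y _ _ hx hy =>
    obtain ⟨p, hp⟩ := hx
    obtain ⟨q, hq⟩ := hy
    exact ⟨p + q, by simp [hp, hq]⟩

theorem mem_closure_sep_of_map_eq_zero {K A F : Type*} [DivisionRing K] [CharZero K]
    [AddCommMonoid A] [FunLike F A K] [AddMonoidHomClass F A K] {s : Set A} {φ : F}
    (hφ : ∀ a ∈ s, ∃ q : ℚ≥0, φ a = q) {x : A} (hx : x ∈ AddSubmonoid.closure s)
    (h0 : φ x = 0) : x ∈ AddSubmonoid.closure {a ∈ s | φ a = 0} := by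
  induction hx using AddSubmonoid.closure_induction with
  | mem a ha => exact AddSubmonoid.subset_closure ⟨ha, h0⟩
  | zero => exact zero_mem _
  | add x y hx hy ihx ihy =>
    obtain ⟨p, hp⟩ := exists_nnrat_eq_of_mem_closure hφ hx
    obtain ⟨q, hq⟩ := exists_nnrat_eq_of_mem_closure hφ hy
    have hpq : p = 0 ∧ q = 0 := by
      rw [← add_eq_zero]
      exact_mod_cast (by rwa [map_add, hp, hq] at h0 : (p : K) + q = 0)
    exact add_mem (ihx (by simp [hp, hpq])) (ihy (by simp [hq, hpq]))

theorem eq_zero_of_mem_closure_of_map_eq_zero {K A F : Type*} [DivisionRing K] [CharZero K]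
    [AddCommMonoid A] [FunLike F A K] [AddMonoidHomClass F A K] {s : Set A} {φ : F}
    (hφ : ∀ a ∈ s, ∃ q : ℚ≥0, φ a = q) (hs : ∀ a ∈ s, φ a ≠ 0) {x : A}
    (hx : x ∈ AddSubmonoid.closure s) (h0 : φ x = 0) : x = 0 := by
  have h := mem_closure_sep_of_map_eq_zero hφ hx h0
  rwa [Set.sep_eq_empty_iff_mem_false.2 hs, AddSubmonoid.closure_empty, AddSubmonoid.mem_bot] at h

variable {ι R M N : Type*} [CommRing R] [AddCommGroup M] [Module R M]
  [AddCommGroup N] [Module R N] {P : RootPairing ι R M N}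

/-- The monoid of sums of simple roots. -/
def rootCone (b : P.Base) : AddSubmonoid M := AddSubmonoid.closure (P.root '' b.support)

variable {b : P.Base}

theorem root_mem_rootCone_of_mem_support {i : ι} (hi : i ∈ b.support) : P.root i ∈ rootCone b :=
  AddSubmonoid.subset_closure ⟨i, hi, rfl⟩

theorem exists_coord_toWeightBasis_eq_natCast [P.IsRootSystem] {ν : M} (hν : ν ∈ rootCone b)
    (j : b.support) : ∃ n : ℕ, b.toWeightBasis.coord j ν = n := by
  induction hν using AddSubmonoid.closure_induction with
  | mem _ h =>
    obtain ⟨i, hi, rfl⟩ := h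
    refine ⟨(Finsupp.single (⟨i, hi⟩ : b.support) 1 : b.support →₀ ℕ) j, ?_⟩
    rw [Basis.coord_apply, b.toWeightBasis_repr_root ⟨i, hi⟩, Finsupp.single_apply,
      Finsupp.single_apply]
    simp
  | zero => exact ⟨0, by simp⟩
  | add x y _ _ hx hy =>
    obtain ⟨m, hm⟩ := hx
    obtain ⟨n, hn⟩ := hy
    exact ⟨m + n, by rw [map_add, hm, hn, Nat.cast_add]⟩

variable [CharZero R]

theorem root_eq_of_root_add_eq_nsmul [P.IsRootSystem] [P.IsReduced] {i j : ι} (hi : i ∈ b.support)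
    (hj : P.root j ∈ rootCone b) {ν : M} (hν : ν ∈ rootCone b) {k : ℕ}
    (h : P.root j + ν = k • P.root i) : P.root j = P.root i := by
  obtain ⟨c, hc⟩ := exists_coord_toWeightBasis_eq_natCast hj ⟨i, hi⟩
  have hroot : P.root j = (c : R) • P.root i := by
    refine b.toWeightBasis.ext_elem fun l => ?_
    rw [map_smul, b.toWeightBasis_repr_root ⟨i, hi⟩]
    by_cases hl : l = ⟨i, hi⟩
    · subst hl
      simpa using hc
    · obtain ⟨p, hp⟩ := exists_coord_toWeightBasis_eq_natCast hj l
      obtain ⟨q, hq⟩ := exists_coord_toWeightBasis_eq_natCast hν l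
      have hpq : (p : R) + q = 0 := by
        rw [← hp, ← hq, ← map_add, h, map_nsmul, Basis.coord_apply,
          b.toWeightBasis_repr_root ⟨i, hi⟩, Finsupp.single_eq_of_ne hl, smul_zero]
      have hp0 : p = 0 := by
        have : p + q = 0 := by exact_mod_cast hpq
        omega
      simpa [hp0, Finsupp.single_eq_of_ne hl] using hp
  refine (RootPairing.IsReduced.eq_or_eq_neg j i fun hind => ?_).resolve_right fun hneg => ?_
  · exact one_ne_zero (LinearIndependent.pair_iff.1 hind 1 (-(c : R)) (by simp [hroot])).1
  · rw [hneg, map_neg, Basis.coord_apply, b.toWeightBasis_repr_root ⟨i, hi⟩] at hc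
    have hc' : (1 : R) + c = 0 := by simp [← hc]
    exact absurd (show 1 + c = 0 by exact_mod_cast hc') (by omega)

variable [IsDomain R] [P.IsCrystallographic]

theorem root_mem_rootCone_of_isPos [Finite ι] {i : ι} (hi : b.IsPos i) : P.root i ∈ rootCone b :=
  hi.induction_on_add (fun _ => root_mem_rootCone_of_mem_support) fun _ _ _ hk hi hj =>
    hk ▸ add_mem hi (root_mem_rootCone_of_mem_support hj)

theorem neg_root_mem_rootCone_of_not_isPos [Finite ι] {i : ι} (hi : ¬ b.IsPos i) :
    -P.root i ∈ rootCone b := by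
  let _ := P.indexNeg
  simpa using root_mem_rootCone_of_isPos ((RootPairing.Base.IsPos.neg_iff_not b i).2 hi)

variable [Fintype ι] (b)

/-- The sum of the positive roots. -/
noncomputable def twoRho : M := ∑ i with b.IsPos i, P.root i

theorem twoRho_mem_rootCone : twoRho b ∈ rootCone b :=
  sum_mem fun _ hi => root_mem_rootCone_of_isPos (Finset.mem_filter.1 hi).2

variable {b}

/-- The reflection in a simple root permutes the other positive roots, so it fixes `twoRho`
up to that root. -/
theorem coroot'_twoRho [P.IsReduced] {j : ι} (hj : j ∈ b.support) :
    P.coroot' j (twoRho b) = 2 := by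
  have hpos : j ∈ Finset.univ.filter b.IsPos :=
    Finset.mem_filter.2 ⟨Finset.mem_univ j, RootPairing.Base.isPos_of_mem_support hj⟩
  have reflection_mem {i : ι} (hi : i ∈ (Finset.univ.filter b.IsPos).erase j) :
      P.reflectionPerm j i ∈ (Finset.univ.filter b.IsPos).erase j := by
    obtain ⟨hij, hi⟩ := Finset.mem_erase.1 hi
    have hi := (Finset.mem_filter.1 hi).2
    have hne : P.reflectionPerm j i ≠ j := fun h => by
      have hneg := P.reflectionPerm_involutive j i
      rw [h] at hneg
      let _ := P.indexNeg
      have hnj : b.IsPos (-j) := by rwa [← hneg] at hi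
      exact (RootPairing.Base.IsPos.neg_iff_not b j).1 hnj
        (RootPairing.Base.isPos_of_mem_support hj)
    exact Finset.mem_erase.2 ⟨hne, Finset.mem_filter.2 ⟨Finset.mem_univ _,
      hi.reflectionPerm hj hij⟩⟩
  have pairing_reflection (i : ι) :
      P.coroot' j (P.root (P.reflectionPerm j i)) = -P.coroot' j (P.root i) := by
    rw [P.root_reflectionPerm, P.reflection_apply]
    simp
    ring
  have sum_eq_neg : ∑ i ∈ (Finset.univ.filter b.IsPos).erase j, P.coroot' j (P.root i) =
      -∑ i ∈ (Finset.univ.filter b.IsPos).erase j, P.coroot' j (P.root i) := by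
    rw [← Finset.sum_neg_distrib]
    refine Finset.sum_nbij' (P.reflectionPerm j) (P.reflectionPerm j)
      (fun _ => reflection_mem) (fun _ => reflection_mem) (by simp) (by simp) fun i _ => ?_
    rw [pairing_reflection, neg_neg]
  rw [twoRho, map_sum, ← Finset.add_sum_erase _ _ hpos, self_eq_neg.1 sum_eq_neg]
  simp

end PositiveCone

section WeightSpaces

variable {K 𝔥 X : Type*} [Field K] [LieRing 𝔥] [LieAlgebra K 𝔥] [LieRing.IsNilpotent 𝔥]
  [AddCommGroup X] [Module K X] [LieRingModule 𝔥 X] [LieModule K 𝔥 X]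

variable (K 𝔥 X) in
theorem iSupIndep_weightSpace :
    iSupIndep fun χ : Dual K 𝔥 => (weightSpace X χ : Submodule K X) :=
  ((LieSubmodule.iSupIndep_toSubmodule.2 (iSupIndep_genWeightSpace K 𝔥 X)).comp
    DFunLike.coe_injective).mono fun _ => weightSpace_le_genWeightSpace X _

theorem weight_mem_of_mem_iSup_weightSpace {s : Set (Dual K 𝔥)} {χ : Dual K 𝔥} {x : X}
    (hs : x ∈ ⨆ ψ ∈ s, (weightSpace X ψ : Submodule K X)) (hx : x ∈ weightSpace X χ)
    (hx0 : x ≠ 0) : χ ∈ s := by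
  by_contra hχ
  exact hx0 (Submodule.disjoint_def.1 ((iSupIndep_weightSpace K 𝔥 X).disjoint_biSup hχ) x hx hs)

theorem mem_of_sum_mem_of_mem_weightSpace (S : LieSubmodule K 𝔥 X)
    (u : Dual K 𝔥 →₀ X)
    (hu : ∀ χ : Dual K 𝔥, u χ ∈ weightSpace X χ) (hsum : (u.sum fun _ a => a) ∈ S) (χ : Dual K 𝔥) :
    u χ ∈ S := by
  have map_mem (χ : Dual K 𝔥) :
      LieSubmodule.Quotient.mk' S (u χ) ∈ weightSpace (X ⧸ S) χ :=
    (mem_weightSpace _ _).2 fun h => by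
      rw [← LieModuleHom.map_lie, (mem_weightSpace _ _).1 (hu χ) h, map_smul]
  have sum_eq_zero : ∑ χ ∈ u.support, LieSubmodule.Quotient.mk' S (u χ) = 0 := by
    rw [← map_sum]
    exact (LieSubmodule.Quotient.mk_eq_zero' (N := S)).2 hsum
  by_cases hχ : χ ∈ u.support
  · exact (LieSubmodule.Quotient.mk_eq_zero' (N := S)).1
      ((iSupIndep_iff_finsetSum_eq_zero_imp_eq_zero _).1 (iSupIndep_weightSpace K 𝔥 (X ⧸ S))
        u.support _ (fun χ _ => map_mem χ) sum_eq_zero χ hχ)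
  · rw [Finsupp.notMem_support_iff.1 hχ]
    exact zero_mem S

theorem mem_iSup_weightSpace_of_lie_eq_smul [IsLieAbelian 𝔥]
    (hX : ⨆ χ : Dual K 𝔥, (weightSpace X χ : Submodule K X) = ⊤) {h : 𝔥} {c : K} {x : X}
    (hx : ⁅h, x⁆ = c • x) :
    x ∈ ⨆ χ ∈ {χ : Dual K 𝔥 | χ h = c}, (weightSpace X χ : Submodule K X) := by
  let S : LieSubmodule K 𝔥 X :=
    { Module.End.eigenspace (toEnd K 𝔥 X h) c with
      lie_mem := fun {h' y} hy => by
        have hy : ⁅h, y⁆ = c • y := Module.End.mem_eigenspace_iff.1 hy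
        refine Module.End.mem_eigenspace_iff.2 ?_
        rw [toEnd_apply_apply, leibniz_lie, trivial_lie_zero 𝔥 𝔥, zero_lie, zero_add, hy,
          lie_smul] }
  obtain ⟨u, hu, rfl⟩ := (Submodule.mem_iSup_iff_exists_finsupp _ x).1 (hX.ge trivial)
  refine sum_mem fun χ hχ => Submodule.mem_iSup_of_mem χ (Submodule.mem_iSup_of_mem ?_ (hu χ))
  have huχ : ⁅h, u χ⁆ = c • u χ := Module.End.mem_eigenspace_iff.1
    (mem_of_sum_mem_of_mem_weightSpace S u hu (Module.End.mem_eigenspace_iff.2 hx) χ)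
  rw [(mem_weightSpace _ _).1 (hu χ)] at huχ
  exact smul_left_injective K (Finsupp.mem_support_iff.1 hχ) huχ

theorem exists_mem_weightSpace_of_ne_bot
    (hX : ⨆ χ : Dual K 𝔥, (weightSpace X χ : Submodule K X) = ⊤) {S : LieSubmodule K 𝔥 X}
    (hS : S ≠ ⊥) : ∃ χ : Dual K 𝔥, ∃ x ∈ S, x ∈ weightSpace X χ ∧ x ≠ 0 := by
  obtain ⟨x, hxS, hx0⟩ := S.toSubmodule.ne_bot_iff.1 (LieSubmodule.toSubmodule_eq_bot S |>.not.2 hS)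
  obtain ⟨u, hu, rfl⟩ := (Submodule.mem_iSup_iff_exists_finsupp _ x).1 (hX.ge trivial)
  obtain ⟨χ, hχ⟩ : ∃ χ, u χ ≠ 0 := by
    by_contra! h
    exact hx0 (by simp [Finsupp.sum, h])
  exact ⟨χ, u χ, mem_of_sum_mem_of_mem_weightSpace S u hu hxS χ, hu χ, hχ⟩

end WeightSpaces

section RootSubalgebra

variable {K 𝔤 : Type*} [Field K] [LieRing 𝔤] [LieAlgebra K 𝔤] {H : LieSubalgebra K 𝔤}
  [LieRing.IsNilpotent H]

theorem lie_mem_rootSpace {χ ψ : Dual K H} {x y : 𝔤} (hx : x ∈ rootSpace H χ)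
    (hy : y ∈ rootSpace H ψ) : ⁅x, y⁆ ∈ rootSpace H ⇑(χ + ψ) :=
  lie_mem_genWeightSpace_of_mem_genWeightSpace hx hy

theorem mem_rootSpace_zero_iff {K 𝔤 : Type*} [Field K] [LieRing 𝔤] [LieAlgebra K 𝔤]
    [FiniteDimensional K 𝔤] {H : LieSubalgebra K 𝔤} [H.IsCartanSubalgebra] {x : 𝔤} :
    x ∈ rootSpace H ⇑(0 : Dual K H) ↔ x ∈ H := by
  change x ∈ rootSpace H (0 : H → K) ↔ x ∈ H
  rw [rootSpace_zero_eq, LieSubalgebra.mem_toLieSubmodule]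

/-- The span of the root spaces of the weights in an additively closed set. -/
def rootSubalgebra (s : AddSubsemigroup (Dual K H)) : LieSubalgebra K 𝔤 where
  toSubmodule := ⨆ χ : s, (rootSpace H χ.1).toSubmodule
  lie_mem' {x y} hx hy := by
    refine Submodule.iSup_induction _ (motive := fun x => ⁅x, y⁆ ∈ _) hx (fun χ x hx => ?_)
      (by simp) fun x x' hx hx' => by
        rw [add_lie]
        exact Submodule.add_mem _ hx hx'
    refine Submodule.iSup_induction _ (motive := fun y => ⁅x, y⁆ ∈ _) hy (fun ψ y hy => ?_)
      (by simp) fun y y' hy hy' => by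
        rw [lie_add]
        exact Submodule.add_mem _ hy hy'
    exact Submodule.mem_iSup_of_mem (χ + ψ) (lie_mem_rootSpace hx hy)

theorem rootSubalgebra_toSubmodule (s : AddSubsemigroup (Dual K H)) :
    (rootSubalgebra s).toSubmodule = ⨆ χ ∈ s, (rootSpace H χ).toSubmodule :=
  iSup_subtype

theorem mem_rootSubalgebra_of_mem_rootSpace {s : AddSubsemigroup (Dual K H)} {χ : Dual K H}
    (hχ : χ ∈ s) {x : 𝔤} (hx : x ∈ rootSpace H χ) : x ∈ rootSubalgebra s :=
  Submodule.mem_iSup_of_mem (⟨χ, hχ⟩ : s) hx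

theorem rootSubalgebra_le {s : AddSubsemigroup (Dual K H)} {S : Submodule K 𝔤}
    (hS : ∀ χ ∈ s, ∀ x ∈ rootSpace H χ, x ∈ S) : (rootSubalgebra s).toSubmodule ≤ S :=
  iSup_le fun χ => hS χ.1 χ.2

end RootSubalgebra

open IsKilling

section TriangularDecomposition

variable {K 𝔤 : Type*} [Field K] [CharZero K] [LieRing 𝔤] [LieAlgebra K 𝔤]
  [FiniteDimensional K 𝔤] [IsKilling K 𝔤] {H : LieSubalgebra K 𝔤} [H.IsCartanSubalgebra]
  [IsTriangularizable K H 𝔤]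

theorem mem_rootSpace_iff {χ : Dual K H} {x : 𝔤} :
    x ∈ rootSpace H χ ↔ ∀ h : H, ⁅(h : 𝔤), x⁆ = χ h • x :=
  ⟨fun hx h => lie_eq_smul_of_mem_rootSpace hx h,
    fun hx => weightSpace_le_genWeightSpace 𝔤 _ ((mem_weightSpace _ _).2 hx)⟩

theorem lie_mem_weightSpace {X : Type*} [AddCommGroup X] [Module K X] [LieRingModule 𝔤 X]
    [LieModule K 𝔤 X] {χ ψ : Dual K H} {x : 𝔤} {u : X} (hx : x ∈ rootSpace H χ)
    (hu : u ∈ weightSpace X ψ) : ⁅x, u⁆ ∈ weightSpace X ⇑(χ + ψ) :=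
  (mem_weightSpace _ _).2 fun h => by
    have hu : ⁅(h : 𝔤), u⁆ = ψ h • u := (mem_weightSpace _ _).1 hu h
    rw [LieSubalgebra.coe_bracket_of_module, leibniz_lie, mem_rootSpace_iff.1 hx h, hu, smul_lie,
      lie_smul, ← add_smul, LinearMap.add_apply]

variable (b : (rootSystem H).Base)

/-- The sum of the positive coroots. -/
noncomputable def rhoCheck : H := twoRho b.flip

theorem root_rhoCheck {i : H.root} (hi : i ∈ b.support) :
    (rootSystem H).root i (rhoCheck b) = 2 :=
  coroot'_twoRho (b := b.flip) hi

variable {b}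
theorem apply_rhoCheck_of_mem_rootCone {ν : Dual K H} (hν : ν ∈ rootCone b) :
    ∃ n : ℕ, ν (rhoCheck b) = 2 * n := by
  induction hν using AddSubmonoid.closure_induction with
  | mem _ h =>
    obtain ⟨i, hi, rfl⟩ := h
    exact ⟨1, by rw [root_rhoCheck b hi]; simp⟩
  | zero => exact ⟨0, by simp⟩
  | add x y _ _ hx hy =>
    obtain ⟨m, hm⟩ := hx
    obtain ⟨n, hn⟩ := hy
    exact ⟨m + n, by simp [hm, hn, mul_add]⟩

theorem eq_zero_of_mem_rootCone_of_apply_rhoCheck {ν : Dual K H} (hν : ν ∈ rootCone b)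
    (h0 : ν (rhoCheck b) = 0) : ν = 0 := by
  refine eq_zero_of_mem_closure_of_map_eq_zero (φ := Dual.eval K H (rhoCheck b)) ?_ ?_ hν h0
  · rintro _ ⟨i, hi, rfl⟩
    exact ⟨2, by simpa using root_rhoCheck b hi⟩
  · rintro _ ⟨i, hi, rfl⟩
    simpa using (root_rhoCheck b hi).trans_ne two_ne_zero

theorem eq_zero_of_mem_rootCone_of_apply_rhoCheck_add {ν ξ : Dual K H} (hν : ν ∈ rootCone b)
    (hξ : ξ ∈ rootCone b) (h : ν (rhoCheck b) + ξ (rhoCheck b) = 0) : ν = 0 := by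
  obtain ⟨m, hm⟩ := apply_rhoCheck_of_mem_rootCone hν
  obtain ⟨n, hn⟩ := apply_rhoCheck_of_mem_rootCone hξ
  have hmn : 2 * m + 2 * n = 0 := by
    rw [hm, hn] at h
    exact_mod_cast h
  exact eq_zero_of_mem_rootCone_of_apply_rhoCheck hν (by simp [hm, show m = 0 by omega])

theorem eq_zero_of_add_eq_zero_of_mem_rootCone {ν ξ : Dual K H} (hν : ν ∈ rootCone b)
    (hξ : ξ ∈ rootCone b) (h : ν + ξ = 0) : ν = 0 :=
  eq_zero_of_mem_rootCone_of_apply_rhoCheck_add hν hξ (LinearMap.congr_fun h (rhoCheck b))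

variable (b)

/-- The span of the Cartan subalgebra and the positive root spaces. -/
noncomputable def borel : LieSubalgebra K 𝔤 := rootSubalgebra (rootCone b).toAddSubsemigroup

/-- The nonzero elements of the opposite of the root cone. -/
def negCone : AddSubsemigroup (Dual K H) where
  carrier := {χ | χ ≠ 0 ∧ -χ ∈ rootCone b}
  add_mem' {χ ψ} hχ hψ := ⟨fun h => hχ.1 (neg_eq_zero.1
      (eq_zero_of_add_eq_zero_of_mem_rootCone hχ.2 hψ.2 (by rw [← neg_add, h, neg_zero]))),
    by rw [neg_add]; exact add_mem hχ.2 hψ.2⟩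

/-- The span of the negative root spaces. -/
noncomputable def negPart : LieSubalgebra K 𝔤 := rootSubalgebra (negCone b)

theorem mem_rootCone_or_mem_negCone (χ : Weight K H 𝔤) :
    χ.toLinear ∈ rootCone b ∨ χ.toLinear ∈ negCone b := by
  by_cases hχ : χ.IsZero
  · exact Or.inl (Weight.coe_toLinear_eq_zero_iff.2 hχ ▸ zero_mem _)
  · let i : H.root := ⟨χ, by simpa using hχ⟩
    refine (em (b.IsPos i)).imp root_mem_rootCone_of_isPos fun hi => ⟨?_, ?_⟩
    · exact Weight.coe_toLinear_ne_zero_iff.2 hχ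
    · exact neg_root_mem_rootCone_of_not_isPos hi

theorem mem_rootCone_or_mem_negCone_of_mem_rootSpace {χ : Dual K H} {x : 𝔤}
    (hx : x ∈ rootSpace H χ) (hx0 : x ≠ 0) : χ ∈ rootCone b ∨ χ ∈ negCone b :=
  mem_rootCone_or_mem_negCone b ⟨χ, fun h => hx0 ((LieSubmodule.mem_bot x).1 (h.le hx))⟩

theorem isCompl_negPart_borel : IsCompl (negPart b).toSubmodule (borel b).toSubmodule := by
  refine ⟨?_, codisjoint_iff.2 (top_le_iff.1 ?_)⟩
  · rw [negPart, borel, rootSubalgebra_toSubmodule, rootSubalgebra_toSubmodule]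
    have hind : iSupIndep fun χ : Dual K H => (rootSpace H χ).toSubmodule :=
      (LieSubmodule.iSupIndep_toSubmodule.2 (iSupIndep_genWeightSpace K H 𝔤)).comp
        DFunLike.coe_injective
    refine hind.disjoint_biSup_biSup ?_
    exact Set.disjoint_left.2 fun χ hχ hχ' =>
      hχ.1 (eq_zero_of_add_eq_zero_of_mem_rootCone hχ' hχ.2 (add_neg_cancel χ))
  · rw [← LieSubmodule.top_toSubmodule (L := H), ← iSup_genWeightSpace_eq_top' K H 𝔤,
      LieSubmodule.iSup_toSubmodule]
    refine iSup_le fun χ x hx => ?_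
    obtain hχ | hχ := mem_rootCone_or_mem_negCone b χ
    · exact Submodule.mem_sup_right (mem_rootSubalgebra_of_mem_rootSpace hχ hx)
    · exact Submodule.mem_sup_left (mem_rootSubalgebra_of_mem_rootSpace hχ hx)

end TriangularDecomposition

section SingularVectors

attribute [local instance] LieRing.ofAssociativeRing

variable {K 𝔤 : Type*} [Field K] [CharZero K] [LieRing 𝔤] [LieAlgebra K 𝔤]
  [FiniteDimensional K 𝔤] [IsKilling K 𝔤] {H : LieSubalgebra K 𝔤} [H.IsCartanSubalgebra]
  [IsTriangularizable K H 𝔤] (b : (rootSystem H).Base)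

theorem killingForm_cartan_eq_zero_of_mem_rootSpace {K 𝔤 : Type*} [Field K] [LieRing 𝔤]
    [LieAlgebra K 𝔤] [FiniteDimensional K 𝔤] {H : LieSubalgebra K 𝔤} [H.IsCartanSubalgebra]
    [IsTriangularizable K H 𝔤] {χ : Dual K H} (hχ : χ ≠ 0) (t : H) {x : 𝔤}
    (hx : x ∈ rootSpace H χ) : killingForm K 𝔤 t x = 0 :=
  LieAlgebra.killingForm_apply_eq_zero_of_mem_rootSpace_of_add_ne_zero K 𝔤 H
    (mem_rootSpace_zero_iff.2 t.2) hx fun h =>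
      hχ (DFunLike.coe_injective ((zero_add _).symm.trans h))

theorem killingForm_cartan_lie_eq_zero_of_mem_borel (t : H) {x y : 𝔤} (hx : x ∈ borel b)
    (hy : y ∈ borel b) : killingForm K 𝔤 t ⁅x, y⁆ = 0 := by
  refine rootSubalgebra_le (S := LinearMap.ker
    (killingForm K 𝔤 t ∘ₗ (toEnd K 𝔤 𝔤).toLinearMap.flip y)) (fun χ hχ x hx => ?_) hx
  refine rootSubalgebra_le (S := LinearMap.ker
    (killingForm K 𝔤 t ∘ₗ toEnd K 𝔤 𝔤 x)) (fun ψ hψ y hy => ?_) hy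
  change killingForm K 𝔤 t ⁅x, y⁆ = 0
  by_cases h : χ + ψ = 0
  · obtain rfl := eq_zero_of_add_eq_zero_of_mem_rootCone hχ hψ h
    obtain rfl : ψ = 0 := by rwa [zero_add] at h
    have hxy :
        ⁅(⟨x, mem_rootSpace_zero_iff.1 hx⟩ : H), (⟨y, mem_rootSpace_zero_iff.1 hy⟩ : H)⁆ = 0 :=
      trivial_lie_zero H H _ _
    rw [show ⁅x, y⁆ = 0 from congrArg Subtype.val hxy, map_zero]
  · exact killingForm_cartan_eq_zero_of_mem_rootSpace h t (lie_mem_rootSpace hx hy)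

/-- The character of the Borel subalgebra that extends `μ` by zero on the positive root spaces;
it is encoded as the Killing form against the element of `H` dual to `μ`. -/
noncomputable def borelCharacter (μ : Dual K H) : LieCharacter K (borel b) where
  toLinearMap := killingForm K 𝔤 ((cartanEquivDual H).symm μ : H) ∘ₗ (borel b).toSubmodule.subtype
  map_lie' {x y} := (killingForm_cartan_lie_eq_zero_of_mem_borel b _ x.2 y.2).trans
    (by rw [LieRing.of_associative_ring_bracket, mul_comm, sub_self])

variable {b}

theorem borelCharacter_of_mem_cartan (μ : Dual K H) (z : borel b) (h : H) (hz : (z : 𝔤) = h) :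
    borelCharacter b μ z = μ h := by
  change killingForm K 𝔤 ((cartanEquivDual H).symm μ : H) z = μ h
  rw [hz]
  exact LinearMap.congr_fun ((cartanEquivDual H).apply_symm_apply μ) h

theorem borelCharacter_of_mem_rootSpace (μ : Dual K H) {χ : Dual K H} (hχ : χ ≠ 0) (z : borel b)
    (hz : (z : 𝔤) ∈ rootSpace H χ) : borelCharacter b μ z = 0 :=
  killingForm_cartan_eq_zero_of_mem_rootSpace hχ _ hz

variable {X Y : Type*} [AddCommGroup X] [Module K X] [LieRingModule 𝔤 X]
  [AddCommGroup Y] [Module K Y] [LieRingModule 𝔤 Y]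

variable (b) in
/-- `u` has weight `μ` and is annihilated by the positive root spaces. The zero vector is
allowed. -/
def IsSingular (μ : Dual K H) (u : X) : Prop :=
  ∀ z : borel b, ⁅(z : 𝔤), u⁆ = borelCharacter b μ z • u

theorem IsSingular.lie_eq_zero {μ χ : Dual K H} {u : X} (hu : IsSingular b μ u)
    (hχ : χ ∈ rootCone b) (hχ0 : χ ≠ 0) {x : 𝔤} (hx : x ∈ rootSpace H χ) : ⁅x, u⁆ = 0 := by
  rw [hu ⟨x, mem_rootSubalgebra_of_mem_rootSpace hχ hx⟩, borelCharacter_of_mem_rootSpace μ hχ0 _ hx,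
    zero_smul]

theorem IsSingular.map {μ : Dual K H} {u : X} (hu : IsSingular b μ u) (g : X →ₗ⁅K,𝔤⁆ Y) :
    IsSingular b μ (g u) := fun z => by
  rw [← LieModuleHom.map_lie, hu z, map_smul]

variable [LieModule K 𝔤 X]

theorem IsSingular.mem_weightSpace {μ : Dual K H} {u : X} (hu : IsSingular b μ u) :
    u ∈ weightSpace X μ :=
  (LieModule.mem_weightSpace _ _).2 fun h => by
    have hh : (h : 𝔤) ∈ borel b :=
      mem_rootSubalgebra_of_mem_rootSpace (zero_mem (rootCone b)) (mem_rootSpace_zero_iff.2 h.2)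
    exact (hu ⟨h, hh⟩).trans (by rw [borelCharacter_of_mem_cartan μ _ h rfl])

theorem isSingular_iff {μ : Dual K H} {u : X} : IsSingular b μ u ↔ u ∈ weightSpace X μ ∧
    ∀ χ ∈ rootCone b, χ ≠ 0 → ∀ x ∈ rootSpace H χ, ⁅x, u⁆ = 0 := by
  refine ⟨fun hu => ⟨hu.mem_weightSpace, fun χ hχ hχ0 x hx => hu.lie_eq_zero hχ hχ0 hx⟩,
    fun ⟨hwt, hpos⟩ z => ?_⟩
  let S : Submodule K (borel b) := LinearMap.ker
    ((toEnd K 𝔤 X).toLinearMap.flip u ∘ₗ (borel b).toSubmodule.subtype -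
      (borelCharacter b μ).toLinearMap.smulRight u)
  have mem_S {z : borel b} : z ∈ S ↔ ⁅(z : 𝔤), u⁆ = borelCharacter b μ z • u := sub_eq_zero
  have hle : (borel b).toSubmodule ≤ S.map (borel b).toSubmodule.subtype := by
    refine rootSubalgebra_le fun χ hχ x hx =>
      ⟨⟨x, mem_rootSubalgebra_of_mem_rootSpace hχ hx⟩, ?_, rfl⟩
    refine mem_S.2 ?_
    by_cases hχ0 : χ = 0
    · subst hχ0
      rw [borelCharacter_of_mem_cartan μ _ ⟨x, mem_rootSpace_zero_iff.1 hx⟩ rfl]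
      exact (LieModule.mem_weightSpace _ _).1 hwt ⟨x, mem_rootSpace_zero_iff.1 hx⟩
    · rw [borelCharacter_of_mem_rootSpace μ hχ0 _ hx, zero_smul]
      exact hpos χ hχ hχ0 x hx
  obtain ⟨z', hz', h⟩ := hle z.2
  exact mem_S.1 (Subtype.val_injective h ▸ hz')

end SingularVectors

section HighestWeightModules

attribute [local instance] LieRing.ofAssociativeRing

variable {K 𝔤 : Type*} [Field K] [CharZero K] [LieRing 𝔤] [LieAlgebra K 𝔤]
  [FiniteDimensional K 𝔤] [IsKilling K 𝔤] {H : LieSubalgebra K 𝔤} [H.IsCartanSubalgebra]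
  [IsTriangularizable K H 𝔤] {b : (rootSystem H).Base}
  {X Y : Type*} [AddCommGroup X] [Module K X] [LieRingModule 𝔤 X] [LieModule K 𝔤 X]
  [AddCommGroup Y] [Module K Y] [LieRingModule 𝔤 Y] [LieModule K 𝔤 Y]
  {μ : Dual K H} {m : X}

theorem IsSingular.lieSpan_le (hm : IsSingular b μ m) {S : Submodule K X} (hmS : m ∈ S)
    (hS : ∀ y ∈ negPart b, ∀ a ∈ S, ⁅y, a⁆ ∈ S) :
    (LieSubmodule.lieSpan K 𝔤 {m}).toSubmodule ≤ S := by
  let C : Set (Submodule K X) := {T | m ∈ T ∧ ∀ y ∈ negPart b, ∀ a ∈ T, ⁅y, a⁆ ∈ T}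
  have hC_mem : m ∈ sInf C := Submodule.mem_sInf.2 fun T hT => hT.1
  have hC_lie : ∀ y ∈ negPart b, ∀ a ∈ sInf C, ⁅y, a⁆ ∈ sInf C := fun y hy a ha =>
    Submodule.mem_sInf.2 fun T hT => hT.2 y hy a (Submodule.mem_sInf.1 ha T hT)
  let P : Submodule K X := sInf C ⊓ ⨅ x : 𝔤, (sInf C).comap (toEnd K 𝔤 X x)
  have mem_P {a : X} : a ∈ P ↔ a ∈ sInf C ∧ ∀ x : 𝔤, ⁅x, a⁆ ∈ sInf C := by
    simp [P, Submodule.mem_iInf]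
  have hP : P ∈ C := by
    refine ⟨mem_P.2 ⟨hC_mem, fun x => ?_⟩, fun y hy a ha => ?_⟩
    · refine (isCompl_negPart_borel b).codisjoint
        (show _ ≤ (sInf C).comap ((toEnd K 𝔤 X).toLinearMap.flip m) from
          fun y hy => hC_lie y hy m hC_mem) (fun z hz => ?_) (Submodule.mem_top (x := x))
      have hzm : ⁅z, m⁆ ∈ sInf C := hm ⟨z, hz⟩ ▸ Submodule.smul_mem _ _ hC_mem
      exact hzm
    · obtain ⟨ha, hga⟩ := mem_P.1 ha
      refine mem_P.2 ⟨hC_lie y hy a ha, fun x => ?_⟩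
      rw [leibniz_lie]
      exact add_mem (hga _) (hC_lie y hy _ (hga x))
  let T : LieSubmodule K 𝔤 X :=
    { sInf C with lie_mem := fun ha => (mem_P.1 (sInf_le hP ha)).2 _ }
  have hT : LieSubmodule.lieSpan K 𝔤 {m} ≤ T :=
    LieSubmodule.lieSpan_le.2 (Set.singleton_subset_iff.2 hC_mem)
  exact le_trans (show _ ≤ T.toSubmodule from hT) (sInf_le ⟨hmS, hS⟩)

theorem IsSingular.induction (hm : IsSingular b μ m) (hgen : LieSubmodule.lieSpan K 𝔤 {m} = ⊤)
    (S : Submodule K X) (hmS : m ∈ S) (hS : ∀ y ∈ negPart b, ∀ a ∈ S, ⁅y, a⁆ ∈ S) : S = ⊤ := by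
  rw [← top_le_iff, ← LieSubmodule.top_toSubmodule (L := 𝔤), ← hgen]
  exact hm.lieSpan_le hmS hS

theorem IsSingular.map_lie_of_map_lie_negPart (hm : IsSingular b μ m)
    (hgen : LieSubmodule.lieSpan K 𝔤 {m} = ⊤) {g : X →ₗ[K] Y}
    (hg : ∀ y ∈ negPart b, ∀ a, g ⁅y, a⁆ = ⁅y, g a⁆) (hgm : IsSingular b μ (g m)) (x : 𝔤) (a : X) :
    g ⁅x, a⁆ = ⁅x, g a⁆ := by
  let S : Submodule K X :=
    ⨅ x : 𝔤, LinearMap.ker (g ∘ₗ toEnd K 𝔤 X x - toEnd K 𝔤 Y x ∘ₗ g)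
  have mem_S {a : X} : a ∈ S ↔ ∀ x : 𝔤, g ⁅x, a⁆ = ⁅x, g a⁆ := by
    simp [S, Submodule.mem_iInf, sub_eq_zero]
  suffices hS : S = ⊤ from mem_S.1 (hS ▸ Submodule.mem_top) x
  refine hm.induction hgen S (mem_S.2 fun x => ?_) fun y hy a ha => mem_S.2 fun x => ?_
  · refine sub_eq_zero.1 ((isCompl_negPart_borel b).codisjoint
      (show _ ≤ LinearMap.ker (g ∘ₗ (toEnd K 𝔤 X).toLinearMap.flip m -
        (toEnd K 𝔤 Y).toLinearMap.flip (g m)) from fun y hy => sub_eq_zero.2 (hg y hy m))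
      (fun z hz => sub_eq_zero.2 ?_) (Submodule.mem_top (x := x)))
    have hz' : g ⁅z, m⁆ = ⁅z, g m⁆ := by rw [hm ⟨z, hz⟩, map_smul, hgm ⟨z, hz⟩]
    exact hz'
  · rw [leibniz_lie, map_add, mem_S.1 ha, hg y hy, mem_S.1 ha, hg y hy, ← leibniz_lie]

theorem IsSingular.lieSpan_le_sup_iSup_weightSpace (hm : IsSingular b μ m) :
    (LieSubmodule.lieSpan K 𝔤 {m}).toSubmodule ≤ K ∙ m ⊔
      ⨆ ψ ∈ {ψ : Dual K H | ψ ≠ μ ∧ μ - ψ ∈ rootCone b}, (weightSpace X ψ).toSubmodule := by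
  set A : Set (Dual K H) := {ψ | ψ ≠ μ ∧ μ - ψ ∈ rootCone b}
  set W : Submodule K X := ⨆ ψ ∈ A, (weightSpace X ψ).toSubmodule
  have lie_mem_W {χ ψ : Dual K H} (hχ : χ ∈ negCone b) {y : 𝔤} (hy : y ∈ rootSpace H χ)
      (hψ : μ - ψ ∈ rootCone b) {a : X} (ha : a ∈ weightSpace X ψ) : ⁅y, a⁆ ∈ W := by
    have hsum : μ - (χ + ψ) = -χ + (μ - ψ) := by abel
    have hA : χ + ψ ∈ A := by
      refine ⟨fun h => hχ.1 (neg_eq_zero.1 (eq_zero_of_add_eq_zero_of_mem_rootCone hχ.2 hψ ?_)), ?_⟩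
      · rw [← hsum, h, sub_self]
      · exact hsum ▸ add_mem hχ.2 hψ
    exact Submodule.mem_iSup_of_mem _ (Submodule.mem_iSup_of_mem hA (lie_mem_weightSpace hy ha))
  refine hm.lieSpan_le (Submodule.mem_sup_left (Submodule.mem_span_singleton_self m))
    fun y hy a ha => ?_
  refine rootSubalgebra_le
    (S := (K ∙ m ⊔ W).comap ((toEnd K 𝔤 X).toLinearMap.flip a)) (fun χ hχ y hy => ?_) hy
  suffices h : K ∙ m ⊔ W ≤ W.comap (toEnd K 𝔤 X y) from Submodule.mem_sup_right (h ha)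
  refine sup_le ((Submodule.span_singleton_le_iff_mem _ _).2 ?_)
    (iSup₂_le fun ψ hψ a ha => lie_mem_W hχ hy hψ.2 ha)
  exact lie_mem_W hχ hy ((sub_self μ).symm ▸ zero_mem _) hm.mem_weightSpace

theorem IsSingular.sub_mem_rootCone (hm : IsSingular b μ m) {ψ : Dual K H} {w : X}
    (hw : w ∈ LieSubmodule.lieSpan K 𝔤 {m}) (hwψ : w ∈ weightSpace X ψ) (hw0 : w ≠ 0) :
    μ - ψ ∈ rootCone b := by
  refine weight_mem_of_mem_iSup_weightSpace (s := {ψ | μ - ψ ∈ rootCone b}) ?_ hwψ hw0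
  refine (hm.lieSpan_le_sup_iSup_weightSpace.trans (sup_le ?_ ?_)) hw
  · exact (Submodule.span_singleton_le_iff_mem _ _).2 (Submodule.mem_iSup_of_mem μ
      (Submodule.mem_iSup_of_mem (by simp) hm.mem_weightSpace))
  · exact biSup_mono fun ψ hψ => hψ.2

theorem IsSingular.mem_span_singleton (hm : IsSingular b μ m) {w : X}
    (hw : w ∈ LieSubmodule.lieSpan K 𝔤 {m}) (hwμ : w ∈ weightSpace X μ) : w ∈ K ∙ m := by
  obtain ⟨u, hu, w', hw', rfl⟩ := Submodule.mem_sup.1 (hm.lieSpan_le_sup_iSup_weightSpace hw)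
  have hw'μ : w' ∈ weightSpace X μ := by
    obtain ⟨c, rfl⟩ := Submodule.mem_span_singleton.1 hu
    exact (add_mem_cancel_left (SMulMemClass.smul_mem c hm.mem_weightSpace)).1 hwμ
  have hw'0 : w' = 0 := by
    by_contra h
    exact (weight_mem_of_mem_iSup_weightSpace hw' hw'μ h).1 rfl
  rwa [hw'0, add_zero]

end HighestWeightModules

section RootVectors

variable {K 𝔤 : Type*} [Field K] [CharZero K] [LieRing 𝔤] [LieAlgebra K 𝔤]
  [FiniteDimensional K 𝔤] [IsKilling K 𝔤] {H : LieSubalgebra K 𝔤} [H.IsCartanSubalgebra]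
  [IsTriangularizable K H 𝔤]

theorem exists_isSl2Triple_coroot (i : H.root) : ∃ e f : 𝔤,
    IsSl2Triple ((rootSystem H).coroot i : 𝔤) e f ∧ e ∈ rootSpace H ((rootSystem H).root i) ∧
      f ∈ rootSpace H ⇑(-(rootSystem H).root i) := by
  have hi : i.1.IsNonZero := (Finset.mem_filter.1 i.2).2
  obtain ⟨h, e, f, t, he, hf⟩ := exists_isSl2Triple_of_weight_isNonZero hi
  exact ⟨e, f, by simpa using t.h_eq_coroot hi he hf ▸ t, he, hf⟩

/-- A nonzero vector in the root space of the root `i`, normalised together with `rootF i` so that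
`⁅rootE i, rootF i⁆` is the coroot. -/
noncomputable def rootE (i : H.root) : 𝔤 := (exists_isSl2Triple_coroot i).choose

/-- A nonzero vector in the root space of the opposite of the root `i`, normalised together with
`rootE i` so that `⁅rootE i, rootF i⁆` is the coroot. -/
noncomputable def rootF (i : H.root) : 𝔤 := (exists_isSl2Triple_coroot i).choose_spec.choose

theorem isSl2Triple_rootE_rootF (i : H.root) :
    IsSl2Triple ((rootSystem H).coroot i : 𝔤) (rootE i) (rootF i) :=
  (exists_isSl2Triple_coroot i).choose_spec.choose_spec.1

theorem rootE_mem (i : H.root) : rootE i ∈ rootSpace H ((rootSystem H).root i) :=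
  (exists_isSl2Triple_coroot i).choose_spec.choose_spec.2.1

theorem rootF_mem (i : H.root) : rootF i ∈ rootSpace H ⇑(-(rootSystem H).root i) :=
  (exists_isSl2Triple_coroot i).choose_spec.choose_spec.2.2

theorem exists_smul_rootE_eq {i : H.root} {x : 𝔤} (hx : x ∈ rootSpace H ((rootSystem H).root i)) :
    ∃ c : K, c • rootE i = x := by
  obtain ⟨c, hc⟩ := (finrank_eq_one_iff_of_nonzero' ⟨rootE i, rootE_mem i⟩
    fun h =>
      (isSl2Triple_rootE_rootF i).e_ne_zero (congrArg Subtype.val h)).1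
      (finrank_rootSpace_eq_one i.1 (Finset.mem_filter.1 i.2).2) ⟨x, hx⟩
  exact ⟨c, congrArg Subtype.val hc⟩

end RootVectors

section IntegrableModules

attribute [local instance] LieRing.ofAssociativeRing

variable {K 𝔤 : Type*} [Field K] [CharZero K] [LieRing 𝔤] [LieAlgebra K 𝔤]
  [FiniteDimensional K 𝔤] [IsKilling K 𝔤] {H : LieSubalgebra K 𝔤} [H.IsCartanSubalgebra]
  [IsTriangularizable K H 𝔤] {b : (rootSystem H).Base}
  {X : Type*} [AddCommGroup X] [Module K X] [LieRingModule 𝔤 X] [LieModule K 𝔤 X]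
  {μ : Dual K H} {m : X}

variable (b) in
/-- The values of `μ` on the simple coroots are natural numbers. -/
def IsDominant (μ : Dual K H) : Prop :=
  ∀ i ∈ b.support, ∃ n : ℕ, μ ((rootSystem H).coroot i) = n

theorem IsSingular.hasPrimitiveVectorWith (hm : IsSingular b μ m) (hm0 : m ≠ 0) {i : H.root}
    (hi : i ∈ b.support) :
    (isSl2Triple_rootE_rootF i).HasPrimitiveVectorWith m (μ ((rootSystem H).coroot i)) where
  ne_zero := hm0
  lie_h := (LieModule.mem_weightSpace _ _).1 hm.mem_weightSpace _
  lie_e := hm.lie_eq_zero (root_mem_rootCone_of_mem_support hi) ((rootSystem H).ne_zero i)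
    (rootE_mem i)

theorem IsSingular.isDominant_of_exists_pow_rootF_eq_zero (hm : IsSingular b μ m) (hm0 : m ≠ 0)
    (hf : ∀ i ∈ b.support, ∃ k, (toEnd K 𝔤 X (rootF i) ^ k) m = 0) : IsDominant b μ := by
  intro i hi
  obtain ⟨n, hn, hn'⟩ := Nat.exists_not_and_succ_of_not_zero_of_exists hm0 (hf i hi)
  have h := (hm.hasPrimitiveVectorWith hm0 hi).lie_e_pow_succ_toEnd_f n
  rw [hn', lie_zero, eq_comm, smul_eq_zero_iff_left hn, mul_eq_zero, sub_eq_zero] at h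
  exact ⟨n, h.resolve_left (Nat.cast_add_one_ne_zero n)⟩

theorem IsSingular.isDominant [FiniteDimensional K X] (hm : IsSingular b μ m) (hm0 : m ≠ 0) :
    IsDominant b μ := fun _ hi => (hm.hasPrimitiveVectorWith hm0 hi).exists_nat

theorem IsSingular.pow_rootF_eq_zero [FiniteDimensional K X] (hm : IsSingular b μ m) {i : H.root}
    (hi : i ∈ b.support) {k : ℕ} (hk : μ ((rootSystem H).coroot i) = k) :
    (toEnd K 𝔤 X (rootF i) ^ (k + 1)) m = 0 := by
  by_cases hm0 : m = 0
  · rw [hm0, map_zero]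
  · exact (hm.hasPrimitiveVectorWith hm0 hi).pow_toEnd_f_eq_zero_of_eq_nat hk

theorem IsSingular.exists_pow_rootF_eq_zero (hm : IsSingular b μ m)
    (hgen : LieSubmodule.lieSpan K 𝔤 {m} = ⊤) {i : H.root}
    (hf : ∃ k, (toEnd K 𝔤 X (rootF i) ^ k) m = 0) (x : X) :
    ∃ k, (toEnd K 𝔤 X (rootF i) ^ k) x = 0 := by
  have mem_iff {Z : Type _} [AddCommGroup Z] [Module K Z] [LieRingModule 𝔤 Z] [LieModule K 𝔤 Z]
      (z : Z) : z ∈ (toEnd K 𝔤 Z (rootF i)).maxGenEigenspace 0 ↔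
        ∃ k, (toEnd K 𝔤 Z (rootF i) ^ k) z = 0 := by
    simp [Module.End.mem_maxGenEigenspace]
  have mem_adjoint (y : 𝔤) : y ∈ (toEnd K 𝔤 𝔤 (rootF i)).maxGenEigenspace 0 := by
    obtain ⟨k, hk⟩ := isNilpotent_ad_of_mem_rootSpace H
      (by simp) (rootF_mem i)
    refine Module.End.mem_maxGenEigenspace _ _ _ |>.2 ⟨k, ?_⟩
    rw [zero_smul, sub_zero]
    exact LinearMap.congr_fun hk y
  suffices h : (toEnd K 𝔤 X (rootF i)).maxGenEigenspace 0 = ⊤ from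
    (mem_iff x).1 (h ▸ Submodule.mem_top)
  refine hm.induction hgen _ ((mem_iff m).2 hf) fun y _ a ha => ?_
  simpa using lie_mem_maxGenEigenspace_toEnd (mem_adjoint y) ha

theorem pow_rootF_mem_weightSpace (hm : m ∈ weightSpace X μ) (i : H.root) (k : ℕ) :
    (toEnd K 𝔤 X (rootF i) ^ k) m ∈ weightSpace X ⇑(μ - k • (rootSystem H).root i) := by
  induction k with
  | zero => simpa using hm
  | succ k ih =>
    rw [pow_succ', Module.End.mul_apply, toEnd_apply_apply,
      show μ - (k + 1) • (rootSystem H).root i =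
        -(rootSystem H).root i + (μ - k • (rootSystem H).root i) by rw [succ_nsmul]; abel]
    exact lie_mem_weightSpace (rootF_mem i) ih

theorem exists_root_eq_of_mem_rootSpace {χ : Dual K H} (hχ0 : χ ≠ 0) {x : 𝔤}
    (hx : x ∈ rootSpace H χ) (hx0 : x ≠ 0) : ∃ i : H.root, (rootSystem H).root i = χ :=
  let ψ : Weight K H 𝔤 := ⟨χ, fun h => hx0 ((LieSubmodule.mem_bot x).1 (h.le hx))⟩
  ⟨⟨ψ, Finset.mem_filter.2 ⟨Finset.mem_univ _, fun h => hχ0 (DFunLike.coe_injective h)⟩⟩, rfl⟩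

theorem IsSingular.pow_rootF (hm : IsSingular b μ m) {i : H.root} (hi : i ∈ b.support) {k : ℕ}
    (hk : μ ((rootSystem H).coroot i) = k) :
    IsSingular b (μ - (k + 1) • (rootSystem H).root i) ((toEnd K 𝔤 X (rootF i) ^ (k + 1)) m) := by
  set u := (toEnd K 𝔤 X (rootF i) ^ (k + 1)) m
  have hu : u ∈ weightSpace X ⇑(μ - (k + 1) • (rootSystem H).root i) :=
    pow_rootF_mem_weightSpace hm.mem_weightSpace i (k + 1)
  refine isSingular_iff.2 ⟨hu, fun χ hχ hχ0 x hx => by_contra fun hxu => ?_⟩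
  have hx0 : x ≠ 0 := fun h => hxu (by rw [h, zero_lie])
  obtain ⟨j, rfl⟩ := exists_root_eq_of_mem_rootSpace hχ0 hx hx0
  have hspan : ⁅x, u⁆ ∈ LieSubmodule.lieSpan K 𝔤 {m} :=
    LieSubmodule.lie_mem _ (Module.End.pow_apply_mem_of_forall_mem
      (p := (LieSubmodule.lieSpan K 𝔤 {m}).toSubmodule) _ (fun _ ha => LieSubmodule.lie_mem _ ha) _
      (LieSubmodule.subset_lieSpan rfl))
  have hν := hm.sub_mem_rootCone hspan (lie_mem_weightSpace hx hu) hxu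
  have hj : (rootSystem H).root j = (rootSystem H).root i :=
    root_eq_of_root_add_eq_nsmul hi hχ hν (k := k + 1) (by abel)
  obtain ⟨c, rfl⟩ := exists_smul_rootE_eq (hj ▸ hx)
  have hm0 : m ≠ 0 := fun h => hxu (by simp only [u, h, map_zero, lie_zero])
  refine hxu ?_
  rw [smul_lie, (hm.hasPrimitiveVectorWith hm0 hi).lie_e_pow_succ_toEnd_f k, hk, sub_self, mul_zero,
    zero_smul, smul_zero]

end IntegrableModules

section KillingFrame

variable {R 𝔤 X ι : Type*} [CommRing R] [LieRing 𝔤] [LieAlgebra R 𝔤] [AddCommGroup X] [Module R X]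
  [LieRingModule 𝔤 X] [LieModule R 𝔤 X] [Fintype ι] {x y : ι → 𝔤}

variable (R) in
/-- The families `x` and `y` represent the canonical element of `𝔤 ⊗ 𝔤`: with respect to the
Killing form, pairing with `y` gives coefficients with respect to `x`. -/
def IsKillingFrame (x y : ι → 𝔤) : Prop :=
  ∀ z, ∑ a, killingForm R 𝔤 z (y a) • x a = z

theorem IsKillingFrame.symm [IsKilling R 𝔤] (hxy : IsKillingFrame R x y) :
    IsKillingFrame R y x := fun z => by
  refine sub_eq_zero.1 ((LinearMap.ker_eq_bot'.1 (ker_killingForm_eq_bot R 𝔤)) _ ?_)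
  ext w
  have hw : killingForm R 𝔤 z (∑ a, killingForm R 𝔤 w (y a) • x a) = killingForm R 𝔤 z w := by
    rw [hxy w]
  simp only [map_sum, map_smul, smul_eq_mul] at hw
  simp only [map_sub, map_sum, map_smul, LinearMap.sub_apply, LinearMap.sum_apply,
    LinearMap.smul_apply, LinearMap.zero_apply, smul_eq_mul, sub_eq_zero, ← hw]
  exact Finset.sum_congr rfl fun a _ => by rw [traceForm_comm R 𝔤 𝔤 w, mul_comm]

variable (R X) in
/-- The operator `∑ xₐ yₐ`; for a frame of the Killing form this is the Casimir operator. -/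
def casimirOp (x y : ι → 𝔤) : X →ₗ[R] X :=
  ∑ a, toEnd R 𝔤 X (x a) ∘ₗ toEnd R 𝔤 X (y a)

theorem casimirOp_apply (u : X) : casimirOp R X x y u = ∑ a, ⁅x a, ⁅y a, u⁆⁆ := by
  simp [casimirOp]

theorem IsKillingFrame.casimirOp_lie [IsKilling R 𝔤] (hxy : IsKillingFrame R x y) (z : 𝔤) (u : X) :
    casimirOp R X x y ⁅z, u⁆ = ⁅z, casimirOp R X x y u⁆ := by
  have hx (a : ι) : ⁅⁅z, x a⁆, ⁅y a, u⁆⁆ =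
      ∑ c, killingForm R 𝔤 ⁅z, x a⁆ (y c) • ⁅x c, ⁅y a, u⁆⁆ := by
    conv_lhs => rw [← hxy ⁅z, x a⁆]
    simp only [sum_lie, smul_lie]
  have hy (a : ι) : ⁅x a, ⁅⁅z, y a⁆, u⁆⁆ =
      ∑ c, killingForm R 𝔤 ⁅z, y a⁆ (x c) • ⁅x a, ⁅y c, u⁆⁆ := by
    conv_lhs => rw [← hxy.symm ⁅z, y a⁆]
    simp only [sum_lie, smul_lie, lie_sum, lie_smul]
  have skew (a c : ι) :
      killingForm R 𝔤 ⁅z, x a⁆ (y c) = -killingForm R 𝔤 ⁅z, y c⁆ (x a) := by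
    rw [← lie_skew, map_neg, LinearMap.neg_apply, traceForm_apply_lie_apply, traceForm_comm]
  have cancel : ∑ a, ⁅⁅z, x a⁆, ⁅y a, u⁆⁆ + ∑ a, ⁅x a, ⁅⁅z, y a⁆, u⁆⁆ = 0 := by
    simp only [hx, hy, skew, neg_smul, Finset.sum_neg_distrib]
    rw [Finset.sum_comm, neg_add_cancel]
  have leibniz (a : ι) : ⁅z, ⁅x a, ⁅y a, u⁆⁆⁆ =
      ⁅⁅z, x a⁆, ⁅y a, u⁆⁆ + ⁅x a, ⁅⁅z, y a⁆, u⁆⁆ + ⁅x a, ⁅y a, ⁅z, u⁆⁆⁆ := by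
    rw [leibniz_lie, leibniz_lie z (y a), lie_add, add_assoc]
  simp only [casimirOp_apply, lie_sum, leibniz, Finset.sum_add_distrib, cancel, zero_add]

end KillingFrame

section CartanFrame

variable {K 𝔤 : Type*} [Field K] [LieRing 𝔤] [LieAlgebra K 𝔤]
  [FiniteDimensional K 𝔤] [IsKilling K 𝔤] {H : LieSubalgebra K 𝔤} [H.IsCartanSubalgebra]

theorem killingForm_cartanEquivDual_symm (h : H) (χ : Dual K H) :
    killingForm K 𝔤 h ((cartanEquivDual H).symm χ : H) = χ h :=
  (traceForm_comm K 𝔤 𝔤 _ _).trans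
    (LinearMap.congr_fun ((cartanEquivDual H).apply_symm_apply χ) h)

theorem apply_cartanEquivDual_symm_comm (χ ψ : Dual K H) :
    χ ((cartanEquivDual H).symm ψ) = ψ ((cartanEquivDual H).symm χ) := by
  rw [← killingForm_cartanEquivDual_symm, traceForm_comm, killingForm_cartanEquivDual_symm]

variable [CharZero K] [IsTriangularizable K H 𝔤]

theorem lie_rootE_rootF (i : H.root) :
    ⁅rootE i, rootF i⁆ = killingForm K 𝔤 (rootE i) (rootF i) •
      (((cartanEquivDual H).symm ((rootSystem H).root i) : H) : 𝔤) :=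
  lie_eq_killingForm_smul_of_mem_rootSpace_of_mem_rootSpace_neg (α := i.1) (rootE_mem i)
    (rootF_mem i)

theorem killingForm_rootE_rootF_ne_zero (i : H.root) :
    killingForm K 𝔤 (rootE i) (rootF i) ≠ 0 := fun h => by
  have hef := lie_rootE_rootF i
  rw [h, zero_smul, (isSl2Triple_rootE_rootF i).lie_e_f] at hef
  exact (isSl2Triple_rootE_rootF i).h_ne_zero hef

theorem killingForm_cartan_rootF (h : H) (i : H.root) : killingForm K 𝔤 h (rootF i) = 0 :=
  killingForm_cartan_eq_zero_of_mem_rootSpace (neg_ne_zero.2 ((rootSystem H).ne_zero i)) h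
    (rootF_mem i)

theorem killingForm_rootE_cartan (i : H.root) (h : H) : killingForm K 𝔤 (rootE i) h = 0 :=
  (traceForm_comm K 𝔤 𝔤 _ _).trans
    (killingForm_cartan_eq_zero_of_mem_rootSpace ((rootSystem H).ne_zero i) h (rootE_mem i))

theorem killingForm_rootE_rootF_eq_zero {i j : H.root} (hij : i ≠ j) :
    killingForm K 𝔤 (rootE i) (rootF j) = 0 := by
  refine LieAlgebra.killingForm_apply_eq_zero_of_mem_rootSpace_of_add_ne_zero K 𝔤 H
    (rootE_mem i) (rootF_mem j) fun h => hij ((rootSystem H).root.injective ?_)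
  exact add_neg_eq_zero.1 (DFunLike.coe_injective
    (h : ⇑((rootSystem H).root i + -(rootSystem H).root j) = ⇑(0 : Dual K H)))

variable (H) in
/-- A basis of the Cartan subalgebra together with root vectors. -/
noncomputable def cartanFrame : Fin (finrank K H) ⊕ H.root → 𝔤 :=
  Sum.elim (fun a => (finBasis K H a : 𝔤)) rootE

variable (H) in
/-- The family dual to `cartanFrame` under the Killing form. -/
noncomputable def cartanCoframe : Fin (finrank K H) ⊕ H.root → 𝔤 :=
  Sum.elim (fun a => ((cartanEquivDual H).symm ((finBasis K H).coord a) : 𝔤))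
    fun i => (killingForm K 𝔤 (rootE i) (rootF i))⁻¹ • rootF i

theorem cartan_rootE_induction {S : Submodule K 𝔤} (hH : ∀ h : H, (h : 𝔤) ∈ S)
    (hE : ∀ i : H.root, rootE i ∈ S) : S = ⊤ := by
  rw [← top_le_iff, ← LieSubmodule.top_toSubmodule (L := H), ← iSup_genWeightSpace_eq_top' K H 𝔤,
    LieSubmodule.iSup_toSubmodule]
  refine iSup_le fun χ x hx => ?_
  by_cases hχ : χ.IsZero
  · have hχ : ⇑χ = 0 := hχ
    rw [hχ] at hx
    exact hH ⟨x, mem_rootSpace_zero_iff.1 hx⟩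
  · obtain ⟨c, rfl⟩ := exists_smul_rootE_eq
      (i := ⟨χ, Finset.mem_filter.2 ⟨Finset.mem_univ _, hχ⟩⟩) hx
    exact S.smul_mem c (hE _)

variable (H) in
theorem isKillingFrame_cartanFrame : IsKillingFrame K (cartanFrame H) (cartanCoframe H) := by
  let S : Submodule K 𝔤 := LinearMap.eqLocus
    (∑ a, ((killingForm K 𝔤).flip (cartanCoframe H a)).smulRight (cartanFrame H a)) LinearMap.id
  have mem_S {z : 𝔤} : z ∈ S ↔
      ∑ a, killingForm K 𝔤 z (cartanCoframe H a) • cartanFrame H a = z := by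
    simp [S, LinearMap.mem_eqLocus]
  have hS : S = ⊤ := by
    refine cartan_rootE_induction (H := H) (fun h => mem_S.2 ?_) fun i => mem_S.2 ?_
    · have hsum : ∑ a, (finBasis K H).repr h a • (finBasis K H a : 𝔤) = h :=
        (map_sum H.toSubmodule.subtype _ _).symm.trans
          (congrArg H.toSubmodule.subtype ((finBasis K H).sum_repr h))
      simpa [cartanFrame, cartanCoframe, killingForm_cartan_rootF,
        killingForm_cartanEquivDual_symm] using hsum
    · have hsum : ∑ j : H.root, ((killingForm K 𝔤 (rootE j) (rootF j))⁻¹ *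
          killingForm K 𝔤 (rootE i) (rootF j)) • rootE j = rootE i := by
        rw [Finset.sum_eq_single i (fun j _ hj => by
            rw [killingForm_rootE_rootF_eq_zero hj.symm, mul_zero, zero_smul])
          (fun h => (h (Finset.mem_univ i)).elim),
          inv_mul_cancel₀ (killingForm_rootE_rootF_ne_zero i), one_smul]
      simpa [cartanFrame, cartanCoframe, killingForm_rootE_cartan] using hsum
  exact fun z => mem_S.1 (hS ▸ Submodule.mem_top)

end CartanFrame

section CasimirValue

variable {K 𝔤 : Type*} [Field K] [CharZero K] [LieRing 𝔤] [LieAlgebra K 𝔤]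
  [FiniteDimensional K 𝔤] [IsKilling K 𝔤] {H : LieSubalgebra K 𝔤} [H.IsCartanSubalgebra]
  [IsTriangularizable K H 𝔤] {b : (rootSystem H).Base}
  {X : Type*} [AddCommGroup X] [Module K X] [LieRingModule 𝔤 X] [LieModule K 𝔤 X]
  {μ ψ : Dual K H} {m w : X}

theorem IsSingular.casimirOp_apply (hm : IsSingular b μ m) :
    casimirOp K X (cartanFrame H) (cartanCoframe H) m =
      (μ + twoRho b) ((cartanEquivDual H).symm μ) • m := by
  have lie_h (h : H) : ⁅(h : 𝔤), m⁆ = μ h • m :=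
    (LieModule.mem_weightSpace _ _).1 hm.mem_weightSpace h
  have cartan_part : ∑ a, ⁅(finBasis K H a : 𝔤),
      ⁅((cartanEquivDual H).symm ((finBasis K H).coord a) : 𝔤), m⁆⁆ =
        μ ((cartanEquivDual H).symm μ) • m := by
    have expand := congrArg (cartanEquivDual H).symm ((finBasis K H).sum_dual_apply_smul_coord μ)
    simp only [lie_h, lie_smul, smul_smul, ← Finset.sum_smul, ← expand, map_sum, map_smul,
      smul_eq_mul, mul_comm]
  have root_part (i : H.root) : ⁅rootE i, ⁅(killingForm K 𝔤 (rootE i) (rootF i))⁻¹ • rootF i, m⁆⁆ =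
      if b.IsPos i then (rootSystem H).root i ((cartanEquivDual H).symm μ) • m else 0 := by
    split_ifs with hi
    · rw [smul_lie, lie_smul, leibniz_lie, hm.lie_eq_zero (root_mem_rootCone_of_isPos hi)
        ((rootSystem H).ne_zero i) (rootE_mem i), lie_zero, add_zero, lie_rootE_rootF, smul_lie,
        inv_smul_smul₀ (killingForm_rootE_rootF_ne_zero i), lie_h, apply_cartanEquivDual_symm_comm]
    · rw [smul_lie, hm.lie_eq_zero (neg_root_mem_rootCone_of_not_isPos hi)
        (neg_ne_zero.2 ((rootSystem H).ne_zero i)) (rootF_mem i), smul_zero, lie_zero]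
  rw [AdjPaper.casimirOp_apply, Fintype.sum_sum_type]
  simp only [cartanFrame, cartanCoframe, Sum.elim_inl, Sum.elim_inr, cartan_part, root_part,
    ← Finset.sum_filter, ← Finset.sum_smul, ← LinearMap.sum_apply]
  rw [← twoRho, ← add_smul, LinearMap.add_apply]

theorem IsSingular.casimirOp_eq_smul (hm : IsSingular b μ m)
    (hgen : LieSubmodule.lieSpan K 𝔤 {m} = ⊤) (x : X) :
    casimirOp K X (cartanFrame H) (cartanCoframe H) x =
      (μ + twoRho b) ((cartanEquivDual H).symm μ) • x := by
  let S : LieSubmodule K 𝔤 X :=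
    { LinearMap.eqLocus (casimirOp K X (cartanFrame H) (cartanCoframe H))
        ((μ + twoRho b) ((cartanEquivDual H).symm μ) • LinearMap.id) with
      lie_mem {z u} hu := by
        have hu : casimirOp K X (cartanFrame H) (cartanCoframe H) u =
          (μ + twoRho b) ((cartanEquivDual H).symm μ) • u := hu
        exact ((isKillingFrame_cartanFrame H).casimirOp_lie z u).trans (hu ▸ lie_smul _ _ _) }
  have hS : LieSubmodule.lieSpan K 𝔤 {m} ≤ S :=
    LieSubmodule.lieSpan_le.2 (Set.singleton_subset_iff.2 hm.casimirOp_apply)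
  exact hS (hgen ▸ LieSubmodule.mem_top x)

theorem IsSingular.casimir_eq (hm : IsSingular b μ m) (hgen : LieSubmodule.lieSpan K 𝔤 {m} = ⊤)
    (hw : IsSingular b ψ w) (hw0 : w ≠ 0) : (ψ + twoRho b) ((cartanEquivDual H).symm ψ) =
      (μ + twoRho b) ((cartanEquivDual H).symm μ) :=
  smul_left_injective K hw0 (hw.casimirOp_apply.symm.trans (hm.casimirOp_eq_smul hgen w))

theorem exists_killingForm_coroot_self_eq_natCast (i : H.root) : ∃ N : ℕ,
    killingForm K 𝔤 ((rootSystem H).coroot i : H) ((rootSystem H).coroot i : H) = N := by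
  refine ⟨∑ j : H.root, (chainBotCoeff i.1 j.1 - chainTopCoeff i.1 j.1 : ℤ).natAbs ^ 2, ?_⟩
  have hsum := LinearMap.congr_fun₂ (corootForm_rootSystem_eq_killing (H := H))
    ((rootSystem H).coroot i) ((rootSystem H).coroot i)
  rw [RootPairing.corootForm_apply_apply] at hsum
  refine hsum.symm.trans ?_
  rw [Nat.cast_sum]
  refine Finset.sum_congr rfl fun j _ => ?_
  have hj : (rootSystem H).root' j ((rootSystem H).coroot i) =
      (chainBotCoeff i.1 j.1 - chainTopCoeff i.1 j.1 : ℤ) := apply_coroot_eq_cast i.1 j.1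
  rw [hj, ← pow_two, ← Int.cast_natCast (R := K), Int.natCast_pow, Int.natAbs_sq, Int.cast_pow]

theorem exists_nnrat_smul_coroot_eq (i : H.root) : ∃ q : ℚ≥0, q ≠ 0 ∧
    (cartanEquivDual H).symm ((rootSystem H).root i) = (q : K) • (rootSystem H).coroot i := by
  set t := (cartanEquivDual H).symm ((rootSystem H).root i)
  set c := 2 * (i.1 t)⁻¹
  have hc : c ≠ 0 := mul_ne_zero two_ne_zero
    (inv_ne_zero (root_apply_cartanEquivDual_symm_ne_zero (Finset.mem_filter.1 i.2).2))
  have coroot_eq : (rootSystem H).coroot i = c • t := by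
    rw [mul_smul, ← Nat.cast_ofNat, Nat.cast_smul_eq_nsmul]
    rfl
  obtain ⟨N, hN⟩ := exists_killingForm_coroot_self_eq_natCast i
  have hcN : 2 * c = N := by
    rw [← hN]
    nth_rw 2 [coroot_eq]
    have h2 : (rootSystem H).root i ((rootSystem H).coroot i) = 2 :=
      (rootSystem H).root_coroot_two i
    rw [H.coe_smul, map_smul, killingForm_cartanEquivDual_symm, h2, smul_eq_mul,
      mul_comm]
  have hN0 : N ≠ 0 := fun h => mul_ne_zero two_ne_zero hc (by rw [hcN, h, Nat.cast_zero])
  refine ⟨2 / N, div_ne_zero two_ne_zero (Nat.cast_ne_zero.2 hN0), ?_⟩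
  rw [coroot_eq, smul_smul, NNRat.cast_div, NNRat.cast_natCast, ← hcN, NNRat.cast_ofNat,
    div_mul_eq_mul_div, div_self (mul_ne_zero two_ne_zero hc), one_smul]

/-- The values of the Casimir operator at weights `μ` and `μ - ν` differ by
`⟨2μ - ν + 2ρ, ν⟩`, which is positive on nonzero `ν` in the cone when both weights are dominant. -/
theorem eq_of_casimir_eq (hμ : IsDominant b μ) (hψ : IsDominant b ψ) (h : μ - ψ ∈ rootCone b)
    (heq : (μ + twoRho b) ((cartanEquivDual H).symm μ) =
      (ψ + twoRho b) ((cartanEquivDual H).symm ψ)) : ψ = μ := by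
  let φ : Dual K H →ₗ[K] K := (μ + ψ + twoRho b) ∘ₗ (cartanEquivDual H).symm.toLinearMap
  have hφ (i : H.root) (hi : i ∈ b.support) :
      ∃ q : ℚ≥0, q ≠ 0 ∧ φ ((rootSystem H).root i) = q := by
    obtain ⟨q, hq0, hq⟩ := exists_nnrat_smul_coroot_eq i
    obtain ⟨k, hk⟩ := hμ i hi
    obtain ⟨l, hl⟩ := hψ i hi
    have h2 : twoRho b ((rootSystem H).coroot i) = 2 := coroot'_twoRho hi
    refine ⟨q * (k + l + 2), mul_ne_zero hq0 (by positivity), ?_⟩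
    rw [LinearMap.comp_apply, LinearEquiv.coe_coe, hq, map_smul, LinearMap.add_apply,
      LinearMap.add_apply, hk, hl, h2]
    push_cast
    rfl
  refine (sub_eq_zero.1 (eq_zero_of_mem_closure_of_map_eq_zero (φ := φ) ?_ ?_ h ?_)).symm
  · rintro _ ⟨i, hi, rfl⟩
    exact (hφ i hi).imp fun _ hq => hq.2
  · rintro _ ⟨i, hi, rfl⟩ h0
    obtain ⟨q, hq0, hq⟩ := hφ i hi
    exact hq0 (NNRat.cast_eq_zero.1 (hq.symm.trans h0))
  · have hcomm := apply_cartanEquivDual_symm_comm μ ψ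
    simp only [LinearMap.add_apply] at heq
    simp only [φ, LinearMap.comp_apply, LinearEquiv.coe_coe, map_sub, LinearMap.add_apply]
    linear_combination heq - hcomm

end CasimirValue

theorem lieSpan_map_eq_top {R 𝔤 X Y : Type*} [CommRing R] [LieRing 𝔤] [AddCommGroup X]
    [Module R X] [LieRingModule 𝔤 X] [AddCommGroup Y] [Module R Y] [LieRingModule 𝔤 Y] {m : X}
    {g : X →ₗ⁅R,𝔤⁆ Y} (hg : Function.Surjective g) (hm : LieSubmodule.lieSpan R 𝔤 {m} = ⊤) :
    LieSubmodule.lieSpan R 𝔤 {g m} = ⊤ := by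
  have hle : LieSubmodule.lieSpan R 𝔤 {m} ≤ (LieSubmodule.lieSpan R 𝔤 {g m}).comap g :=
    LieSubmodule.lieSpan_le.2 (Set.singleton_subset_iff.2 (LieSubmodule.subset_lieSpan rfl))
  refine eq_top_iff.2 fun y _ => ?_
  obtain ⟨a, rfl⟩ := hg y
  exact hle (hm ▸ LieSubmodule.mem_top a)

section Integrable

attribute [local instance] LieRing.ofAssociativeRing

variable {K 𝔤 : Type*} [Field K] [CharZero K] [LieRing 𝔤] [LieAlgebra K 𝔤]
  [FiniteDimensional K 𝔤] [IsKilling K 𝔤] {H : LieSubalgebra K 𝔤} [H.IsCartanSubalgebra]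
  [IsTriangularizable K H 𝔤] {b : (rootSystem H).Base}
  {X Y : Type*} [AddCommGroup X] [Module K X] [LieRingModule 𝔤 X] [LieModule K 𝔤 X]
  [AddCommGroup Y] [Module K Y] [LieRingModule 𝔤 Y] [LieModule K 𝔤 Y]
  {μ : Dual K H} {m : X}

theorem IsSingular.iSup_weightSpace_eq_top (hm : IsSingular b μ m)
    (hgen : LieSubmodule.lieSpan K 𝔤 {m} = ⊤) :
    ⨆ ψ : Dual K H, (weightSpace X ψ : Submodule K X) = ⊤ := by
  rw [← top_le_iff, ← LieSubmodule.top_toSubmodule (L := 𝔤), ← hgen]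
  refine hm.lieSpan_le_sup_iSup_weightSpace.trans (sup_le ?_ (iSup₂_le_iSup _ _))
  exact (Submodule.span_singleton_le_iff_mem _ _).2
    (Submodule.mem_iSup_of_mem μ hm.mem_weightSpace)

/-- A weight vector of the submodule whose weight is as close as possible to `μ` is singular. -/
theorem IsSingular.exists_isSingular_of_ne_bot (hm : IsSingular b μ m)
    (hgen : LieSubmodule.lieSpan K 𝔤 {m} = ⊤) {S : LieSubmodule K 𝔤 X} (hS : S ≠ ⊥) :
    ∃ (ψ : Dual K H), ∃ w ∈ S, w ≠ 0 ∧ IsSingular b ψ w := by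
  have sub_mem {ψ : Dual K H} {w : X} (hwψ : w ∈ weightSpace X ψ) (hw0 : w ≠ 0) :
      μ - ψ ∈ rootCone b := hm.sub_mem_rootCone (hgen ▸ LieSubmodule.mem_top w) hwψ hw0
  have exists_depth : ∃ (n : ℕ) (ψ : Dual K H) (w : X),
      w ∈ S ∧ w ∈ weightSpace X ψ ∧ w ≠ 0 ∧ (μ - ψ) (rhoCheck b) = 2 * n := by
    let S' : LieSubmodule K H X := { S with lie_mem := fun {h} _ hx => S.lie_mem (x := (h : 𝔤)) hx }
    obtain ⟨ψ, w, hwS, hwψ, hw0⟩ := exists_mem_weightSpace_of_ne_bot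
      (hm.iSup_weightSpace_eq_top hgen) (S := S')
      fun h => hS (SetLike.coe_injective (congrArg SetLike.coe h :))
    obtain ⟨n, hn⟩ := apply_rhoCheck_of_mem_rootCone (sub_mem hwψ hw0)
    exact ⟨n, ψ, w, hwS, hwψ, hw0, hn⟩
  obtain ⟨ψ, w, hwS, hwψ, hw0, hn⟩ := Nat.find_spec exists_depth
  refine ⟨ψ, w, hwS, hw0, isSingular_iff.2 ⟨hwψ, fun χ hχ hχ0 x hx => ?_⟩⟩
  by_contra hxw
  have hxwψ := lie_mem_weightSpace hx hwψ
  obtain ⟨k, hk⟩ := apply_rhoCheck_of_mem_rootCone hχ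
  obtain ⟨l, hl⟩ := apply_rhoCheck_of_mem_rootCone (sub_mem hxwψ hxw)
  have hlk : 2 * ((l + k : ℕ) : K) = 2 * Nat.find exists_depth := by
    rw [← hn, Nat.cast_add, mul_add, ← hl, ← hk, ← LinearMap.add_apply]
    congr 1
    abel
  have hk0 : k ≠ 0 := fun h => hχ0 (eq_zero_of_mem_rootCone_of_apply_rhoCheck hχ (by simp [hk, h]))
  have hlk := Nat.cast_injective (mul_left_cancel₀ two_ne_zero hlk)
  exact Nat.find_min exists_depth (m := l) (by omega)
    ⟨χ + ψ, ⁅x, w⁆, S.lie_mem hwS, hxwψ, hxw, hl⟩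

/-- A singular vector in the submodule has dominant weight and the same Casimir eigenvalue as
`m`, hence weight `μ`. -/
theorem IsSingular.mem_of_ne_bot (hm : IsSingular b μ m) (hm0 : m ≠ 0)
    (hgen : LieSubmodule.lieSpan K 𝔤 {m} = ⊤)
    (hf : ∀ i ∈ b.support, ∃ k, (toEnd K 𝔤 X (rootF i) ^ k) m = 0) {S : LieSubmodule K 𝔤 X}
    (hS : S ≠ ⊥) : m ∈ S := by
  obtain ⟨ψ, w, hwS, hw0, hw⟩ := hm.exists_isSingular_of_ne_bot hgen hS
  have hw_mem : w ∈ LieSubmodule.lieSpan K 𝔤 {m} := hgen ▸ LieSubmodule.mem_top w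
  have hψ : IsDominant b ψ := hw.isDominant_of_exists_pow_rootF_eq_zero hw0 fun i hi =>
    hm.exists_pow_rootF_eq_zero hgen (hf i hi) w
  obtain rfl : ψ = μ := eq_of_casimir_eq (hm.isDominant_of_exists_pow_rootF_eq_zero hm0 hf) hψ
    (hm.sub_mem_rootCone hw_mem hw.mem_weightSpace hw0) (hm.casimir_eq hgen hw hw0).symm
  obtain ⟨c, rfl⟩ := Submodule.mem_span_singleton.1
    (hm.mem_span_singleton hw_mem hw.mem_weightSpace)
  exact (S.toSubmodule.smul_mem_iff (smul_ne_zero_iff.1 hw0).1).1 hwS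

end Integrable

section Presentation

attribute [local instance] LieRing.ofAssociativeRing

variable {K 𝔤 : Type*} [Field K] [CharZero K] [LieRing 𝔤] [LieAlgebra K 𝔤]
  [FiniteDimensional K 𝔤] [IsKilling K 𝔤] {H : LieSubalgebra K 𝔤} [H.IsCartanSubalgebra]
  [IsTriangularizable K H 𝔤]

/-- The Verma module of highest weight `μ`. -/
abbrev Verma (b : (rootSystem H).Base) (μ : Dual K H) : Type _ :=
  InducedModule (isCompl_negPart_borel b) (borelCharacter b μ)

/-- The generator of the Verma module. -/
noncomputable abbrev vermaGen (b : (rootSystem H).Base) (μ : Dual K H) : Verma b μ :=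
  InducedModule.gen (isCompl_negPart_borel b) (borelCharacter b μ)

variable (b : (rootSystem H).Base) (μ : Dual K H)

theorem isSingular_vermaGen : IsSingular b μ (vermaGen b μ) :=
  InducedModule.lie_gen _ _

theorem lieSpan_vermaGen : LieSubmodule.lieSpan K 𝔤 {vermaGen b μ} = ⊤ := by
  rw [← LieSubmodule.toSubmodule_eq_top]
  exact InducedModule.induction _ (LieSubmodule.subset_lieSpan rfl) fun y _ a ha =>
    LieSubmodule.lie_mem _ ha

/-- The submodule of the Verma module generated by the `f_i ^ (k_i + 1)` applied to the
generator. -/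
noncomputable def vermaRelations (k : H.root → ℕ) : LieSubmodule K 𝔤 (Verma b μ) :=
  ⨆ i ∈ b.support, LieSubmodule.lieSpan K 𝔤
    {(toEnd K 𝔤 (Verma b μ) (rootF i) ^ (k i + 1)) (vermaGen b μ)}

variable {b μ} {k : H.root → ℕ}

theorem vermaRelations_le (hk : ∀ i ∈ b.support, μ ((rootSystem H).coroot i) = k i)
    {S : Submodule K (Verma b μ)} (hS : ∀ y ∈ negPart b, ∀ a ∈ S, ⁅y, a⁆ ∈ S)
    (hf : ∀ i ∈ b.support, (toEnd K 𝔤 _ (rootF i) ^ (k i + 1)) (vermaGen b μ) ∈ S) :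
    (vermaRelations b μ k).toSubmodule ≤ S := by
  simp only [vermaRelations, LieSubmodule.iSup_toSubmodule, iSup_le_iff]
  exact fun i hi => ((isSingular_vermaGen b μ).pow_rootF hi (hk i hi)).lieSpan_le (hf i hi) hS

variable {V Y : Type*} [AddCommGroup V] [Module K V] [LieRingModule 𝔤 V] [LieModule K 𝔤 V]
  [AddCommGroup Y] [Module K Y] [LieRingModule 𝔤 Y] [LieModule K 𝔤 Y] {v : V} {u : Y}

theorem rootF_mem_negPart {i : H.root} (hi : i ∈ b.support) : rootF i ∈ negPart b := by
  have hneg : -(rootSystem H).root i ∈ negCone b := ⟨neg_ne_zero.2 ((rootSystem H).ne_zero i),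
    (neg_neg ((rootSystem H).root i)).symm ▸ root_mem_rootCone_of_mem_support hi⟩
  exact mem_rootSubalgebra_of_mem_rootSpace hneg (rootF_mem i)

theorem map_pow_of_map_lie_negPart {g : V →ₗ[K] Y} (hg : ∀ y ∈ negPart b, ∀ a, g ⁅y, a⁆ = ⁅y, g a⁆)
    {i : H.root} (hi : i ∈ b.support) (n : ℕ) (a : V) :
    g ((toEnd K 𝔤 V (rootF i) ^ n) a) = (toEnd K 𝔤 Y (rootF i) ^ n) (g a) := by
  induction n with
  | zero => rfl
  | succ n ih =>
    rw [pow_succ', pow_succ', Module.End.mul_apply, Module.End.mul_apply, toEnd_apply_apply,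
      toEnd_apply_apply, hg _ (rootF_mem_negPart hi), ih]

variable (b μ) in
/-- The map out of the Verma module sending the generator to `u`, linear over the negative part. -/
noncomputable def vermaLift (u : Y) : Verma b μ →ₗ[K] Y :=
  InducedModule.lift (N := negPart b) u

theorem vermaLift_gen (u : Y) : vermaLift b μ u (vermaGen b μ) = u :=
  InducedModule.lift_gen u

theorem vermaLift_lie (u : Y) (y : 𝔤) (hy : y ∈ negPart b) (a : Verma b μ) :
    vermaLift b μ u ⁅y, a⁆ = ⁅y, vermaLift b μ u a⁆ :=
  InducedModule.lift_lie u ⟨y, hy⟩ a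

theorem vermaRelations_le_ker_vermaLift
    (hk : ∀ i ∈ b.support, μ ((rootSystem H).coroot i) = k i)
    (hf : ∀ i ∈ b.support, (toEnd K 𝔤 Y (rootF i) ^ (k i + 1)) u = 0) :
    (vermaRelations b μ k).toSubmodule ≤ LinearMap.ker (vermaLift b μ u) := by
  refine vermaRelations_le hk (fun y hy a ha => ?_) fun i hi => ?_
  · rw [LinearMap.mem_ker, vermaLift_lie u y hy, LinearMap.mem_ker.1 ha, lie_zero]
  · rw [LinearMap.mem_ker, map_pow_of_map_lie_negPart (vermaLift_lie u) hi, vermaLift_gen, hf i hi]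

theorem pow_rootF_vermaGen_mem_vermaRelations {i : H.root} (hi : i ∈ b.support) :
    (toEnd K 𝔤 _ (rootF i) ^ (k i + 1)) (vermaGen b μ) ∈ vermaRelations b μ k :=
  (le_iSup₂_of_le (f := fun i _ => LieSubmodule.lieSpan K 𝔤
    {(toEnd K 𝔤 (Verma b μ) (rootF i) ^ (k i + 1)) (vermaGen b μ)}) i hi le_rfl)
    (LieSubmodule.subset_lieSpan rfl)

theorem vermaGen_mem_of_vermaRelations_le {S : LieSubmodule K 𝔤 (Verma b μ)}
    (hle : vermaRelations b μ k ≤ S) (hS : ¬ S ≤ vermaRelations b μ k) : vermaGen b μ ∈ S := by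
  by_cases hgen : vermaGen b μ ∈ vermaRelations b μ k
  · exact hle hgen
  let q : Verma b μ →ₗ⁅K, 𝔤⁆ Verma b μ ⧸ vermaRelations b μ k := LieSubmodule.Quotient.mk' _
  have q_eq_zero {a : Verma b μ} : q a = 0 ↔ a ∈ vermaRelations b μ k :=
    LieSubmodule.Quotient.mk_eq_zero'
  have hqf (i : H.root) (hi : i ∈ b.support) :
      ∃ n, (toEnd K 𝔤 _ (rootF i) ^ n) (q (vermaGen b μ)) = 0 := by
    refine ⟨k i + 1, ?_⟩
    rw [← LieModuleHom.coe_toLinearMap,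
      ← map_pow_of_map_lie_negPart (b := b) (fun y _ => q.map_lie y) hi]
    exact q_eq_zero.2 (pow_rootF_vermaGen_mem_vermaRelations hi)
  have hSq : S.map q ≠ ⊥ := fun h => hS fun a ha => q_eq_zero.1
    ((LieSubmodule.mem_bot _).1 (h ▸ LieSubmodule.mem_map_of_mem (f := q) ha))
  obtain ⟨c, hc, hcq⟩ := (LieSubmodule.mem_map _).1 <|
    ((isSingular_vermaGen b μ).map q).mem_of_ne_bot (mt q_eq_zero.1 hgen)
      (lieSpan_map_eq_top (LieSubmodule.Quotient.surjective_mk' _) (lieSpan_vermaGen b μ)) hqf hSq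
  have hsub : vermaGen b μ - c ∈ S :=
    hle (q_eq_zero.1 ((map_sub q _ _).trans (sub_eq_zero.2 hcq.symm)))
  simpa only [sub_add_cancel] using add_mem hsub hc

theorem ker_vermaLift_le (hv : IsSingular b μ v) (hv0 : v ≠ 0)
    (hk : ∀ i ∈ b.support, μ ((rootSystem H).coroot i) = k i)
    (hf : ∀ i ∈ b.support, (toEnd K 𝔤 V (rootF i) ^ (k i + 1)) v = 0) :
    LinearMap.ker (vermaLift b μ v) ≤ (vermaRelations b μ k).toSubmodule := by
  let g : Verma b μ →ₗ⁅K, 𝔤⁆ V := { vermaLift b μ v with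
    map_lie' := (isSingular_vermaGen b μ).map_lie_of_map_lie_negPart (lieSpan_vermaGen b μ)
      (vermaLift_lie v) ((vermaLift_gen (b := b) (μ := μ) v).symm ▸ hv) _ _ }
  by_contra hker
  have hgen : vermaGen b μ ∈ g.ker :=
    vermaGen_mem_of_vermaRelations_le (vermaRelations_le_ker_vermaLift hk hf) hker
  exact hv0 ((vermaLift_gen v).symm.trans hgen)

theorem vermaLift_surjective (hv : IsSingular b μ v)
    (hgen : LieSubmodule.lieSpan K 𝔤 {v} = ⊤) : Function.Surjective (vermaLift b μ v) := by
  refine LinearMap.range_eq_top.1 (hv.induction hgen _ ⟨_, vermaLift_gen v⟩ ?_)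
  rintro y hy _ ⟨a, rfl⟩
  exact ⟨⁅y, a⁆, vermaLift_lie v y hy a⟩

/-- The presentation of the simple highest weight module over the negative part: the generator
`v` is subject only to the relations `f_i ^ (k_i + 1) v = 0`. -/
theorem IsSingular.exists_linearMap (hv : IsSingular b μ v) (hv0 : v ≠ 0)
    (hgen : LieSubmodule.lieSpan K 𝔤 {v} = ⊤)
    (hk : ∀ i ∈ b.support, μ ((rootSystem H).coroot i) = k i)
    (hf : ∀ i ∈ b.support, (toEnd K 𝔤 V (rootF i) ^ (k i + 1)) v = 0)
    (hu : ∀ i ∈ b.support, (toEnd K 𝔤 Y (rootF i) ^ (k i + 1)) u = 0) :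
    ∃ g : V →ₗ[K] Y, g v = u ∧ ∀ y ∈ negPart b, ∀ a, g ⁅y, a⁆ = ⁅y, g a⁆ := by
  have hker : LinearMap.ker (vermaLift b μ v) ≤ LinearMap.ker (vermaLift b μ u) :=
    (ker_vermaLift_le hv hv0 hk hf).trans (vermaRelations_le_ker_vermaLift hk hu)
  have hsurj := vermaLift_surjective hv hgen
  let g : V →ₗ[K] Y := (LinearMap.ker (vermaLift b μ v)).liftQ _ hker ∘ₗ
    (LinearMap.quotKerEquivOfSurjective _ hsurj).symm
  have hg (a : Verma b μ) : g (vermaLift b μ v a) = vermaLift b μ u a := by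
    have : (LinearMap.quotKerEquivOfSurjective _ hsurj).symm (vermaLift b μ v a) =
        (LinearMap.ker (vermaLift b μ v)).mkQ a := (LinearEquiv.symm_apply_eq _).2 rfl
    exact (congrArg ((LinearMap.ker _).liftQ _ hker) this).trans
      (Submodule.liftQ_apply _ (vermaLift b μ u) a)
  refine ⟨g, by rw [← vermaLift_gen (b := b) (μ := μ) v, hg, vermaLift_gen], fun y hy a => ?_⟩
  obtain ⟨a, rfl⟩ := hsurj a
  rw [← vermaLift_lie v y hy, hg, hg, vermaLift_lie u y hy]

theorem IsSingular.exists_lieModuleHom [FiniteDimensional K V] [FiniteDimensional K Y]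
    (hv : IsSingular b μ v) (hv0 : v ≠ 0) (hgen : LieSubmodule.lieSpan K 𝔤 {v} = ⊤)
    (hu : IsSingular b μ u) : ∃ g : V →ₗ⁅K, 𝔤⁆ Y, g v = u := by
  have hμ : ∀ i : H.root, ∃ n : ℕ, i ∈ b.support → μ ((rootSystem H).coroot i) = n := fun i => by
    by_cases hi : i ∈ b.support
    · exact (hv.isDominant hv0 i hi).imp fun n hn _ => hn
    · exact ⟨0, fun h => absurd h hi⟩
  choose k hk using hμ
  obtain ⟨g, hgv, hg⟩ := hv.exists_linearMap hv0 hgen hk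
    (fun i hi => hv.pow_rootF_eq_zero hi (hk i hi)) (fun i hi => hu.pow_rootF_eq_zero hi (hk i hi))
  exact ⟨{ g with map_lie' := hv.map_lie_of_map_lie_negPart hgen hg (hgv.symm ▸ hu) _ _ }, hgv⟩

end Presentation

section PrincipalTriple

variable {K 𝔤 : Type*} [Field K] [CharZero K] [LieRing 𝔤] [LieAlgebra K 𝔤]
  [FiniteDimensional K 𝔤] [IsKilling K 𝔤] {H : LieSubalgebra K 𝔤} [H.IsCartanSubalgebra]
  [IsTriangularizable K H 𝔤] {b : (rootSystem H).Base}

theorem eq_zero_of_apply_rhoCheck_eq_zero {χ : Dual K H} {x : 𝔤} (hx : x ∈ rootSpace H χ)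
    (hx0 : x ≠ 0) (h0 : χ (rhoCheck b) = 0) : χ = 0 := by
  obtain hχ | hχ := mem_rootCone_or_mem_negCone_of_mem_rootSpace b hx hx0
  · exact eq_zero_of_mem_rootCone_of_apply_rhoCheck hχ h0
  · exact neg_eq_zero.1 (eq_zero_of_mem_rootCone_of_apply_rhoCheck hχ.2
      ((LinearMap.neg_apply _ _).trans (neg_eq_zero.2 h0)))

theorem mem_cartan_of_lie_rhoCheck_eq_zero {x : 𝔤} (hx : ⁅(rhoCheck b : 𝔤), x⁆ = 0) : x ∈ H := by
  have htop : ⨆ χ : Dual K H, (weightSpace 𝔤 χ : Submodule K 𝔤) = ⊤ := by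
    rw [← top_le_iff, ← LieSubmodule.top_toSubmodule (L := H), ← iSup_genWeightSpace_eq_top' K H 𝔤,
      LieSubmodule.iSup_toSubmodule]
    exact iSup_le fun χ y hy => Submodule.mem_iSup_of_mem χ.toLinear
      ((mem_weightSpace _ _).2 fun h => lie_eq_smul_of_mem_rootSpace hy h)
  have hx : ⁅rhoCheck b, x⁆ = (0 : K) • x := by rw [zero_smul]; exact hx
  refine (iSup₂_le fun χ hχ y hy => ?_ : _ ≤ H.toSubmodule)
    (mem_iSup_weightSpace_of_lie_eq_smul htop hx)
  by_cases hy0 : y = 0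
  · exact hy0 ▸ zero_mem H
  · have hyχ : y ∈ rootSpace H χ := weightSpace_le_genWeightSpace 𝔤 _ hy
    obtain rfl := eq_zero_of_apply_rhoCheck_eq_zero hyχ hy0 hχ
    exact mem_rootSpace_zero_iff.1 hyχ

variable (b)

theorem exists_natCast_smul_coroot_eq_rhoCheck : ∃ c : b.support → ℕ,
    ∑ i, (c i : K) • (rootSystem H).coroot i = rhoCheck b := by
  choose c hc using exists_coord_toWeightBasis_eq_natCast (twoRho_mem_rootCone b.flip)
  refine ⟨c, ?_⟩
  rw [rhoCheck, ← b.flip.toWeightBasis.sum_repr (twoRho b.flip)]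
  exact Finset.sum_congr rfl fun i _ => congrArg₂ (· • ·) (hc i).symm
    (b.flip.toWeightBasis_apply i).symm

/-- The coefficients of `rhoCheck b` in the basis of simple coroots. -/
noncomputable def rhoCheckCoeff : b.support → ℕ :=
  (exists_natCast_smul_coroot_eq_rhoCheck b).choose

theorem sum_rhoCheckCoeff :
    ∑ i, (rhoCheckCoeff b i : K) • (rootSystem H).coroot i = rhoCheck b :=
  (exists_natCast_smul_coroot_eq_rhoCheck b).choose_spec

/-- The nilpositive element of the principal `𝔰𝔩₂`-triple. -/
noncomputable def principalE : 𝔤 := ∑ i : b.support, rootE i.1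

/-- The nilnegative element of the principal `𝔰𝔩₂`-triple. -/
noncomputable def principalF : 𝔤 := ∑ i : b.support, (rhoCheckCoeff b i : K) • rootF i.1

variable {b}

theorem lie_rootE_rootF_eq_zero {i j : H.root} (hi : i ∈ b.support) (hj : j ∈ b.support)
    (hij : i ≠ j) : ⁅rootE i, rootF j⁆ = 0 := by
  by_contra h
  have hne : (rootSystem H).root i + -(rootSystem H).root j ≠ 0 := fun h0 =>
    hij ((rootSystem H).root.injective (add_neg_eq_zero.1 h0))
  obtain ⟨l, hl⟩ := exists_root_eq_of_mem_rootSpace hne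
    (lie_mem_rootSpace (rootE_mem i) (rootF_mem j)) h
  exact b.sub_notMem_range_root hi hj ⟨l, hl.trans (sub_eq_add_neg _ _).symm⟩

theorem satisfiesSl2_principal :
    SatisfiesSl2 K (rhoCheck b : 𝔤) (principalE b) (principalF b) where
  lie_e_f := by
    simp only [principalE, principalF, lie_sum, sum_lie, lie_smul]
    rw [← sum_rhoCheckCoeff b, AddSubmonoidClass.coe_finsetSum]
    refine Finset.sum_congr rfl fun i _ => ?_
    rw [Fintype.sum_eq_single i fun j hji =>
      lie_rootE_rootF_eq_zero j.2 i.2 fun h => hji (Subtype.ext h),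
      (isSl2Triple_rootE_rootF i.1).lie_e_f, H.coe_smul]
  lie_h_e := by
    rw [principalE, lie_sum, Finset.smul_sum]
    exact Finset.sum_congr rfl fun i _ => by
      rw [mem_rootSpace_iff.1 (rootE_mem i.1), root_rhoCheck b i.2]
  lie_h_f := by
    rw [principalF, lie_sum, Finset.smul_sum, ← Finset.sum_neg_distrib]
    exact Finset.sum_congr rfl fun i _ => by
      rw [lie_smul, mem_rootSpace_iff.1 (rootF_mem i.1), LinearMap.neg_apply, root_rhoCheck b i.2,
        smul_comm, neg_smul]

end PrincipalTriple

section Opposition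

variable {K 𝔤 : Type*} [Field K] [CharZero K] [LieRing 𝔤] [LieAlgebra K 𝔤]
  [FiniteDimensional K 𝔤] [IsKilling K 𝔤] {H : LieSubalgebra K 𝔤} [H.IsCartanSubalgebra]
  [IsTriangularizable K H 𝔤] {b : (rootSystem H).Base} {X Y Z : Type*}
  [AddCommGroup X] [Module K X] [LieRingModule 𝔤 X] [LieModule K 𝔤 X]
  [AddCommGroup Y] [Module K Y] [LieRingModule 𝔤 Y] [LieModule K 𝔤 Y]
  [AddCommGroup Z] [Module K Z] [LieRingModule 𝔤 Z] [LieModule K 𝔤 Z]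

variable (b X) in
/-- The operator by which a representative of the longest element of the Weyl group acts on a
finite-dimensional module. The representative is taken in the principal `SL₂`. -/
noncomputable def oppOp [FiniteDimensional K X] : X ≃ₗ[K] X :=
  LinearEquiv.ofInjectiveEndo (weylOp K X (principalE b) (principalF b))
    (weylOp_injective K X satisfiesSl2_principal)

theorem oppOp_apply_bilin [FiniteDimensional K X] [FiniteDimensional K Y] [FiniteDimensional K Z]
    {T : X →ₗ[K] Y →ₗ[K] Z} (hT : IsEquivariant 𝔤 T) (x : X) (y : Y) :
    oppOp b Z (T x y) = T (oppOp b X x) (oppOp b Y y) :=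
  weylOp_apply_bilin satisfiesSl2_principal hT x y

theorem oppOp_lie [FiniteDimensional K X] (g : 𝔤) (x : X) :
    oppOp b X ⁅g, x⁆ = ⁅oppOp b 𝔤 g, oppOp b X x⁆ :=
  weylOp_lie satisfiesSl2_principal g x

theorem oppOp_eq_self_of_isTrivial [FiniteDimensional K X] [IsTrivial 𝔤 X] (x : X) :
    oppOp b X x = x :=
  weylOp_eq_self_of_isTrivial x

theorem oppOp_rhoCheck : oppOp b 𝔤 (rhoCheck b) = -(rhoCheck b : 𝔤) :=
  weylOp_h satisfiesSl2_principal

theorem oppOp_mem_cartan {x : 𝔤} (hx : x ∈ H) : oppOp b 𝔤 x ∈ H := by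
  refine mem_cartan_of_lie_rhoCheck_eq_zero (b := b) ?_
  have hρx : ⁅rhoCheck b, (⟨x, hx⟩ : H)⁆ = 0 := trivial_lie_zero H H _ _
  rw [← neg_eq_zero, ← neg_lie, ← oppOp_rhoCheck, ← oppOp_lie,
    show ⁅(rhoCheck b : 𝔤), x⁆ = 0 from congrArg Subtype.val hρx, map_zero]

variable (b) in
/-- The action of the longest element of the Weyl group on the Cartan subalgebra. -/
noncomputable def oppCartan : H ≃ₗ[K] H :=
  LinearEquiv.ofInjectiveEndo ((oppOp b 𝔤).toLinearMap.restrict fun _ => oppOp_mem_cartan)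
    ((LinearMap.injective_restrict_iff _).2 (by simp))

theorem coe_oppCartan (h : H) : (oppCartan b h : 𝔤) = oppOp b 𝔤 h := rfl

theorem oppCartan_rhoCheck : oppCartan b (rhoCheck b) = -rhoCheck b :=
  Subtype.ext oppOp_rhoCheck

variable (b) in
/-- The transpose of `oppCartan`, acting on weights. -/
noncomputable def oppDual : Dual K H ≃ₗ[K] Dual K H := (oppCartan b).dualMap

theorem oppDual_apply (χ : Dual K H) (h : H) : oppDual b χ h = χ (oppCartan b h) := rfl

theorem oppOp_mem_weightSpace_iff [FiniteDimensional K X] {χ : Dual K H} {x : X} :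
    oppOp b X x ∈ weightSpace X χ ↔ x ∈ weightSpace X (oppDual b χ) := by
  rw [mem_weightSpace, mem_weightSpace, (oppCartan b).surjective.forall]
  refine forall_congr' fun h => ?_
  rw [LieSubalgebra.coe_bracket_of_module, LieSubalgebra.coe_bracket_of_module, coe_oppCartan,
    ← oppOp_lie, ← oppDual_apply, ← map_smul, (oppOp b X).injective.eq_iff]

theorem oppOp_mem_rootSpace_iff {χ : Dual K H} {x : 𝔤} :
    oppOp b 𝔤 x ∈ rootSpace H χ ↔ x ∈ rootSpace H (oppDual b χ) := by
  rw [mem_rootSpace_iff, mem_rootSpace_iff]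
  exact (mem_weightSpace _ _).symm.trans (oppOp_mem_weightSpace_iff.trans (mem_weightSpace _ _))

theorem oppDual_apply_rhoCheck (χ : Dual K H) :
    oppDual b χ (rhoCheck b) = -χ (rhoCheck b) := by
  rw [oppDual_apply, oppCartan_rhoCheck, map_neg]

theorem oppDual_mem_negCone_iff {χ : Dual K H} {x : 𝔤} (hx : x ∈ rootSpace H (oppDual b χ))
    (hx0 : x ≠ 0) : oppDual b χ ∈ negCone b ↔ χ ∈ rootCone b ∧ χ ≠ 0 := by
  have hρ := oppDual_apply_rhoCheck (b := b) χ
  constructor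
  · intro hneg
    have hχ0 : χ ≠ 0 := fun h => hneg.1 (by rw [h, map_zero])
    refine ⟨(mem_rootCone_or_mem_negCone_of_mem_rootSpace b (oppOp_mem_rootSpace_iff.2 hx)
      ((oppOp b 𝔤).map_ne_zero_iff.2 hx0)).resolve_right fun hχ => hχ.1 (neg_eq_zero.1 ?_), hχ0⟩
    exact eq_zero_of_mem_rootCone_of_apply_rhoCheck_add hχ.2 hneg.2 (by simp [hρ])
  · rintro ⟨hχ, hχ0⟩
    exact (mem_rootCone_or_mem_negCone_of_mem_rootSpace b hx hx0).resolve_left fun h =>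
      hχ0 (eq_zero_of_mem_rootCone_of_apply_rhoCheck_add hχ h (by simp [hρ]))

theorem isSingular_oppOp [FiniteDimensional K X] {ν : Dual K H} {w : X}
    (hw : w ∈ weightSpace X (oppDual b ν)) (hneg : ∀ y ∈ negPart b, ⁅y, w⁆ = 0) :
    IsSingular b ν (oppOp b X w) := by
  refine isSingular_iff.2 ⟨oppOp_mem_weightSpace_iff.2 hw, fun χ hχ hχ0 x hx => ?_⟩
  obtain ⟨y, rfl⟩ := (oppOp b 𝔤).surjective x
  by_cases hy0 : y = 0
  · rw [hy0, map_zero, zero_lie]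
  · have hy := oppOp_mem_rootSpace_iff.1 hx
    rw [← oppOp_lie, hneg y (mem_rootSubalgebra_of_mem_rootSpace
      ((oppDual_mem_negCone_iff hy hy0).2 ⟨hχ, hχ0⟩) hy), map_zero]

theorem IsSingular.lie_oppOp_eq_zero {μ : Dual K H} {u : X} (hu : IsSingular b μ u) {y : 𝔤}
    (hy : y ∈ negPart b) : ⁅oppOp b 𝔤 y, u⁆ = 0 := by
  refine rootSubalgebra_le (S := LinearMap.ker
    ((toEnd K 𝔤 X : 𝔤 →ₗ[K] Module.End K X).flip u ∘ₗ (oppOp b 𝔤).toLinearMap)) ?_ hy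
  intro χ hχ x hx
  change ⁅oppOp b 𝔤 x, u⁆ = 0
  obtain ⟨χ, rfl⟩ := (oppDual b).surjective χ
  by_cases hx0 : x = 0
  · rw [hx0, map_zero, zero_lie]
  · obtain ⟨hχ', hχ0⟩ := (oppDual_mem_negCone_iff hx hx0).1 hχ
    exact hu.lie_eq_zero hχ' hχ0 (oppOp_mem_rootSpace_iff.2 hx)

end Opposition

section EquivariantMaps

attribute [local instance] LieRing.ofAssociativeRing

variable {K 𝔤 : Type*} [Field K] [CharZero K] [LieRing 𝔤] [LieAlgebra K 𝔤]
  [FiniteDimensional K 𝔤] [IsKilling K 𝔤] {H : LieSubalgebra K 𝔤} [H.IsCartanSubalgebra]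
  [IsTriangularizable K H 𝔤] {b : (rootSystem H).Base} {V Y : Type*}
  [AddCommGroup V] [Module K V] [LieRingModule 𝔤 V] [LieModule K 𝔤 V]
  [AddCommGroup Y] [Module K Y] [LieRingModule 𝔤 Y] [LieModule K 𝔤 Y]
  {μ ψ : Dual K H} {v : V} {τ : V →ₗ[K] Y} {T : V →ₗ[K] V →ₗ[K] Y}

theorem IsSingular.eq_zero_of_lie_negPart (hv : IsSingular b μ v)
    (hgen : LieSubmodule.lieSpan K 𝔤 {v} = ⊤) (hτ : ∀ y ∈ negPart b, ⁅y, τ⁆ = 0)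
    (hτv : τ v = 0) : τ = 0 := by
  refine LinearMap.ker_eq_top.1 (hv.induction hgen _ hτv fun y hy a ha => ?_)
  have h := LinearMap.congr_fun (hτ y hy) a
  rw [LieHom.lie_apply, LinearMap.mem_ker.1 ha, lie_zero, zero_sub] at h
  exact neg_eq_zero.1 h

theorem lie_mem_negPart_of_mem_cartan (h : H) {y : 𝔤} (hy : y ∈ negPart b) :
    ⁅(h : 𝔤), y⁆ ∈ negPart b := by
  refine rootSubalgebra_le (S := (negPart b).toSubmodule.comap (toEnd K 𝔤 𝔤 h))
    (fun χ hχ x hx => ?_) hy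
  rw [Submodule.mem_comap, toEnd_apply_apply, mem_rootSpace_iff.1 hx]
  exact (negPart b).smul_mem _ (mem_rootSubalgebra_of_mem_rootSpace hχ hx)

theorem IsSingular.linearMap_mem_weightSpace (hv : IsSingular b μ v)
    (hgen : LieSubmodule.lieSpan K 𝔤 {v} = ⊤) (hτ : ∀ y ∈ negPart b, ⁅y, τ⁆ = 0)
    (hτv : τ v ∈ weightSpace Y ψ) : τ ∈ weightSpace (V →ₗ[K] Y) (ψ - μ) := by
  refine (LieModule.mem_weightSpace _ _).2 fun h => sub_eq_zero.1
    (hv.eq_zero_of_lie_negPart hgen (fun y hy => ?_) ?_)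
  · have hhy : ⁅⁅(h : 𝔤), y⁆, τ⁆ = 0 := hτ _ (lie_mem_negPart_of_mem_cartan h hy)
    have hleib := leibniz_lie (h : 𝔤) y τ
    rw [hτ y hy, lie_zero, hhy, zero_add] at hleib
    rw [lie_sub, lie_smul, hτ y hy, smul_zero, sub_zero, LieSubalgebra.coe_bracket_of_module, hleib]
  · have hhv : ⁅(h : 𝔤), v⁆ = μ h • v := (LieModule.mem_weightSpace _ _).1 hv.mem_weightSpace h
    have hhτ : ⁅(h : 𝔤), τ v⁆ = ψ h • τ v := (LieModule.mem_weightSpace _ _).1 hτv h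
    rw [LieSubalgebra.coe_bracket_of_module, LinearMap.sub_apply, LieHom.lie_apply, hhv, hhτ,
      map_smul, LinearMap.smul_apply, LinearMap.sub_apply, sub_smul, sub_self]

variable [FiniteDimensional K V]

variable (b) in
/-- The image of `v` under the inverse of `oppOp b V`: if `v` is a highest weight vector, then this
is a lowest weight vector. -/
noncomputable def oppVec (v : V) : V := (oppOp b V).symm v

theorem oppOp_oppVec (v : V) : oppOp b V (oppVec b v) = v := (oppOp b V).apply_symm_apply v

theorem IsSingular.oppVec_mem_weightSpace (hv : IsSingular b μ v) :
    oppVec b v ∈ weightSpace V (oppDual b μ) :=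
  oppOp_mem_weightSpace_iff.1 (by rw [oppOp_oppVec]; exact hv.mem_weightSpace)

theorem IsSingular.lie_oppVec_eq_zero (hv : IsSingular b μ v) {y : 𝔤} (hy : y ∈ negPart b) :
    ⁅y, oppVec b v⁆ = 0 :=
  (oppOp b V).injective (by rw [oppOp_lie, oppOp_oppVec, hv.lie_oppOp_eq_zero hy, map_zero])

theorem IsSingular.exists_oppOp_eq_smul_oppVec (hv : IsSingular b μ v)
    (hgen : LieSubmodule.lieSpan K 𝔤 {v} = ⊤) (hμ : oppDual b μ = -μ) :
    ∃ s : K, oppOp b V v = s • oppVec b v := by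
  have hmem : oppOp b V (oppOp b V v) ∈ weightSpace V μ := by
    rw [oppOp_mem_weightSpace_iff, oppOp_mem_weightSpace_iff, hμ, map_neg, hμ, neg_neg]
    exact hv.mem_weightSpace
  obtain ⟨s, hs⟩ := Submodule.mem_span_singleton.1
    (hv.mem_span_singleton (hgen ▸ LieSubmodule.mem_top _) hmem)
  exact ⟨s, (oppOp b V).injective (by rw [map_smul, oppOp_oppVec, hs])⟩

theorem IsSingular.apply_oppVec_mem_weightSpace (hv : IsSingular b μ v)
    (hT : IsEquivariant 𝔤 T) : T (oppVec b v) v ∈ weightSpace Y (oppDual b μ + μ) := by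
  refine (LieModule.mem_weightSpace _ _).2 fun h => ?_
  have hhv : ⁅(h : 𝔤), v⁆ = μ h • v := (LieModule.mem_weightSpace _ _).1 hv.mem_weightSpace h
  have hhw : ⁅(h : 𝔤), oppVec b v⁆ = oppDual b μ h • oppVec b v :=
    (LieModule.mem_weightSpace _ _).1 hv.oppVec_mem_weightSpace h
  rw [LieSubalgebra.coe_bracket_of_module, hT, hhv, hhw, map_smul, map_smul, LinearMap.smul_apply,
    LinearMap.add_apply, add_smul]

variable [FiniteDimensional K Y]

theorem oppOp_apply_linearMap (τ : V →ₗ[K] Y) (a : V) :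
    oppOp b Y (τ a) = oppOp b (V →ₗ[K] Y) τ (oppOp b V a) :=
  oppOp_apply_bilin (T := LinearMap.id) (fun g τ a => by simp) τ a

theorem IsSingular.eq_zero_of_isEquivariant (hv : IsSingular b μ v)
    (hgen : LieSubmodule.lieSpan K 𝔤 {v} = ⊤) (hT : IsEquivariant 𝔤 T)
    (h : T (oppVec b v) v = 0) : T = 0 := by
  have lie_T (g : 𝔤) (x : V) : ⁅g, T x⁆ = T ⁅g, x⁆ := by
    ext y
    rw [LieHom.lie_apply, hT, add_sub_cancel_right]
  have hT0 : T (oppVec b v) = 0 := hv.eq_zero_of_lie_negPart hgen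
    (fun y hy => by rw [lie_T, hv.lie_oppVec_eq_zero hy, map_zero]) h
  have hTv : T v = 0 := by
    ext y
    obtain ⟨y, rfl⟩ := (oppOp b V).surjective y
    nth_rw 1 [← oppOp_oppVec (b := b) v]
    rw [← oppOp_apply_bilin hT, hT0, LinearMap.zero_apply, map_zero, LinearMap.zero_apply]
  refine LinearMap.ker_eq_top.1 (hv.induction hgen _ hTv fun y _ a ha => ?_)
  rw [LinearMap.mem_ker, ← lie_T, LinearMap.mem_ker.1 ha, lie_zero]

theorem IsEquivariant.smul_apply_oppVec (hT : IsEquivariant 𝔤 T) {s : K}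
    (hs : oppOp b V v = s • oppVec b v) :
    s • T v (oppVec b v) = oppOp b Y (T (oppVec b v) v) := by
  rw [oppOp_apply_bilin hT, oppOp_oppVec, hs, map_smul]

/-- By Frobenius reciprocity, `Hom_𝔤(V ⊗ V, Y) = Hom_𝔤(V, Hom(V, Y))` is the space of highest weight
vectors of weight `μ` in `Hom(V, Y)`, which `oppOp` identifies with the maps `V → Y` commuting with
the negative part. -/
theorem IsSingular.exists_isEquivariant (hv : IsSingular b μ v) (hv0 : v ≠ 0)
    (hgen : LieSubmodule.lieSpan K 𝔤 {v} = ⊤) (hμ : oppDual b μ = -μ) {k : H.root → ℕ}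
    (hk : ∀ i ∈ b.support, μ ((rootSystem H).coroot i) = k i) {u : Y}
    (hu0 : u ∈ weightSpace Y (0 : Dual K H))
    (hu : ∀ i ∈ b.support, (toEnd K 𝔤 Y (rootF i) ^ (k i + 1)) u = 0) :
    ∃ T : V →ₗ[K] V →ₗ[K] Y, IsEquivariant 𝔤 T ∧ T (oppVec b v) v = u := by
  obtain ⟨τ, rfl, hτ⟩ := hv.exists_linearMap hv0 hgen hk
    (fun i hi => hv.pow_rootF_eq_zero hi (hk i hi)) hu
  have hτ0 : ∀ y ∈ negPart b, ⁅y, τ⁆ = 0 := fun y hy => by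
    ext a
    rw [LieHom.lie_apply, hτ y hy, sub_self, LinearMap.zero_apply]
  have hτμ := hv.linearMap_mem_weightSpace hgen hτ0 hu0
  rw [zero_sub, ← hμ] at hτμ
  obtain ⟨g, hg⟩ := hv.exists_lieModuleHom hv0 hgen (isSingular_oppOp hτμ hτ0)
  have hT : IsEquivariant 𝔤 (g : V →ₗ[K] V →ₗ[K] Y) := fun x a c => by
    have h := LinearMap.congr_fun (LieModuleHom.map_lie g x a) c
    rw [LieHom.lie_apply] at h
    exact sub_eq_iff_eq_add.1 h.symm
  refine ⟨g, hT, (oppOp b Y).injective ?_⟩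
  rw [oppOp_apply_bilin hT, oppOp_oppVec, oppOp_apply_linearMap]
  exact LinearMap.congr_fun hg _

end EquivariantMaps

section InvariantForms

attribute [local instance] LieRing.ofAssociativeRing

theorem IsEquivariant.apply_pow_toEnd {K 𝔤 V Y : Type*} [Field K] [LieRing 𝔤] [LieAlgebra K 𝔤]
    [AddCommGroup V] [Module K V] [LieRingModule 𝔤 V] [LieModule K 𝔤 V]
    [AddCommGroup Y] [Module K Y] [LieRingModule 𝔤 Y] [IsTrivial 𝔤 Y] {T : V →ₗ[K] V →ₗ[K] Y}
    (hT : IsEquivariant 𝔤 T) (x : 𝔤) (n : ℕ) (a c : V) :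
    T a ((toEnd K 𝔤 V x ^ n) c) = (-1 : K) ^ n • T ((toEnd K 𝔤 V x ^ n) a) c := by
  induction n generalizing a with
  | zero => simp
  | succ n ih =>
    have h := hT x a ((toEnd K 𝔤 V x ^ n) c)
    rw [trivial_lie_zero, ih, ← toEnd_apply_apply K, ← Module.End.mul_apply, ← pow_succ] at h
    have hpow : (toEnd K 𝔤 V x ^ (n + 1)) c = ⁅x, (toEnd K 𝔤 V x ^ n) c⁆ := by
      rw [pow_succ', Module.End.mul_apply, toEnd_apply_apply]
    rw [hpow, ← neg_eq_of_add_eq_zero_right h.symm, pow_succ (-1 : K), mul_neg_one, neg_smul]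

theorem eq_zero_of_mem_weightSpace_of_isTrivial {K 𝔤 Y : Type*} [Field K] [LieRing 𝔤]
    [LieAlgebra K 𝔤] {H : LieSubalgebra K 𝔤} [AddCommGroup Y] [Module K Y]
    [LieRingModule 𝔤 Y] [LieModule K 𝔤 Y] [IsTrivial 𝔤 Y] {χ : Dual K H} {u : Y}
    (hu : u ∈ weightSpace Y χ) (hu0 : u ≠ 0) : χ = 0 := by
  ext h
  have h := (LieModule.mem_weightSpace _ _).1 hu h
  rw [LieSubalgebra.coe_bracket_of_module, trivial_lie_zero] at h
  exact (smul_eq_zero.1 h.symm).resolve_right hu0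

variable {K 𝔤 : Type*} [Field K] [CharZero K] [LieRing 𝔤] [LieAlgebra K 𝔤]
  [FiniteDimensional K 𝔤] [IsKilling K 𝔤] {H : LieSubalgebra K 𝔤} [H.IsCartanSubalgebra]
  [IsTriangularizable K H 𝔤] {b : (rootSystem H).Base} {V Y : Type*}
  [AddCommGroup V] [Module K V] [LieRingModule 𝔤 V] [LieModule K 𝔤 V]
  [AddCommGroup Y] [Module K Y] [LieRingModule 𝔤 Y] [LieModule K 𝔤 Y]
  {μ : Dual K H} {v : V} {N : ℕ}

theorem IsSingular.mem_span_singleton_of_lie_rhoCheck (hv : IsSingular b μ v)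
    (hgen : LieSubmodule.lieSpan K 𝔤 {v} = ⊤) {x : V}
    (hx : ⁅(rhoCheck b : 𝔤), x⁆ = μ (rhoCheck b) • x) : x ∈ K ∙ v := by
  have hxsup := mem_iSup_weightSpace_of_lie_eq_smul (hv.iSup_weightSpace_eq_top hgen)
    (h := rhoCheck b) hx
  refine (iSup₂_le fun χ hχ w hw => ?_ : _ ≤ K ∙ v) hxsup
  by_cases hw0 : w = 0
  · exact hw0 ▸ zero_mem _
  have hwspan : w ∈ LieSubmodule.lieSpan K 𝔤 {v} := hgen ▸ LieSubmodule.mem_top w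
  have hμχ : μ - χ = 0 := eq_zero_of_mem_rootCone_of_apply_rhoCheck
    (hv.sub_mem_rootCone hwspan hw hw0) (by rw [LinearMap.sub_apply, hχ, sub_self])
  exact hv.mem_span_singleton hwspan (sub_eq_zero.1 hμχ ▸ hw)

theorem IsSingular.pow_principalF_ne_zero_and_lie_rhoCheck (hv : IsSingular b μ v) (hv0 : v ≠ 0)
    (hN : μ (rhoCheck b) = N) :
    (toEnd K 𝔤 V (principalF b) ^ N) v ≠ 0 ∧
      ⁅(rhoCheck b : 𝔤), (toEnd K 𝔤 V (principalF b) ^ N) v⁆ =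
        -μ (rhoCheck b) • (toEnd K 𝔤 V (principalF b) ^ N) v := by
  have hρv : ⁅(rhoCheck b : 𝔤), v⁆ = μ (rhoCheck b) • v :=
    (LieModule.mem_weightSpace _ _).1 hv.mem_weightSpace _
  by_cases hρ : rhoCheck b = 0
  · obtain rfl : N = 0 := by
      rw [hρ, map_zero] at hN
      exact_mod_cast hN.symm
    simp [hv0, hρ]
  · have ht : IsSl2Triple (rhoCheck b : 𝔤) (principalE b) (principalF b) :=
      satisfiesSl2_principal.isSl2Triple fun h => hρ (Subtype.ext h)
    have hE : ⁅principalE b, v⁆ = 0 := by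
      rw [principalE, sum_lie]
      exact Finset.sum_eq_zero fun i _ => hv.lie_eq_zero
        (root_mem_rootCone_of_mem_support i.2) ((rootSystem H).ne_zero i) (rootE_mem i.1)
    have P : ht.HasPrimitiveVectorWith v (μ (rhoCheck b)) := ⟨hv0, hρv, hE⟩
    refine ⟨P.pow_toEnd_f_ne_zero_of_eq_nat hN le_rfl, ?_⟩
    rw [P.lie_h_pow_toEnd_f, hN]
    congr 1
    ring

variable [FiniteDimensional K V]

theorem IsSingular.exists_pow_principalF_eq_smul_oppVec (hv : IsSingular b μ v) (hv0 : v ≠ 0)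
    (hgen : LieSubmodule.lieSpan K 𝔤 {v} = ⊤) (hN : μ (rhoCheck b) = N) :
    ∃ t : K, t ≠ 0 ∧ (toEnd K 𝔤 V (principalF b) ^ N) v = t • oppVec b v := by
  obtain ⟨hw0, hw⟩ := hv.pow_principalF_ne_zero_and_lie_rhoCheck hv0 hN
  set w := (toEnd K 𝔤 V (principalF b) ^ N) v
  have hρw : ⁅(rhoCheck b : 𝔤), oppOp b V w⁆ = μ (rhoCheck b) • oppOp b V w := by
    rw [← neg_inj, ← neg_lie, ← oppOp_rhoCheck, ← oppOp_lie, hw, map_smul, neg_smul]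
  obtain ⟨t, ht⟩ :=
    Submodule.mem_span_singleton.1 (hv.mem_span_singleton_of_lie_rhoCheck hgen hρw)
  have hwt : w = t • oppVec b v :=
    (oppOp b V).injective (by rw [map_smul, oppOp_oppVec, ht])
  exact ⟨t, fun h => hw0 (by rw [hwt, h, zero_smul]), hwt⟩

theorem IsSingular.exists_isEquivariant_of_isTrivial [IsTrivial 𝔤 Y] [FiniteDimensional K Y]
    (hv : IsSingular b μ v) (hv0 : v ≠ 0) (hgen : LieSubmodule.lieSpan K 𝔤 {v} = ⊤)
    (hμ : oppDual b μ = -μ) (u : Y) :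
    ∃ T : V →ₗ[K] V →ₗ[K] Y, IsEquivariant 𝔤 T ∧ T (oppVec b v) v = u := by
  choose! k hk using hv.isDominant hv0
  refine hv.exists_isEquivariant hv0 hgen hμ hk
    ((LieModule.mem_weightSpace _ _).2 fun h => ?_) fun i _ => ?_
  · rw [LieSubalgebra.coe_bracket_of_module, trivial_lie_zero, LinearMap.zero_apply, zero_smul]
  · rw [pow_succ', Module.End.mul_apply, toEnd_apply_apply, trivial_lie_zero]

/-- The sign is computed by comparing `B (F ^ N • v) v` and `B v (F ^ N • v)` for an invariant
bilinear form `B`, with `F` the nilnegative element of the principal `𝔰𝔩₂`-triple. -/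
theorem IsSingular.oppOp_eq_neg_one_pow_smul_oppVec (hv : IsSingular b μ v) (hv0 : v ≠ 0)
    (hgen : LieSubmodule.lieSpan K 𝔤 {v} = ⊤) (hμ : oppDual b μ = -μ)
    (hN : μ (rhoCheck b) = N) : oppOp b V v = (-1 : K) ^ N • oppVec b v := by
  let one : TrivialLieModule K 𝔤 K := (TrivialLieModule.equiv K 𝔤 K).symm 1
  have : FiniteDimensional K (TrivialLieModule K 𝔤 K) :=
    (TrivialLieModule.equiv K 𝔤 K).symm.finiteDimensional
  have hone : one ≠ 0 := by simp [one]
  obtain ⟨B, hB, hB1⟩ := hv.exists_isEquivariant_of_isTrivial hv0 hgen hμ one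
  obtain ⟨t, ht0, ht⟩ := hv.exists_pow_principalF_eq_smul_oppVec hv0 hgen hN
  obtain ⟨s, hs⟩ := hv.exists_oppOp_eq_smul_oppVec hgen hμ
  have hflip : B v (oppVec b v) = (-1 : K) ^ N • one := by
    have h := hB.apply_pow_toEnd (principalF b) N v v
    rw [ht, map_smul, map_smul, LinearMap.smul_apply, smul_comm, hB1] at h
    exact smul_right_injective _ ht0 h
  have hsone : (s * (-1) ^ N) • one = (1 : K) • one := by
    rw [mul_smul, ← hflip, hB.smul_apply_oppVec hs, hB1, oppOp_eq_self_of_isTrivial, one_smul]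
  have hs1 : s * (-1) ^ N = 1 := smul_left_injective K hone hsone
  rw [hs, eq_inv_of_mul_eq_one_left hs1, ← inv_pow, inv_neg_one]

end InvariantForms

section EquivariantBilinear

variable {K 𝔤 V Y : Type*} [Field K] [LieRing 𝔤]
  [AddCommGroup V] [Module K V] [LieRingModule 𝔤 V]
  [AddCommGroup Y] [Module K Y] [LieRingModule 𝔤 Y] {T T' : V →ₗ[K] V →ₗ[K] Y}

theorem IsEquivariant.flip (hT : IsEquivariant 𝔤 T) : IsEquivariant 𝔤 T.flip := fun g x y => by
  simp only [LinearMap.flip_apply]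
  rw [hT, add_comm]

theorem IsEquivariant.add (hT : IsEquivariant 𝔤 T) (hT' : IsEquivariant 𝔤 T') :
    IsEquivariant 𝔤 (T + T') := fun g x y => by
  simp only [LinearMap.add_apply, lie_add]
  rw [hT, hT', add_add_add_comm]

variable (𝔤) in
theorem isEquivariant_compr₂_equiv_symm {B : LinearMap.BilinForm K V} (hB : B.lieInvariant 𝔤) :
    IsEquivariant 𝔤 (B.compr₂ (TrivialLieModule.equiv K 𝔤 K).symm.toLinearMap) := fun g x y => by
  simp only [LinearMap.compr₂_apply, trivial_lie_zero]
  rw [hB, map_neg, neg_add_cancel]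

theorem IsEquivariant.lieInvariant {T : V →ₗ[K] V →ₗ[K] TrivialLieModule K 𝔤 K}
    (hT : IsEquivariant 𝔤 T) : LinearMap.BilinForm.lieInvariant 𝔤
      (T.compr₂ (TrivialLieModule.equiv K 𝔤 K).toLinearMap) := fun g x y => by
  have h := hT g x y
  rw [trivial_lie_zero] at h
  simp only [LinearMap.compr₂_apply]
  rw [eq_neg_of_add_eq_zero_left h.symm, map_neg]

variable (K 𝔤 V) in
/-- `V` is symplectic: it admits a nondegenerate `𝔤`-invariant alternating bilinear form. -/
def HasSymplecticForm : Prop :=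
  ∃ B : LinearMap.BilinForm K V, B.IsAlt ∧ B.SeparatingLeft ∧ B.lieInvariant 𝔤

theorem IsEquivariant.eq_zero_of_apply_eq_zero [IsIrreducible K 𝔤 V]
    (hT : IsEquivariant 𝔤 T) {x : V} (hx : T x = 0) (hx0 : x ≠ 0) : T = 0 := by
  let S : LieSubmodule K 𝔤 V :=
    { LinearMap.ker T with
      lie_mem := fun {g a} (ha : T a = 0) => LinearMap.mem_ker.2 <| LinearMap.ext fun y => by
        have h := hT g a y
        rw [ha, LinearMap.zero_apply, lie_zero, LinearMap.zero_apply, add_zero] at h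
        exact h.symm }
  have hxS : x ∈ S := hx
  have hS : S = ⊤ := (eq_bot_or_eq_top S).resolve_left fun h =>
    hx0 ((LieSubmodule.mem_bot x).1 (h ▸ hxS))
  have mem_S (a : V) : a ∈ S := hS ▸ LieSubmodule.mem_top a
  exact LinearMap.ext mem_S

theorem lieSpan_singleton_eq_top [IsIrreducible K 𝔤 V] {v : V} (hv0 : v ≠ 0) :
    LieSubmodule.lieSpan K 𝔤 {v} = ⊤ :=
  (eq_bot_or_eq_top _).resolve_left fun h => hv0 <| (LieSubmodule.mem_bot v).1 <|
    h ▸ LieSubmodule.subset_lieSpan (Set.mem_singleton v)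

end EquivariantBilinear

section Symplectic

variable {K 𝔤 : Type*} [Field K] [CharZero K] [LieRing 𝔤] [LieAlgebra K 𝔤]
  [FiniteDimensional K 𝔤] [IsKilling K 𝔤] {H : LieSubalgebra K 𝔤} [H.IsCartanSubalgebra]
  [IsTriangularizable K H 𝔤] {b : (rootSystem H).Base} {V : Type*}
  [AddCommGroup V] [Module K V] [LieRingModule 𝔤 V] [LieModule K 𝔤 V] [FiniteDimensional K V]
  {μ : Dual K H} {v : V}

theorem IsSingular.oppDual_eq_neg_of_hasSymplecticForm (hv : IsSingular b μ v) (hv0 : v ≠ 0)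
    (hgen : LieSubmodule.lieSpan K 𝔤 {v} = ⊤) (hV : HasSymplecticForm K 𝔤 V) :
    oppDual b μ = -μ ∧ oppOp b V v = -oppVec b v := by
  obtain ⟨B, halt, hsep, hinv⟩ := hV
  let T := B.compr₂ (TrivialLieModule.equiv K 𝔤 K).symm.toLinearMap
  have : FiniteDimensional K (TrivialLieModule K 𝔤 K) :=
    (TrivialLieModule.equiv K 𝔤 K).symm.finiteDimensional
  have hT : IsEquivariant 𝔤 T := isEquivariant_compr₂_equiv_symm 𝔤 hinv
  have hTv0 : T (oppVec b v) v ≠ 0 := fun h => by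
    have hT0 : T = 0 := hv.eq_zero_of_isEquivariant hgen hT h
    exact hv0 (hsep v fun w => LinearMap.congr_fun (LinearMap.congr_fun hT0 v) w)
  have hμ : oppDual b μ = -μ := eq_neg_of_add_eq_zero_left
    (eq_zero_of_mem_weightSpace_of_isTrivial (hv.apply_oppVec_mem_weightSpace hT) hTv0)
  obtain ⟨s, hs⟩ := hv.exists_oppOp_eq_smul_oppVec hgen hμ
  have hskew : T v (oppVec b v) = -T (oppVec b v) v := by
    simp only [T, LinearMap.compr₂_apply]
    rw [← map_neg, LinearMap.IsAlt.neg halt]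
  have hs1 : s = -1 := smul_left_injective K hTv0 <| by
    change s • _ = (-1 : K) • _
    rw [neg_one_smul, ← hskew, ← neg_inj, ← smul_neg, ← hskew, hT.smul_apply_oppVec hs,
      oppOp_eq_self_of_isTrivial, hskew, neg_neg]
  exact ⟨hμ, by rw [hs, hs1, neg_one_smul]⟩

theorem IsSingular.hasSymplecticForm [IsIrreducible K 𝔤 V] (hv : IsSingular b μ v) (hv0 : v ≠ 0)
    (hμ : oppDual b μ = -μ) (hs : oppOp b V v = -oppVec b v) : HasSymplecticForm K 𝔤 V := by
  let e := TrivialLieModule.equiv K 𝔤 K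
  have : FiniteDimensional K (TrivialLieModule K 𝔤 K) := e.symm.finiteDimensional
  have hgen : LieSubmodule.lieSpan K 𝔤 {v} = ⊤ := lieSpan_singleton_eq_top hv0
  obtain ⟨T, hT, hTv⟩ := hv.exists_isEquivariant_of_isTrivial hv0 hgen hμ (e.symm 1)
  have hflip : T + T.flip = 0 := by
    refine hv.eq_zero_of_isEquivariant hgen (hT.add hT.flip) ?_
    have h := hT.smul_apply_oppVec (s := -1) (by rw [hs, neg_one_smul])
    rw [oppOp_eq_self_of_isTrivial] at h
    rw [LinearMap.add_apply, LinearMap.add_apply, LinearMap.flip_apply, ← h, neg_one_smul,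
      neg_add_cancel]
  refine ⟨T.compr₂ e.toLinearMap, fun x => ?_, fun x hx => ?_, hT.lieInvariant⟩
  · have h : T x x + T x x = 0 := LinearMap.congr_fun (LinearMap.congr_fun hflip x) x
    exact add_self_eq_zero.1 (by rw [LinearMap.compr₂_apply, ← map_add]; exact congrArg e h)
  · by_contra hx0
    have hT0 : T = 0 := hT.eq_zero_of_apply_eq_zero
      (LinearMap.ext fun y => e.map_eq_zero_iff.1 (hx y)) hx0
    rw [hT0, LinearMap.zero_apply, LinearMap.zero_apply, eq_comm, e.symm.map_eq_zero_iff] at hTv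
    exact one_ne_zero hTv

theorem IsSingular.hasSymplecticForm_iff [IsIrreducible K 𝔤 V] (hv : IsSingular b μ v)
    (hv0 : v ≠ 0) :
    HasSymplecticForm K 𝔤 V ↔ oppDual b μ = -μ ∧ oppOp b V v = -oppVec b v :=
  ⟨hv.oppDual_eq_neg_of_hasSymplecticForm hv0 (lieSpan_singleton_eq_top hv0),
    fun h => hv.hasSymplecticForm hv0 h.1 h.2⟩

end Symplectic

section DiagramAutomorphism

variable {K 𝔤 : Type*} [Field K] [CharZero K] [LieRing 𝔤] [LieAlgebra K 𝔤]
  [FiniteDimensional K 𝔤] [IsKilling K 𝔤] {H : LieSubalgebra K 𝔤} [H.IsCartanSubalgebra]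
  [IsTriangularizable K H 𝔤] {b : (rootSystem H).Base}

theorem exists_root_eq_of_mem_rootCone_of_apply_rhoCheck {ν : Dual K H} (hν : ν ∈ rootCone b)
    (h2 : ν (rhoCheck b) = 2) : ∃ i : b.support, (rootSystem H).root i = ν := by
  obtain rfl | ⟨i, ξ, hξ, rfl⟩ :
      ν = 0 ∨ ∃ i : b.support, ∃ ξ ∈ rootCone b, (rootSystem H).root i + ξ = ν := by
    induction hν using AddSubmonoid.closure_induction_left with
    | zero => exact Or.inl rfl
    | add_left _ hx ξ hξ _ =>
      obtain ⟨i, hi, rfl⟩ := hx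
      exact Or.inr ⟨⟨i, hi⟩, ξ, hξ, rfl⟩
  · simp at h2
  · have hξ0 : ξ = 0 := eq_zero_of_mem_rootCone_of_apply_rhoCheck hξ
      (by rwa [LinearMap.add_apply, root_rhoCheck b i.2, add_eq_left] at h2)
    exact ⟨i, by rw [hξ0, add_zero]⟩

theorem exists_oppDual_root_eq_neg (i : b.support) :
    ∃ j : b.support, oppDual b ((rootSystem H).root i) = -(rootSystem H).root j := by
  obtain ⟨x, hx⟩ := (oppOp b 𝔤).surjective (rootE i.1)
  have hx0 : x ≠ 0 := fun h =>
    (isSl2Triple_rootE_rootF i.1).e_ne_zero (by rw [← hx, h, map_zero])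
  have hval : oppDual b ((rootSystem H).root i) (rhoCheck b) = -2 := by
    rw [oppDual_apply_rhoCheck, root_rhoCheck b i.2]
  rcases mem_rootCone_or_mem_negCone_of_mem_rootSpace b
    (oppOp_mem_rootSpace_iff.1 (hx ▸ rootE_mem i.1)) hx0 with hpos | hneg
  · obtain ⟨n, hn⟩ := apply_rhoCheck_of_mem_rootCone hpos
    have h0 : ((n + 1 : ℕ) : K) = 0 := by
      push_cast
      linear_combination (hval - hn) / 2
    exact absurd h0 (Nat.cast_ne_zero.2 n.succ_ne_zero)
  · obtain ⟨j, hj⟩ := exists_root_eq_of_mem_rootCone_of_apply_rhoCheck hneg.2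
      (by rw [LinearMap.neg_apply, hval, neg_neg])
    exact ⟨j, by rw [hj, neg_neg]⟩

variable (b) in
/-- The permutation of the simple roots induced by minus the longest element of the Weyl group. -/
noncomputable def oppPerm : Equiv.Perm b.support :=
  Equiv.ofBijective (fun i => (exists_oppDual_root_eq_neg i).choose) <|
    Finite.injective_iff_bijective.1 fun i j hij => by
      have h := (exists_oppDual_root_eq_neg i).choose_spec.trans
        ((congrArg (fun k : b.support => -(rootSystem H).root k) hij).trans
          (exists_oppDual_root_eq_neg j).choose_spec.symm)
      exact Subtype.ext ((rootSystem H).root.injective ((oppDual b).injective h))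

theorem oppDual_root (i : b.support) :
    oppDual b ((rootSystem H).root i) = -(rootSystem H).root (oppPerm b i) :=
  (exists_oppDual_root_eq_neg i).choose_spec

theorem root_oppCartan (i : b.support) (h : H) :
    (rootSystem H).root i (oppCartan b h) = -(rootSystem H).root (oppPerm b i) h :=
  LinearMap.congr_fun (oppDual_root i) h

theorem oppCartan_coroot (i : b.support) :
    oppCartan b ((rootSystem H).coroot (oppPerm b i)) = -(rootSystem H).coroot i := by
  have hE : oppOp b 𝔤 (rootE (oppPerm b i).1) ∈ rootSpace H ⇑(-(rootSystem H).root i) := by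
    rw [oppOp_mem_rootSpace_iff, map_neg, oppDual_root, neg_neg]
    exact rootE_mem (oppPerm b i).1
  have hF : oppOp b 𝔤 (rootF (oppPerm b i).1) ∈ rootSpace H ((rootSystem H).root i) := by
    rw [oppOp_mem_rootSpace_iff, oppDual_root]
    exact rootF_mem (oppPerm b i).1
  have hmem : -oppCartan b ((rootSystem H).coroot (oppPerm b i)) ∈
      corootSpace (i.1.1 : H → K) := by
    refine (mem_corootSpace _).2 (Submodule.subset_span ⟨_, hF, _, hE, ?_⟩)
    rw [← oppOp_lie, ← lie_skew, (isSl2Triple_rootE_rootF _).lie_e_f, map_neg]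
    rfl
  rw [rootSystem_coroot_apply _ i.1, ← eq_coroot_of_mem_corootSpace_of_two i.1.1 hmem, neg_neg]
  have h2 : (rootSystem H).root (oppPerm b i) ((rootSystem H).coroot (oppPerm b i)) = 2 :=
    (rootSystem H).root_coroot_two _
  change (rootSystem H).root i (-_) = 2
  rw [map_neg, root_oppCartan, neg_neg, h2]

theorem rhoCheckCoeff_oppPerm (i : b.support) :
    rhoCheckCoeff b (oppPerm b i) = rhoCheckCoeff b i := by
  have hsum : ∑ j, (rhoCheckCoeff b (oppPerm b j) : K) • (rootSystem H).coroot j =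
      ∑ j, (rhoCheckCoeff b j : K) • (rootSystem H).coroot j := by
    rw [sum_rhoCheckCoeff, ← neg_inj, ← oppCartan_rhoCheck, ← sum_rhoCheckCoeff b, map_sum,
      ← Equiv.sum_comp (oppPerm b) fun j => oppCartan b _, ← Finset.sum_neg_distrib]
    exact Finset.sum_congr rfl fun j _ => by rw [map_smul, oppCartan_coroot, smul_neg]
  exact_mod_cast Fintype.linearIndependent_iffₛ.1 b.linearIndepOn_coroot _ _ hsum i

theorem apply_coroot_oppPerm {μ : Dual K H} (hμ : oppDual b μ = -μ) (i : b.support) :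
    μ ((rootSystem H).coroot (oppPerm b i)) = μ ((rootSystem H).coroot i) := by
  rw [← neg_inj, ← LinearMap.neg_apply, ← hμ, oppDual_apply, oppCartan_coroot, map_neg]

end DiagramAutomorphism

section Involutions

variable {K X : Type*} [Field K] [AddCommGroup X] [Module K X]

theorem trace_eq_finrank_ker_sub_finrank_ker [NeZero (2 : K)] [FiniteDimensional K X]
    {f : X →ₗ[K] X} (hf : ∀ x, f (f x) = x) :
    LinearMap.trace K X f = (finrank K (LinearMap.ker (f - LinearMap.id)) : K) -
      finrank K (LinearMap.ker (f + LinearMap.id)) := by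
  have h2 : (2 : K) ≠ 0 := two_ne_zero
  have hplus : LinearMap.IsProj (LinearMap.ker (f - LinearMap.id))
      ((2 : K)⁻¹ • (LinearMap.id + f)) := by
    refine ⟨fun x => ?_, fun x hx => ?_⟩
    · simp [hf, add_comm]
    · have hfx : f x = x := sub_eq_zero.1 hx
      simp [hfx, ← two_smul K, h2]
  have hminus : LinearMap.IsProj (LinearMap.ker (f + LinearMap.id))
      ((2 : K)⁻¹ • (LinearMap.id - f)) := by
    refine ⟨fun x => ?_, fun x hx => ?_⟩
    · simp [hf]
    · have hfx : f x = -x := eq_neg_of_add_eq_zero_left hx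
      simp [hfx, ← two_smul K, h2]
  rw [← hplus.trace, ← hminus.trace, ← map_sub, ← smul_sub, add_sub_sub_cancel, ← two_smul K f,
    inv_smul_smul₀ h2]

theorem trace_restrict_eq_finrank_inf_ker_sub_finrank_inf_ker [NeZero (2 : K)] {f : X →ₗ[K] X}
    (hf : ∀ x, f (f x) = x) {W : Submodule K X} [FiniteDimensional K W]
    (hW : ∀ x ∈ W, f x ∈ W) :
    LinearMap.trace K W (f.restrict hW) =
      (finrank K (W ⊓ LinearMap.ker (f - LinearMap.id) : Submodule K X) : K) -
        finrank K (W ⊓ LinearMap.ker (f + LinearMap.id) : Submodule K X) := by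
  have finrank_inf {U : Submodule K X} {U' : Submodule K W} (hU : U' = U.comap W.subtype) :
      finrank K (W ⊓ U : Submodule K X) = finrank K U' := by
    rw [hU, ← Submodule.map_comap_subtype, Submodule.finrank_map_subtype_eq]
  rw [trace_eq_finrank_ker_sub_finrank_ker fun x => Subtype.ext (hf x),
    finrank_inf (U' := LinearMap.ker (f.restrict hW - LinearMap.id)),
    finrank_inf (U' := LinearMap.ker (f.restrict hW + LinearMap.id))]
  · ext x
    exact Subtype.ext_iff
  · ext x
    exact Subtype.ext_iff

theorem trace_funLeft {ι : Type*} [Finite ι] (σ : Equiv.Perm ι) :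
    LinearMap.trace K (ι → K) (LinearMap.funLeft K K σ) = (Function.fixedPoints σ).ncard := by
  have := Fintype.ofFinite ι
  have h : LinearMap.funLeft K K σ = Matrix.toLin' (σ.permMatrix K) :=
    LinearMap.ext fun _ => (Matrix.permMatrix_mulVec _).symm
  rw [h, Matrix.trace_toLin'_eq, Matrix.trace_permutation]

end Involutions

section EquivariantFlip

variable {K 𝔤 V Y : Type*} [Field K] [LieRing 𝔤] [LieAlgebra K 𝔤]
  [AddCommGroup V] [Module K V] [LieRingModule 𝔤 V] [LieModule K 𝔤 V]
  [AddCommGroup Y] [Module K Y] [LieRingModule 𝔤 Y] [LieModule K 𝔤 Y] {T : V →ₗ[K] V →ₗ[K] Y}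

theorem mem_maxTrivSubmodule_iff_isEquivariant :
    T ∈ maxTrivSubmodule K 𝔤 (V →ₗ[K] V →ₗ[K] Y) ↔ IsEquivariant 𝔤 T := by
  rw [mem_maxTrivSubmodule]
  refine forall_congr' fun g => ⟨fun h x y => ?_, fun h => ?_⟩
  · have hxy := LinearMap.congr_fun (LinearMap.congr_fun h x) y
    rw [LieHom.lie_apply, LinearMap.sub_apply, LieHom.lie_apply, LinearMap.zero_apply,
      LinearMap.zero_apply, sub_sub, sub_eq_zero, add_comm] at hxy
    exact hxy
  · ext x y
    rw [LieHom.lie_apply, LinearMap.sub_apply, LieHom.lie_apply, h]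
    simp

theorem lflip_mem_maxTrivSubmodule (hT : T ∈ maxTrivSubmodule K 𝔤 (V →ₗ[K] V →ₗ[K] Y)) :
    LinearMap.lflip (R₀ := K) T ∈ maxTrivSubmodule K 𝔤 (V →ₗ[K] V →ₗ[K] Y) :=
  mem_maxTrivSubmodule_iff_isEquivariant.2 (mem_maxTrivSubmodule_iff_isEquivariant.1 hT).flip

variable (K 𝔤 V Y) in
/-- The exchange of the two arguments on the space of equivariant bilinear maps `V × V → Y`. -/
def equivariantFlip : Module.End K (maxTrivSubmodule K 𝔤 (V →ₗ[K] V →ₗ[K] Y)) :=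
  (LinearMap.lflip (R₀ := K)).toLinearMap.restrict
    (q := (maxTrivSubmodule K 𝔤 (V →ₗ[K] V →ₗ[K] Y)).toSubmodule)
    fun _ => lflip_mem_maxTrivSubmodule

end EquivariantFlip

section CartanValue

variable {K 𝔤 : Type*} [Field K] [CharZero K] [LieRing 𝔤] [LieAlgebra K 𝔤]
  [FiniteDimensional K 𝔤] [IsKilling K 𝔤] {H : LieSubalgebra K 𝔤} [H.IsCartanSubalgebra]
  [IsTriangularizable K H 𝔤] {b : (rootSystem H).Base}

variable (b) in
/-- The coordinates of the Cartan subalgebra given by the values of the simple roots. -/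
noncomputable def simpleRootCoords : H ≃ₗ[K] (b.support → K) :=
  (evalEquiv K H).trans (b.toWeightBasis.constr K).symm

theorem simpleRootCoords_apply (h : H) (i : b.support) :
    simpleRootCoords b h i = (rootSystem H).root i h := by
  rw [← b.toWeightBasis_apply i]
  rfl

theorem lie_rootF_coe (i : H.root) (h : H) :
    ⁅rootF i, (h : 𝔤)⁆ = (rootSystem H).root i h • rootF i := by
  rw [← lie_skew, mem_rootSpace_iff.1 (rootF_mem i) h, LinearMap.neg_apply, neg_smul, neg_neg]

variable {V : Type*} [AddCommGroup V] [Module K V] [LieRingModule 𝔤 V] [LieModule K 𝔤 V]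
  [FiniteDimensional K V] {μ : Dual K H} {v : V} {T : V →ₗ[K] V →ₗ[K] 𝔤}

theorem IsSingular.eq_zero_of_isEquivariant_of_oppDual_ne_neg (hv : IsSingular b μ v)
    (hgen : LieSubmodule.lieSpan K 𝔤 {v} = ⊤) (hT : IsEquivariant 𝔤 T) (hμ : oppDual b μ ≠ -μ) :
    T = 0 := by
  have hmem : T (oppVec b v) v ∈ rootSpace H ⇑(oppDual b μ + μ) :=
    weightSpace_le_genWeightSpace 𝔤 _ (hv.apply_oppVec_mem_weightSpace hT)
  refine hv.eq_zero_of_isEquivariant hgen hT (by_contra fun h0 => hμ ?_)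
  refine eq_neg_of_add_eq_zero_left (eq_zero_of_apply_rhoCheck_eq_zero (b := b) hmem h0 ?_)
  rw [LinearMap.add_apply, oppDual_apply_rhoCheck, neg_add_cancel]

theorem IsSingular.apply_oppVec_mem_cartan (hv : IsSingular b μ v) (hμ : oppDual b μ = -μ)
    (hT : IsEquivariant 𝔤 T) : T (oppVec b v) v ∈ H := by
  have h := hv.apply_oppVec_mem_weightSpace hT
  rw [hμ, neg_add_cancel] at h
  exact mem_rootSpace_zero_iff.1 (weightSpace_le_genWeightSpace 𝔤 _ h)

/-- The value at (lowest) `⊗` (highest), by which an equivariant map `V × V → 𝔤` is determined. -/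
noncomputable def IsSingular.cartanValue (hv : IsSingular b μ v) (hμ : oppDual b μ = -μ) :
    maxTrivSubmodule K 𝔤 (V →ₗ[K] V →ₗ[K] 𝔤) →ₗ[K] H :=
  LinearMap.codRestrict H.toSubmodule
    (LinearMap.applyₗ v ∘ₗ LinearMap.applyₗ (oppVec b v) ∘ₗ Submodule.subtype _)
    fun T => hv.apply_oppVec_mem_cartan hμ (mem_maxTrivSubmodule_iff_isEquivariant.1 T.2)

theorem IsSingular.coe_cartanValue (hv : IsSingular b μ v) (hμ : oppDual b μ = -μ)
    (T : maxTrivSubmodule K 𝔤 (V →ₗ[K] V →ₗ[K] 𝔤)) :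
    (hv.cartanValue hμ T : 𝔤) = T.1 (oppVec b v) v := rfl

theorem IsSingular.cartanValue_injective (hv : IsSingular b μ v)
    (hgen : LieSubmodule.lieSpan K 𝔤 {v} = ⊤) (hμ : oppDual b μ = -μ) :
    Function.Injective (hv.cartanValue hμ) :=
  (injective_iff_map_eq_zero _).2 fun T hT => Subtype.ext <| hv.eq_zero_of_isEquivariant hgen
    (mem_maxTrivSubmodule_iff_isEquivariant.1 T.2) <| by
      rw [← hv.coe_cartanValue hμ, hT, ZeroMemClass.coe_zero]

theorem IsSingular.root_cartanValue_eq_zero (hv : IsSingular b μ v) (hμ : oppDual b μ = -μ)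
    (T : maxTrivSubmodule K 𝔤 (V →ₗ[K] V →ₗ[K] 𝔤)) {i : H.root} (hi : i ∈ b.support)
    (hμi : μ ((rootSystem H).coroot i) = 0) :
    (rootSystem H).root i (hv.cartanValue hμ T) = 0 := by
  have hT := mem_maxTrivSubmodule_iff_isEquivariant.1 T.2 (rootF i) (oppVec b v) v
  have hfv : ⁅rootF i, v⁆ = 0 := by
    simpa using hv.pow_rootF_eq_zero hi (k := 0) (by rw [hμi, Nat.cast_zero])
  rw [hv.lie_oppVec_eq_zero (rootF_mem_negPart hi), hfv, map_zero, map_zero, LinearMap.zero_apply,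
    add_zero, ← hv.coe_cartanValue hμ, lie_rootF_coe] at hT
  exact (smul_eq_zero.1 hT).resolve_right (isSl2Triple_rootE_rootF i).f_ne_zero

theorem IsSingular.exists_cartanValue_eq (hv : IsSingular b μ v) (hv0 : v ≠ 0)
    (hgen : LieSubmodule.lieSpan K 𝔤 {v} = ⊤) (hμ : oppDual b μ = -μ) {h : H}
    (hh : ∀ i ∈ b.support, μ ((rootSystem H).coroot i) = 0 → (rootSystem H).root i h = 0) :
    ∃ T, hv.cartanValue hμ T = h := by
  choose! k hk using hv.isDominant hv0
  have hh0 : (h : 𝔤) ∈ weightSpace 𝔤 (0 : Dual K H) :=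
    (LieModule.mem_weightSpace _ _).2 (mem_rootSpace_iff.1 (mem_rootSpace_zero_iff.2 h.2))
  obtain ⟨T, hT, hTh⟩ := hv.exists_isEquivariant hv0 hgen hμ hk hh0 fun i hi => by
    rcases hki : k i with _ | n
    · rw [zero_add, pow_one, toEnd_apply_apply, lie_rootF_coe,
        hh i hi (by rw [hk i hi, hki, Nat.cast_zero]), zero_smul]
    · simp [pow_succ, lie_rootF_coe]
  exact ⟨⟨T, mem_maxTrivSubmodule_iff_isEquivariant.2 hT⟩, Subtype.ext hTh⟩

theorem IsSingular.smul_cartanValue_equivariantFlip (hv : IsSingular b μ v)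
    (hμ : oppDual b μ = -μ) {s : K} (hs : oppOp b V v = s • oppVec b v)
    (T : maxTrivSubmodule K 𝔤 (V →ₗ[K] V →ₗ[K] 𝔤)) :
    s • hv.cartanValue hμ (equivariantFlip K 𝔤 V 𝔤 T) = oppCartan b (hv.cartanValue hμ T) :=
  Subtype.ext ((mem_maxTrivSubmodule_iff_isEquivariant.1 T.2).smul_apply_oppVec hs)

variable (b μ) in
/-- The simple roots which are not orthogonal to `μ`. -/
abbrev SimpleSupport : Type _ := {i : b.support // μ ((rootSystem H).coroot i) ≠ 0}

/-- The values of the simple roots at `cartanValue`, as coordinates on the space of equivariant maps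
`V × V → 𝔤`. -/
noncomputable def IsSingular.cartanCoords (hv : IsSingular b μ v) (hv0 : v ≠ 0)
    (hgen : LieSubmodule.lieSpan K 𝔤 {v} = ⊤) (hμ : oppDual b μ = -μ) :
    maxTrivSubmodule K 𝔤 (V →ₗ[K] V →ₗ[K] 𝔤) ≃ₗ[K] (SimpleSupport b μ → K) :=
  LinearEquiv.ofBijective
    (LinearMap.funLeft K K Subtype.val ∘ₗ (simpleRootCoords b).toLinearMap ∘ₗ
      hv.cartanValue hμ) <| by
    refine ⟨(injective_iff_map_eq_zero _).2 fun T hT => hv.cartanValue_injective hgen hμ ?_,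
      fun a => ?_⟩
    · refine (simpleRootCoords b).injective (funext fun i => ?_)
      rw [map_zero, map_zero, Pi.zero_apply]
      by_cases hi : μ ((rootSystem H).coroot i) = 0
      · rw [simpleRootCoords_apply, hv.root_cartanValue_eq_zero hμ T i.2 hi]
      · exact congrFun hT ⟨i, hi⟩
    · obtain ⟨h, hh⟩ := (simpleRootCoords b).surjective
        fun i => if hi : μ ((rootSystem H).coroot i) ≠ 0 then a ⟨i, hi⟩ else 0
      obtain ⟨T, rfl⟩ := hv.exists_cartanValue_eq hv0 hgen hμ (h := h) fun i hi hμi => by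
        rw [← simpleRootCoords_apply _ ⟨i, hi⟩]
        exact (congrFun hh ⟨i, hi⟩).trans (dif_neg (not_not.2 hμi))
      exact ⟨T, funext fun i => (congrFun hh i.1).trans (dif_pos i.2)⟩

theorem IsSingular.cartanCoords_apply (hv : IsSingular b μ v) (hv0 : v ≠ 0)
    (hgen : LieSubmodule.lieSpan K 𝔤 {v} = ⊤) (hμ : oppDual b μ = -μ)
    (T : maxTrivSubmodule K 𝔤 (V →ₗ[K] V →ₗ[K] 𝔤)) (i : SimpleSupport b μ) :
    hv.cartanCoords hv0 hgen hμ T i = (rootSystem H).root i.1 (hv.cartanValue hμ T) :=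
  simpleRootCoords_apply _ i.1

end CartanValue

section TraceOfFlip

variable {K 𝔤 : Type*} [Field K] [CharZero K] [LieRing 𝔤] [LieAlgebra K 𝔤]
  [FiniteDimensional K 𝔤] [IsKilling K 𝔤] {H : LieSubalgebra K 𝔤} [H.IsCartanSubalgebra]
  [IsTriangularizable K H 𝔤] {b : (rootSystem H).Base} {V : Type*}
  [AddCommGroup V] [Module K V] [LieRingModule 𝔤 V] [LieModule K 𝔤 V]
  [FiniteDimensional K V] {μ : Dual K H} {v : V} {s : K}

/-- The permutation `oppPerm` restricted to the simple roots not orthogonal to `μ`. -/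
noncomputable def supportPerm (hμ : oppDual b μ = -μ) : Equiv.Perm (SimpleSupport b μ) :=
  (oppPerm b).subtypePerm fun i => by rw [apply_coroot_oppPerm hμ]

theorem IsSingular.smul_cartanCoords_equivariantFlip (hv : IsSingular b μ v) (hv0 : v ≠ 0)
    (hgen : LieSubmodule.lieSpan K 𝔤 {v} = ⊤) (hμ : oppDual b μ = -μ)
    (hs : oppOp b V v = s • oppVec b v) (T : maxTrivSubmodule K 𝔤 (V →ₗ[K] V →ₗ[K] 𝔤)) :
    s • hv.cartanCoords hv0 hgen hμ (equivariantFlip K 𝔤 V 𝔤 T) =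
      -(hv.cartanCoords hv0 hgen hμ T ∘ supportPerm hμ) := by
  ext i
  rw [Pi.smul_apply, Pi.neg_apply, Function.comp_apply, hv.cartanCoords_apply,
    hv.cartanCoords_apply, ← map_smul, hv.smul_cartanValue_equivariantFlip hμ hs, root_oppCartan]
  rfl

theorem IsSingular.smul_trace_equivariantFlip (hv : IsSingular b μ v) (hv0 : v ≠ 0)
    (hgen : LieSubmodule.lieSpan K 𝔤 {v} = ⊤) (hμ : oppDual b μ = -μ)
    (hs : oppOp b V v = s • oppVec b v) :
    s • LinearMap.trace K _ (equivariantFlip K 𝔤 V 𝔤) =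
      -((Function.fixedPoints (supportPerm hμ)).ncard : K) := by
  let Φ := hv.cartanCoords hv0 hgen hμ
  have hconj : s • Φ.conj (equivariantFlip K 𝔤 V 𝔤) =
      -LinearMap.funLeft K K (supportPerm hμ) := by
    refine LinearMap.ext fun a => ?_
    obtain ⟨T, rfl⟩ := Φ.surjective a
    rw [LinearMap.smul_apply, LinearEquiv.conj_apply_apply, Φ.symm_apply_apply]
    exact hv.smul_cartanCoords_equivariantFlip hv0 hgen hμ hs T
  rw [← LinearMap.trace_conj' _ Φ, ← map_smul, hconj, map_neg, trace_funLeft]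

theorem IsSingular.supportPerm_supportPerm (hv : IsSingular b μ v) (hv0 : v ≠ 0)
    (hgen : LieSubmodule.lieSpan K 𝔤 {v} = ⊤) (hμ : oppDual b μ = -μ)
    (hs : oppOp b V v = -oppVec b v) (i : SimpleSupport b μ) :
    supportPerm hμ (supportPerm hμ i) = i := by
  let Φ := hv.cartanCoords hv0 hgen hμ
  have hflip (T) : Φ (equivariantFlip K 𝔤 V 𝔤 T) = Φ T ∘ supportPerm hμ := by
    have h := hv.smul_cartanCoords_equivariantFlip hv0 hgen hμ (s := -1)
      (by rw [hs, neg_one_smul]) T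
    rwa [neg_one_smul, neg_inj] at h
  obtain ⟨T, hT⟩ := Φ.surjective (Pi.single i 1)
  have h1 : Φ (equivariantFlip K 𝔤 V 𝔤 (equivariantFlip K 𝔤 V 𝔤 T)) i = 1 :=
    (congrFun hT i).trans (Pi.single_eq_same i 1)
  rw [hflip, hflip, hT, Function.comp_apply, Function.comp_apply, Pi.single_apply] at h1
  exact of_not_not fun h => zero_ne_one ((if_neg h).symm.trans h1)

theorem apply_rhoCheck_eq_natCast_sum {k : H.root → ℕ}
    (hk : ∀ i ∈ b.support, μ ((rootSystem H).coroot i) = k i) :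
    μ (rhoCheck b) = (∑ i : SimpleSupport b μ, rhoCheckCoeff b i.1 * k i.1 : ℕ) := by
  have hterm (i : b.support) :
      μ ((rhoCheckCoeff b i : K) • (rootSystem H).coroot i) = (rhoCheckCoeff b i * k i : ℕ) := by
    rw [map_smul, hk i i.2, smul_eq_mul, Nat.cast_mul]
  rw [← sum_rhoCheckCoeff b, map_sum, Finset.sum_congr rfl fun i _ => hterm i, ← Nat.cast_sum]
  rw [← Fintype.sum_subtype_add_sum_subtype
    (fun i : b.support => μ ((rootSystem H).coroot i) ≠ 0), add_eq_left.2]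
  refine Finset.sum_eq_zero fun i _ => ?_
  have hi : (k i.1 : K) = 0 := (hk _ i.1.2).symm.trans (not_not.1 i.2)
  rw [Nat.cast_eq_zero.1 hi, mul_zero]

/-- Pairing the factors of `(-1) ^ μ (rhoCheck b)` along a fixed point free involution would give
the sign `1`. -/
theorem IsSingular.fixedPoints_supportPerm_nonempty (hv : IsSingular b μ v) (hv0 : v ≠ 0)
    (hgen : LieSubmodule.lieSpan K 𝔤 {v} = ⊤) (hμ : oppDual b μ = -μ)
    (hs : oppOp b V v = -oppVec b v) : (Function.fixedPoints (supportPerm hμ)).Nonempty := by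
  by_contra hempty
  choose! k hk using hv.isDominant hv0
  have hkσ (i : SimpleSupport b μ) : k (supportPerm hμ i).1 = k i.1 := by
    rw [← Nat.cast_inj (R := K), ← hk _ i.1.2, ← hk _ (supportPerm hμ i).1.2]
    exact apply_coroot_oppPerm hμ i.1
  have hcσ (i : SimpleSupport b μ) :
      rhoCheckCoeff b (supportPerm hμ i).1 = rhoCheckCoeff b i.1 := rhoCheckCoeff_oppPerm i.1
  have hprod : ∏ i : SimpleSupport b μ, (-1 : K) ^ (rhoCheckCoeff b i.1 * k i.1) = 1 := by
    refine Finset.prod_involution (fun i _ => supportPerm hμ i) (fun i _ => ?_)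
      (fun i _ _ hi => hempty ⟨i, hi⟩) (fun _ _ => Finset.mem_univ _)
      fun i _ => hv.supportPerm_supportPerm hv0 hgen hμ hs i
    rw [hkσ, hcσ, ← pow_add, (Even.add_self _).neg_one_pow]
  have hsign := hv.oppOp_eq_neg_one_pow_smul_oppVec hv0 hgen hμ (apply_rhoCheck_eq_natCast_sum hk)
  rw [← Finset.prod_pow_eq_pow_sum, hprod, one_smul, hs, neg_eq_iff_add_eq_zero,
    ← two_smul K] at hsign
  exact hv0 <| (oppOp b V).symm.map_eq_zero_iff.1 <|
    (smul_eq_zero.1 hsign).resolve_left two_ne_zero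

theorem IsSingular.trace_equivariantFlip_eq_zero (hv : IsSingular b μ v)
    (hgen : LieSubmodule.lieSpan K 𝔤 {v} = ⊤) (hμ : oppDual b μ ≠ -μ) :
    LinearMap.trace K _ (equivariantFlip K 𝔤 V 𝔤) = 0 := by
  have hzero : equivariantFlip K 𝔤 V 𝔤 = 0 := LinearMap.ext fun T => Subtype.ext <|
    hv.eq_zero_of_isEquivariant_of_oppDual_ne_neg hgen
      (mem_maxTrivSubmodule_iff_isEquivariant.1 (equivariantFlip K 𝔤 V 𝔤 T).2) hμ
  rw [hzero, map_zero]

theorem IsSingular.hasSymplecticForm_iff_trace_equivariantFlip [IsIrreducible K 𝔤 V]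
    (hv : IsSingular b μ v) (hv0 : v ≠ 0) :
    HasSymplecticForm K 𝔤 V ↔
      ∃ n : ℕ, 0 < n ∧ LinearMap.trace K _ (equivariantFlip K 𝔤 V 𝔤) = n := by
  have hgen : LieSubmodule.lieSpan K 𝔤 {v} = ⊤ := lieSpan_singleton_eq_top hv0
  rw [hv.hasSymplecticForm_iff hv0]
  refine ⟨fun ⟨hμ, hs⟩ => ?_, fun ⟨n, hn, htrace⟩ => ?_⟩
  · have h := hv.smul_trace_equivariantFlip hv0 hgen hμ (s := -1) (by rw [hs, neg_one_smul])
    rw [neg_one_smul, neg_inj] at h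
    exact ⟨_, (Set.ncard_pos).2 (hv.fixedPoints_supportPerm_nonempty hv0 hgen hμ hs), h⟩
  · have hμ : oppDual b μ = -μ := by
      by_contra hμ
      rw [hv.trace_equivariantFlip_eq_zero hgen hμ, eq_comm, Nat.cast_eq_zero] at htrace
      exact hn.ne' htrace
    choose! k hk using hv.isDominant hv0
    have hsign := hv.oppOp_eq_neg_one_pow_smul_oppVec hv0 hgen hμ (apply_rhoCheck_eq_natCast_sum hk)
    refine ⟨hμ, ?_⟩
    rcases neg_one_pow_eq_or K (∑ i : SimpleSupport b μ, rhoCheckCoeff b i.1 * k i.1) with h1 | h1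
    · rw [h1] at hsign
      have h := hv.smul_trace_equivariantFlip hv0 hgen hμ hsign
      rw [one_smul, htrace, eq_neg_iff_add_eq_zero, ← Nat.cast_add, Nat.cast_eq_zero] at h
      omega
    · rw [hsign, h1, neg_one_smul]

end TraceOfFlip

section Duality

variable {K 𝔤 V V' : Type*} [Field K] [LieRing 𝔤]
  [AddCommGroup V] [Module K V] [LieRingModule 𝔤 V]
  [AddCommGroup V'] [Module K V'] [LieRingModule 𝔤 V']

theorem HasSymplecticForm.congr (hV : HasSymplecticForm K 𝔤 V) (e : V' ≃ₗ⁅K,𝔤⁆ V) :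
    HasSymplecticForm K 𝔤 V' := by
  obtain ⟨B, halt, hsep, hinv⟩ := hV
  refine ⟨B.compl₁₂ e.toLinearMap e.toLinearMap, fun x => halt (e x), fun x hx => ?_,
    fun g x y => ?_⟩
  · refine e.injective ((hsep (e x) fun w => ?_).trans (map_zero e).symm)
    rw [← e.apply_symm_apply w]
    exact hx (e.symm w)
  · change B (e ⁅g, x⁆) (e y) = -B (e x) (e ⁅g, y⁆)
    have he (z : V') : e ⁅g, z⁆ = ⁅g, e z⁆ := e.toLieModuleHom.map_lie g z
    rw [he, he, hinv]

variable [LieAlgebra K 𝔤] [LieModule K 𝔤 V] [FiniteDimensional K V]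

theorem HasSymplecticForm.dual (hV : HasSymplecticForm K 𝔤 V) :
    HasSymplecticForm K 𝔤 (Dual K V) := by
  have hV' := hV
  obtain ⟨B, -, hsep, hinv⟩ := hV
  have hinj : Function.Injective B :=
    (injective_iff_map_eq_zero B).2 fun x hx => hsep x (LinearMap.congr_fun hx)
  let e : V ≃ₗ⁅K,𝔤⁆ Dual K V :=
    { LinearEquiv.ofInjectiveOfFinrankEq B hinj Subspace.dual_finrank_eq.symm with
      map_lie' := fun {g x} => LinearMap.ext fun y => hinv g x y }
  exact hV'.congr e.symm

variable (K 𝔤 V) in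
/-- The canonical isomorphism of `V` with its double dual, as an isomorphism of representations. -/
noncomputable def lieEvalEquiv : V ≃ₗ⁅K,𝔤⁆ Dual K (Dual K V) :=
  { evalEquiv K V with
    map_lie' := fun {g x} => LinearMap.ext fun φ => by
      change φ ⁅g, x⁆ = -(⁅g, φ⁆ x)
      rw [Dual.lie_apply, neg_neg] }

theorem hasSymplecticForm_dual_iff :
    HasSymplecticForm K 𝔤 (Dual K V) ↔ HasSymplecticForm K 𝔤 V :=
  ⟨fun h => h.dual.congr (lieEvalEquiv K 𝔤 V), fun h => h.dual⟩

/-- The subrepresentation of `V` on which a subrepresentation of its dual vanishes. -/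
def lieDualCoannihilator (S : LieSubmodule K 𝔤 (Dual K V)) : LieSubmodule K 𝔤 V :=
  { S.toSubmodule.dualCoannihilator with
    lie_mem := fun {g x} hx => (Submodule.mem_dualCoannihilator ⁅g, x⁆).2 fun φ hφ => by
      have h := (Submodule.mem_dualCoannihilator x).1 hx ⁅g, (φ : Dual K V)⁆ (S.lie_mem hφ)
      rwa [Dual.lie_apply, neg_eq_zero] at h }

theorem dualAnnihilator_lieDualCoannihilator (S : LieSubmodule K 𝔤 (Dual K V)) :
    (lieDualCoannihilator S).toSubmodule.dualAnnihilator = S.toSubmodule :=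
  Subspace.dualCoannihilator_dualAnnihilator_eq

theorem isIrreducible_dual [IsIrreducible K 𝔤 V] : IsIrreducible K 𝔤 (Dual K V) := by
  have : Nontrivial V := (LieSubmodule.nontrivial_iff K 𝔤 V).1 inferInstance
  have : Nontrivial (LieSubmodule K 𝔤 (Dual K V)) :=
    (LieSubmodule.nontrivial_iff K 𝔤 _).2 inferInstance
  refine ⟨fun S => ?_⟩
  have hS := dualAnnihilator_lieDualCoannihilator S
  rcases eq_bot_or_eq_top (lieDualCoannihilator S) with h | h
  · right
    rw [← LieSubmodule.toSubmodule_eq_top, ← hS, h, LieSubmodule.bot_toSubmodule,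
      Submodule.dualAnnihilator_bot]
  · left
    rw [← LieSubmodule.toSubmodule_eq_bot, ← hS, h, LieSubmodule.top_toSubmodule,
      Submodule.dualAnnihilator_top]

end Duality

section DualSingular

variable {K 𝔤 : Type*} [Field K] [CharZero K] [LieRing 𝔤] [LieAlgebra K 𝔤]
  [FiniteDimensional K 𝔤] [IsKilling K 𝔤] {H : LieSubalgebra K 𝔤} [H.IsCartanSubalgebra]
  [IsTriangularizable K H 𝔤] {b : (rootSystem H).Base} {V : Type*}
  [AddCommGroup V] [Module K V] [LieRingModule 𝔤 V] [LieModule K 𝔤 V]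
  [FiniteDimensional K V] {μ : Dual K H} {v : V}

variable (K 𝔤 V) in
/-- Functionals on `V`, regarded as maps to the trivial representation, are the dual of `V`. -/
def homTrivialToDual : (V →ₗ[K] TrivialLieModule K 𝔤 K) →ₗ⁅K,𝔤⁆ Dual K V :=
  { (TrivialLieModule.equiv K 𝔤 K).toLinearMap.compRight K with
    map_lie' := fun {g τ} => LinearMap.ext fun x => by
      change TrivialLieModule.equiv K 𝔤 K (⁅g, τ⁆ x) = -TrivialLieModule.equiv K 𝔤 K (τ ⁅g, x⁆)
      rw [LieHom.lie_apply, trivial_lie_zero, zero_sub, map_neg] }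

/-- The lowest weight vector of the dual takes the value `1` at `v` and is invariant under
the negative part; the longest element turns it into a singular vector. -/
theorem IsSingular.exists_isSingular_dual (hv : IsSingular b μ v) (hv0 : v ≠ 0)
    (hgen : LieSubmodule.lieSpan K 𝔤 {v} = ⊤) :
    ∃ (ν : Dual K H) (φ : Dual K V), φ ≠ 0 ∧ IsSingular b ν φ := by
  let e := TrivialLieModule.equiv K 𝔤 K
  have : FiniteDimensional K (TrivialLieModule K 𝔤 K) := e.symm.finiteDimensional
  choose! k hk using hv.isDominant hv0
  obtain ⟨τ, hτv, hτ⟩ := hv.exists_linearMap (u := e.symm 1) hv0 hgen hk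
    (fun i hi => hv.pow_rootF_eq_zero hi (hk i hi)) fun i _ => by
      rw [pow_succ', Module.End.mul_apply, toEnd_apply_apply, trivial_lie_zero]
  have hτneg (y) (hy : y ∈ negPart b) : ⁅y, τ⁆ = 0 := LinearMap.ext fun a => by
    rw [LieHom.lie_apply, hτ y hy, sub_self, LinearMap.zero_apply]
  obtain ⟨ν, hν⟩ := (oppDual b).surjective (0 - μ)
  have hτν : τ ∈ weightSpace (V →ₗ[K] TrivialLieModule K 𝔤 K) (oppDual b ν) := by
    rw [hν]
    refine hv.linearMap_mem_weightSpace hgen hτneg <| (LieModule.mem_weightSpace _ _).2 fun h => ?_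
    rw [LieSubalgebra.coe_bracket_of_module, trivial_lie_zero, LinearMap.zero_apply, zero_smul]
  refine ⟨ν, _, fun h0 => ?_, (isSingular_oppOp hτν hτneg).map (homTrivialToDual K 𝔤 V)⟩
  have hτ0 : τ = 0 := (oppOp b _).map_eq_zero_iff.1 h0
  rw [hτ0, LinearMap.zero_apply, eq_comm, e.symm.map_eq_zero_iff] at hτv
  exact one_ne_zero hτv

end DualSingular

section Contraction

variable (K 𝔤 Y V : Type*) [Field K] [LieRing 𝔤] [LieAlgebra K 𝔤]
  [AddCommGroup V] [Module K V] [LieRingModule 𝔤 V] [LieModule K 𝔤 V] [FiniteDimensional K V]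
  [AddCommGroup Y] [Module K Y] [LieRingModule 𝔤 Y] [LieModule K 𝔤 Y]

/-- The exchange of the last two factors of `Y ⊗ V ⊗ V`. -/
def tensorSwap : Y ⊗[K] (V ⊗[K] V) →ₗ[K] Y ⊗[K] (V ⊗[K] V) :=
  LinearMap.lTensor Y (TensorProduct.comm K V V).toLinearMap

/-- The contraction of `Y ⊗ V ⊗ V` with two functionals on `V`. -/
noncomputable def contraction :
    Y ⊗[K] (V ⊗[K] V) ≃ₗ[K] (Dual K V →ₗ[K] Dual K V →ₗ[K] Y) :=
  TensorProduct.comm K Y (V ⊗[K] V) ≪≫ₗ TensorProduct.assoc K V V Y ≪≫ₗ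
    TensorProduct.congr (evalEquiv K V)
      (TensorProduct.congr (evalEquiv K V) (LinearEquiv.refl K Y) ≪≫ₗ
        dualTensorHomEquiv K (Dual K V) Y) ≪≫ₗ
    dualTensorHomEquiv K (Dual K V) (Dual K V →ₗ[K] Y)

variable {K 𝔤 Y V}

theorem contraction_tmul (y : Y) (u w : V) (φ ψ : Dual K V) :
    contraction K Y V (y ⊗ₜ (u ⊗ₜ w)) φ ψ = φ u • ψ w • y := by
  simp [contraction]

theorem contraction_lie (g : 𝔤) (t : Y ⊗[K] (V ⊗[K] V)) :
    contraction K Y V ⁅g, t⁆ = ⁅g, contraction K Y V t⁆ := by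
  have h : (contraction K Y V).toLinearMap ∘ₗ toEnd K 𝔤 _ g =
      toEnd K 𝔤 _ g ∘ₗ (contraction K Y V).toLinearMap := by
    ext y u w φ ψ
    simp [contraction_tmul, TensorProduct.tmul_add, add_comm, add_left_comm]
  exact LinearMap.congr_fun h t

theorem contraction_tensorSwap (t : Y ⊗[K] (V ⊗[K] V)) :
    contraction K Y V (tensorSwap K Y V t) = LinearMap.lflip (R₀ := K) (contraction K Y V t) := by
  have h : (contraction K Y V).toLinearMap ∘ₗ tensorSwap K Y V =
      (LinearMap.lflip (R₀ := K)).toLinearMap ∘ₗ (contraction K Y V).toLinearMap := by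
    ext y u w φ ψ
    simpa [contraction_tmul, tensorSwap] using smul_comm _ _ _
  exact LinearMap.congr_fun h t

variable (K 𝔤 Y V) in
/-- `contraction` as an isomorphism of representations. -/
noncomputable def lieContraction :
    Y ⊗[K] (V ⊗[K] V) ≃ₗ⁅K,𝔤⁆ (Dual K V →ₗ[K] Dual K V →ₗ[K] Y) :=
  { contraction K Y V with map_lie' := contraction_lie _ _ }

theorem tensorSwap_tensorSwap (t : Y ⊗[K] (V ⊗[K] V)) :
    tensorSwap K Y V (tensorSwap K Y V t) = t := by
  refine (contraction K Y V).injective ?_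
  rw [contraction_tensorSwap, contraction_tensorSwap]
  rfl

theorem tensorSwap_mem_maxTrivSubmodule {t : Y ⊗[K] (V ⊗[K] V)}
    (ht : t ∈ (maxTrivSubmodule K 𝔤 (Y ⊗[K] (V ⊗[K] V))).toSubmodule) :
    tensorSwap K Y V t ∈ (maxTrivSubmodule K 𝔤 (Y ⊗[K] (V ⊗[K] V))).toSubmodule := by
  intro g
  have hC : contraction K Y V t ∈ maxTrivSubmodule K 𝔤 _ := fun x => by
    rw [← contraction_lie, ht x, map_zero]
  refine (contraction K Y V).injective ?_
  rw [contraction_lie, contraction_tensorSwap, map_zero]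
  exact lflip_mem_maxTrivSubmodule hC g

variable (K 𝔤 Y V) in
/-- The invariants of `Y ⊗ S² V`, realised as the invariant vectors of `Y ⊗ V ⊗ V` fixed by
`tensorSwap`. -/
def symInvariants : Submodule K (Y ⊗[K] (V ⊗[K] V)) :=
  (maxTrivSubmodule K 𝔤 (Y ⊗[K] (V ⊗[K] V))).toSubmodule ⊓
    LinearMap.ker (tensorSwap K Y V - LinearMap.id)

variable (K 𝔤 Y V) in
/-- The invariants of `Y ⊗ Λ² V`, realised as the invariant vectors of `Y ⊗ V ⊗ V` negated by
`tensorSwap`. -/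
def altInvariants : Submodule K (Y ⊗[K] (V ⊗[K] V)) :=
  (maxTrivSubmodule K 𝔤 (Y ⊗[K] (V ⊗[K] V))).toSubmodule ⊓
    LinearMap.ker (tensorSwap K Y V + LinearMap.id)

theorem trace_equivariantFlip_dual [NeZero (2 : K)] [FiniteDimensional K Y] :
    LinearMap.trace K _ (equivariantFlip K 𝔤 (Dual K V) Y) =
      (finrank K (symInvariants K 𝔤 Y V) : K) - finrank K (altInvariants K 𝔤 Y V) := by
  let Φ := (maxTrivEquiv (lieContraction K 𝔤 Y V)).toLinearEquiv
  have hconj : Φ.conj ((tensorSwap K Y V).restrict fun _ => tensorSwap_mem_maxTrivSubmodule) =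
      equivariantFlip K 𝔤 (Dual K V) Y := by
    refine LinearMap.ext fun T => ?_
    obtain ⟨t, rfl⟩ := Φ.surjective T
    rw [LinearEquiv.conj_apply_apply, Φ.symm_apply_apply]
    exact Subtype.ext (contraction_tensorSwap t.1)
  rw [← hconj, LinearMap.trace_conj']
  exact trace_restrict_eq_finrank_inf_ker_sub_finrank_inf_ker tensorSwap_tensorSwap _

end Contraction

theorem statement9_general {K 𝔤 : Type*} [Field K] [CharZero K] [LieRing 𝔤] [LieAlgebra K 𝔤]
    [FiniteDimensional K 𝔤] [IsKilling K 𝔤] {H : LieSubalgebra K 𝔤} [H.IsCartanSubalgebra]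
    [IsTriangularizable K H 𝔤] {b : (rootSystem H).Base} {V : Type*} [AddCommGroup V] [Module K V]
    [LieRingModule 𝔤 V] [LieModule K 𝔤 V] [FiniteDimensional K V] [IsIrreducible K 𝔤 V]
    {μ : Dual K H} {v : V} (hv : IsSingular b μ v) (hv0 : v ≠ 0) :
    HasSymplecticForm K 𝔤 V ↔
      finrank K (altInvariants K 𝔤 𝔤 V) < finrank K (symInvariants K 𝔤 𝔤 V) := by
  obtain ⟨ν, φ, hφ0, hφ⟩ := hv.exists_isSingular_dual hv0 (lieSpan_singleton_eq_top hv0)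
  have : IsIrreducible K 𝔤 (Dual K V) := isIrreducible_dual
  rw [← hasSymplecticForm_dual_iff, hφ.hasSymplecticForm_iff_trace_equivariantFlip hφ0,
    trace_equivariantFlip_dual]
  simp only [sub_eq_iff_eq_add', ← Nat.cast_add, Nat.cast_inj]
  exact ⟨fun ⟨n, hn, h⟩ => by lia, fun h => ⟨_, Nat.sub_pos_of_lt h, by lia⟩⟩

theorem mem_closure_range_iff_exists_sum {K M ι : Type*} [Semiring K] [AddCommMonoid M]
    [Module K M] [Fintype ι] {α : ι → M} {x : M} :
    x ∈ AddSubmonoid.closure (Set.range α) ↔ ∃ c : ι → ℕ, x = ∑ j, (c j : K) • α j := by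
  rw [← Submodule.span_nat_eq_addSubmonoidClosure, Submodule.mem_toAddSubmonoid,
    Submodule.mem_span_range_iff_exists_fun]
  simp only [Nat.cast_smul_eq_nsmul, eq_comm]

theorem isSymplecticRep_iff_hasSymplecticForm {𝔤 V : Type} [LieRing 𝔤] [AddCommGroup V]
    [Module ℂ V] [LieRingModule 𝔤 V] :
    IsSymplecticRep (L := 𝔤) V ↔ HasSymplecticForm ℂ 𝔤 V :=
  exists_congr fun _ => and_congr_right' <| and_congr_right' <|
    forall₃_congr fun _ _ _ => add_eq_zero_iff_eq_neg

section HighestWeight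

variable [FiniteDimensional ℂ L] [IsKilling ℂ L] {H : LieSubalgebra ℂ L} [H.IsCartanSubalgebra]
  {r : ℕ} {α : Fin r → Dual ℂ H}

theorem isRoot_iff {χ : Dual ℂ H} : IsRoot H χ ↔ χ ∈ Set.range (rootSystem H).root := by
  refine ⟨fun ⟨h0, hχ⟩ => ?_, ?_⟩
  · let w : Weight ℂ H L := ⟨χ, hχ⟩
    exact ⟨⟨w, by simpa [w, Weight.IsNonZero, Weight.IsZero] using h0⟩, rfl⟩
  · rintro ⟨i, rfl⟩
    exact ⟨(rootSystem H).ne_zero i, i.1.genWeightSpace_ne_bot⟩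

theorem IsBase.exists_base (hα : IsBase H α) :
    ∃ b : (rootSystem H).Base, rootCone b = AddSubmonoid.closure (Set.range α) := by
  let P := rootSystem H
  have himage : P.root '' (P.root ⁻¹' Set.range α) = Set.range α :=
    Set.image_preimage_eq_of_subset <| Set.range_subset_iff.2 fun j => isRoot_iff.1 (hα.isRoot j)
  refine ⟨.mk' P (P.root ⁻¹' Set.range α) ?_ fun i => ?_, ?_⟩
  · rw [linearIndepOn_iff_image P.root.injective.injOn, himage]
    exact hα.indep.linearIndepOn_id
  · rw [himage]
    exact (hα.pos_neg _ (isRoot_iff.2 ⟨i, rfl⟩)).imp mem_closure_range_iff_exists_sum.2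
      fun ⟨c, hc⟩ => mem_closure_range_iff_exists_sum.2 ⟨c, neg_eq_iff_eq_neg.2 hc⟩
  · rw [rootCone, RootPairing.Base.mk', Set.Finite.coe_toFinset, himage]

theorem IsHWIrrep.exists_isSingular {V : Type} [AddCommGroup V] [Module ℂ V]
    [LieRingModule L V] [LieModule ℂ L V] {b : (rootSystem H).Base} {μ : Dual ℂ H}
    (hb : rootCone b = AddSubmonoid.closure (Set.range α)) (hV : IsHWIrrep H α μ V) :
    ∃ v : V, v ≠ 0 ∧ IsSingular b μ v := by
  obtain ⟨-, v, hv0, hwt, hpos⟩ := hV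
  refine ⟨v, hv0, isSingular_iff.2 ⟨(mem_weightSpace _ _).2 hwt, fun χ hχ hχ0 x hx => ?_⟩⟩
  by_cases hbot : rootSpace H χ = ⊥
  · rw [hbot, LieSubmodule.mem_bot] at hx
    rw [hx, zero_lie]
  · exact hpos χ ⟨⟨hχ0, hbot⟩, mem_closure_range_iff_exists_sum.1 (hb ▸ hχ)⟩ x hx

end HighestWeight

/-- `V_μ` is symplectic if and only if the `𝔤`-invariant subspace of
`adj(𝔤) ⊗ S²V_μ` has strictly larger dimension than that of `adj(𝔤) ⊗ Λ²V_μ`. -/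
theorem statement9
    {L : Type} [LieRing L] [LieAlgebra ℂ L] [FiniteDimensional ℂ L]
    [LieAlgebra.IsSemisimple ℂ L]
    (H : LieSubalgebra ℂ L) [H.IsCartanSubalgebra]
    {r : ℕ} (α : Fin r → Module.Dual ℂ H) (hc : Fin r → H)
    (hbase : IsBase H α) (hcoroot : ∀ j, IsCoroot H (α j) (hc j))
    (μ : Module.Dual ℂ H) (hμ : IsDomInt hc μ)
    (Vμ : Type) [AddCommGroup Vμ] [Module ℂ Vμ] [LieRingModule L Vμ]
    [LieModule ℂ L Vμ] [FiniteDimensional ℂ Vμ]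
    (hVμ : IsHWIrrep H α μ Vμ) :
    IsSymplecticRep (L := L) Vμ ↔
      Module.finrank ℂ (altSquareInvariants L Vμ) <
        Module.finrank ℂ (symSquareInvariants L Vμ) := by
  obtain ⟨b, hb⟩ := hbase.exists_base
  obtain ⟨v, hv0, hv⟩ := hVμ.exists_isSingular hb
  have : IsIrreducible ℂ L Vμ := hVμ.1
  exact isSymplecticRep_iff_hasSymplecticForm.trans (statement9_general hv hv0)

end AdjPaper
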